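/- Let f ∈ ℬ be convenient and Newton nondegenerate with Newton polytope P, and assume that every closed face of the Newton boundary of P is a simplex. For v ∈ ℕⁿ with v ≠ 0 let Δ(v) denote the smallest closed face Δ of the Newton boundary with v ∈ ℝ₊·Δ, and set Δ(0) = ∅, with the convention that ∅ ⊆ Δ for every face Δ. For v ∈ ℕⁿ define the polynomial E_v^*(z) = Σ (z−1)^{n−1−dim Δ}, the sum running over the closed faces Δ of the Newton boundary that are not contained in the union of the coordinate hyperplanes and satisfy Δ(v) ⊆ Δ. Let Box(P) be the union of Box(Δ) over the closed faces Δ of the Newton boundary not contained in the union of the coordinate hyperplanes. Then for every α ∈ ℚ: dim_ℂ gr^𝒩_α(ℬ/ℒ) = Σ_{v ∈ Box(P) ∩ ℕⁿ} (coefficient of z^{α−ν(v)} in E_v^*(z)). Equivalently, the Hilbert–Poincaré series of gr^𝒩(ℬ/ℒ) equals Σ_{v ∈ Box(P) ∩ ℕⁿ} E_v^*(z)·z^{ν(v)}. -/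

import Mathlib

open MvPolynomial

namespace ToricNewton

section
variable {σ : Type*} [Fintype σ] [DecidableEq σ]

/-- Coercion of a lattice point of `ℕ^σ` into `ℝ^σ`. -/
def natToR (v : σ → ℕ) : σ → ℝ := fun i => (v i : ℝ)

/-- Coercion of an exponent (finitely supported) into `ℝ^σ`. -/
def toR (m : σ →₀ ℕ) : σ → ℝ := fun i => (m i : ℝ)

/-- The Newton polytope of a polynomial: the convex hull of `{0} ∪ supp f`. -/
noncomputable def newtonPolytope (f : MvPolynomial σ ℂ) : Set (σ → ℝ) :=
  convexHull ℝ ({0} ∪ (toR '' (f.support : Set (σ →₀ ℕ))))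

/-- The Newton function `ν`, which for a convenient polynomial is the gauge
(Minkowski functional) of the Newton polytope. -/
noncomputable def nu (f : MvPolynomial σ ℂ) (x : σ → ℝ) : ℝ :=
  gauge (newtonPolytope f) x

/-- `f` is convenient if for each variable `i` some pure power `uᵢ^k`, `k ≥ 1`,
occurs in `f` with nonzero coefficient. -/
def Convenient (f : MvPolynomial σ ℂ) : Prop :=
  ∀ i : σ, ∃ k : ℕ, 1 ≤ k ∧ f.coeff (Finsupp.single i k) ≠ 0

/-- `Δ` is a (nonempty exposed) closed face of `P`. -/
def IsFace (P Δ : Set (σ → ℝ)) : Prop :=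
  Δ.Nonempty ∧ ∃ (l : (σ → ℝ) →ₗ[ℝ] ℝ) (c : ℝ),
    (∀ x ∈ P, l x ≤ c) ∧ Δ = {x ∈ P | l x = c}

/-- A face of the Newton boundary: a closed face of the Newton polytope not
containing the origin. -/
def NBFace (f : MvPolynomial σ ℂ) (Δ : Set (σ → ℝ)) : Prop :=
  IsFace (newtonPolytope f) Δ ∧ (0 : σ → ℝ) ∉ Δ

open Classical in
/-- The truncation `g_Δ` of `g` to the monomials whose exponents lie in `Δ`. -/
noncomputable def faceRestrict (Δ : Set (σ → ℝ)) (g : MvPolynomial σ ℂ) : MvPolynomial σ ℂ :=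
  ∑ m ∈ g.support, if toR m ∈ Δ then monomial m (g.coeff m) else 0

/-- `f` is Newton nondegenerate: for every closed face `Δ` of the Newton boundary
the system `(u₁ ∂f/∂u₁)_Δ = ⋯ = (uₙ ∂f/∂uₙ)_Δ = 0` has no solution in `(ℂ*)ⁿ`. -/
def Nondegenerate (f : MvPolynomial σ ℂ) : Prop :=
  ∀ Δ : Set (σ → ℝ), NBFace f Δ →
    ¬ ∃ x : σ → ℂ, (∀ i, x i ≠ 0) ∧
        ∀ i, eval x (faceRestrict Δ (X i * pderiv i f)) = 0

/-- The ideal `ℒ` generated by the `uᵢ ∂f/∂uᵢ`. -/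
noncomputable def LIdeal (f : MvPolynomial σ ℂ) : Ideal (MvPolynomial σ ℂ) :=
  Ideal.span (Set.range fun i => X i * pderiv i f)

/-- The Jacobian ideal `ℐ` generated by the `∂f/∂uᵢ`. -/
noncomputable def IIdeal (f : MvPolynomial σ ℂ) : Ideal (MvPolynomial σ ℂ) :=
  Ideal.span (Set.range fun i => pderiv i f)

/-- The Newton filtration `𝒩_α ℬ`: the span of the monomials `u^m` with `ν(m) ≤ α`. -/
noncomputable def Nle (f : MvPolynomial σ ℂ) (α : ℝ) : Submodule ℂ (MvPolynomial σ ℂ) where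
  carrier := {g | ∀ m ∈ g.support, nu f (toR m) ≤ α}
  zero_mem' := by simp
  add_mem' := by
    intro a b ha hb m hm
    rcases Finset.mem_union.mp (MvPolynomial.support_add hm) with h | h
    · exact ha m h
    · exact hb m h
  smul_mem' := by
    intro c a ha m hm
    exact ha m (MvPolynomial.support_smul hm)

/-- The filtration `𝒩_{<α} ℬ`. -/
noncomputable def Nlt (f : MvPolynomial σ ℂ) (α : ℝ) : Submodule ℂ (MvPolynomial σ ℂ) where
  carrier := {g | ∀ m ∈ g.support, nu f (toR m) < α}
  zero_mem' := by simp
  add_mem' := by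
    intro a b ha hb m hm
    rcases Finset.mem_union.mp (MvPolynomial.support_add hm) with h | h
    · exact ha m h
    · exact hb m h
  smul_mem' := by
    intro c a ha m hm
    exact ha m (MvPolynomial.support_smul hm)

/-- The twisted filtration `W_α ℬ`: the span of the monomials `u^m` with
`ν(m + (1,…,1)) ≤ α`. -/
noncomputable def Wle (f : MvPolynomial σ ℂ) (α : ℝ) : Submodule ℂ (MvPolynomial σ ℂ) where
  carrier := {g | ∀ m ∈ g.support, nu f (toR m + 1) ≤ α}
  zero_mem' := by simp
  add_mem' := by
    intro a b ha hb m hm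
    rcases Finset.mem_union.mp (MvPolynomial.support_add hm) with h | h
    · exact ha m h
    · exact hb m h
  smul_mem' := by
    intro c a ha m hm
    exact ha m (MvPolynomial.support_smul hm)

/-- The twisted filtration `W_{<α} ℬ`. -/
noncomputable def Wlt (f : MvPolynomial σ ℂ) (α : ℝ) : Submodule ℂ (MvPolynomial σ ℂ) where
  carrier := {g | ∀ m ∈ g.support, nu f (toR m + 1) < α}
  zero_mem' := by simp
  add_mem' := by
    intro a b ha hb m hm
    rcases Finset.mem_union.mp (MvPolynomial.support_add hm) with h | h
    · exact ha m h
    · exact hb m h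
  smul_mem' := by
    intro c a ha m hm
    exact ha m (MvPolynomial.support_smul hm)

/-- The graded piece `gr^𝒩_α(ℬ/ℒ) = (𝒩_α ℬ + ℒ)/(𝒩_{<α} ℬ + ℒ)`, realized as the
image of `𝒩_α ℬ + ℒ` in `ℬ/(𝒩_{<α} ℬ + ℒ)`. -/
noncomputable def grN (f : MvPolynomial σ ℂ) (α : ℝ) :
    Submodule ℂ (MvPolynomial σ ℂ ⧸ (Nlt f α ⊔ (LIdeal f).restrictScalars ℂ)) :=
  Submodule.map (Nlt f α ⊔ (LIdeal f).restrictScalars ℂ).mkQ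
    (Nle f α ⊔ (LIdeal f).restrictScalars ℂ)

/-- `dim_ℂ gr^𝒩_α(ℬ/ℒ)`. -/
noncomputable def grDim (f : MvPolynomial σ ℂ) (α : ℝ) : ℕ :=
  Module.finrank ℂ (grN f α)

/-- The graded piece `gr^W_α(ℬ/ℐ) = (W_α ℬ + ℐ)/(W_{<α} ℬ + ℐ)`. -/
noncomputable def grW (f : MvPolynomial σ ℂ) (α : ℝ) :
    Submodule ℂ (MvPolynomial σ ℂ ⧸ (Wlt f α ⊔ (IIdeal f).restrictScalars ℂ)) :=
  Submodule.map (Wlt f α ⊔ (IIdeal f).restrictScalars ℂ).mkQ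
    (Wle f α ⊔ (IIdeal f).restrictScalars ℂ)

/-- `dim_ℂ gr^W_α(ℬ/ℐ)`. -/
noncomputable def grWDim (f : MvPolynomial σ ℂ) (α : ℝ) : ℕ :=
  Module.finrank ℂ (grW f α)

/-- The dimension of a face, i.e. of the direction of its affine span. -/
noncomputable def faceDim (Δ : Set (σ → ℝ)) : ℕ :=
  Module.finrank ℝ (affineSpan ℝ Δ).direction

/-- `Δ` is a simplex: the convex hull of an affinely independent family. -/
def IsSimplex (Δ : Set (σ → ℝ)) : Prop :=
  ∃ (k : ℕ) (p : Fin (k + 1) → (σ → ℝ)), AffineIndependent ℝ p ∧ Δ = convexHull ℝ (Set.range p)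

/-- The union of the coordinate hyperplanes. -/
def coordHyperplanes (σ : Type*) : Set (σ → ℝ) := ⋃ i : σ, {x : σ → ℝ | x i = 0}

/-- `Box(Δ)`: the set of combinations `Σ q_ℓ b_ℓ`, `q_ℓ ∈ [0,1)`, of the vertices
(extreme points) of `Δ`. -/
def Box (Δ : Set (σ → ℝ)) : Set (σ → ℝ) :=
  {x | ∃ s : Finset (σ → ℝ), ↑s ⊆ Δ.extremePoints ℝ ∧
      ∃ q : (σ → ℝ) → ℝ, (∀ b ∈ s, 0 ≤ q b ∧ q b < 1) ∧ x = ∑ b ∈ s, q b • b}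

/-- `Δ ∈ ℱ(P)`: a closed face of the Newton polytope of `f` not contained in the
union of the coordinate hyperplanes. -/
def FcalMem (f : MvPolynomial σ ℂ) (Δ : Set (σ → ℝ)) : Prop :=
  IsFace (newtonPolytope f) Δ ∧ ¬ Δ ⊆ coordHyperplanes σ

/-- `Box(P)`: the union of `Box(Δ)` over the closed faces of the Newton boundary
not contained in the union of the coordinate hyperplanes. -/
def BoxP (f : MvPolynomial σ ℂ) : Set (σ → ℝ) :=
  ⋃ Δ ∈ {Δ : Set (σ → ℝ) | NBFace f Δ ∧ ¬ Δ ⊆ coordHyperplanes σ}, Box Δ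

/-- The cone `ℝ₊·Δ` over `Δ`. -/
def cone0 (Δ : Set (σ → ℝ)) : Set (σ → ℝ) :=
  {x | ∃ t : ℝ, 0 ≤ t ∧ ∃ y ∈ Δ, x = t • y}

/-- The restriction of `f` obtained by setting the variables in `S` to zero. -/
noncomputable def restrictZero (S : Finset σ) (f : MvPolynomial σ ℂ) :
    MvPolynomial {j : σ // j ∉ S} ℂ :=
  aeval (fun j : σ => if h : j ∉ S then X (⟨j, h⟩ : {j : σ // j ∉ S}) else 0) f

end

end ToricNewton

namespace ToricNewton

open Classical in
/-- The relative Hodge–Deligne polynomial `E_v^*(z) = Σ_Δ (z-1)^{n-1-dim Δ}`,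
the sum running over the closed faces `Δ` of the Newton boundary not contained in
the union of the coordinate hyperplanes with `Δ(v) ⊆ Δ` (equivalently
`v ∈ ℝ₊·Δ`; for `v = 0`, `Δ(0) = ∅ ⊆ Δ` always and `0 ∈ ℝ₊·Δ` always). -/
noncomputable def Evstar {σ : Type*} [Fintype σ] [DecidableEq σ]
    (f : MvPolynomial σ ℂ) (v : σ → ℕ) : Polynomial ℤ :=
  ∑ᶠ (Δ : Set (σ → ℝ))
      (_ : NBFace f Δ ∧ ¬ Δ ⊆ coordHyperplanes σ ∧ natToR v ∈ cone0 Δ),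
    (Polynomial.X - 1 : Polynomial ℤ) ^ (Fintype.card σ - 1 - faceDim Δ)

end ToricNewton

open MvPolynomial

namespace TN

set_option linter.deprecated false in
theorem comm_generic {V : Type*} [AddCommGroup V] [Module ℂ V] [FiniteDimensional ℂ V]
    {m : ℕ} (Φ : Fin m → Module.End ℂ V) (hc : ∀ i j, Φ i * Φ j = Φ j * Φ i)
    (hs : ∀ v : V, ∃ w : Fin m → V, v = ∑ i, Φ i (w i)) :
    ∃ c : Fin m → ℂ, Function.Injective ⇑(∑ i, c i • Φ i : Module.End ℂ V) := by
  classical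
  let : CommRing (Algebra.adjoin ℂ (Set.range Φ)) :=
    Algebra.adjoinCommRingOfComm ℂ (by
      rintro _ ⟨i, rfl⟩ _ ⟨j, rfl⟩; exact hc i j)
  let A := Algebra.adjoin ℂ (Set.range Φ)
  let φ : Fin m → A := fun i => ⟨Φ i, Algebra.subset_adjoin ⟨i, rfl⟩⟩
  have : FiniteDimensional ℂ A := 
    (inferInstance : FiniteDimensional ℂ (Subalgebra.toSubmodule (Algebra.adjoin ℂ (Set.range Φ))))
  have : IsArtinianRing A := IsArtinianRing.of_finite ℂ A
  let I : Ideal A := Ideal.span (Set.range φ)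
  have : Module.Finite A V := Module.Finite.of_restrictScalars_finite ℂ A V
  have hI : I = ⊤ := by
    have h1 : (⊤ : Submodule A V) ≤ I • ⊤ := by
      intro v _
      obtain ⟨w, hw⟩ := hs v
      rw [hw]
      refine Submodule.sum_mem _ fun i _ => ?_
      exact Submodule.smul_mem_smul (r := φ i) (Ideal.subset_span ⟨i, rfl⟩) (Submodule.mem_top (x := w i))
    obtain ⟨r, hr, hr0⟩ := Submodule.exists_sub_one_mem_and_smul_eq_zero_of_fg_of_le_smul I ⊤
      Module.Finite.fg_top h1
    have : r = 0 := by
      apply Subtype.ext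
      apply LinearMap.ext
      intro v
      exact hr0 v Submodule.mem_top
    rw [this] at hr
    rw [Ideal.eq_top_iff_one]
    simpa using I.neg_mem hr
  let S : (Fin m → ℂ) →ₗ[ℂ] A := Fintype.linearCombination ℂ φ
  let p : MaximalSpectrum A → Submodule ℂ (Fin m → ℂ) := fun P =>
    (P.asIdeal.restrictScalars ℂ).comap S
  have hne : ⋃ P, (p P : Set (Fin m → ℂ)) ≠ Set.univ := by
    intro h
    obtain ⟨P, hP⟩ := Subspace.exists_eq_top_of_iUnion_eq_univ h
    apply P.isMaximal.ne_top
    rw [eq_top_iff, ← hI]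
    refine Ideal.span_le.2 ?_
    rintro _ ⟨i, rfl⟩
    have : (Pi.single i 1 : Fin m → ℂ) ∈ p P := by rw [hP]; trivial
    have h2 : S (Pi.single i 1) ∈ P.asIdeal := this
    simpa [S, Fintype.linearCombination_apply_single] using h2
  obtain ⟨c, hcn⟩ := (Set.ne_univ_iff_exists_notMem _).1 hne
  refine ⟨c, ?_⟩
  have hu : IsUnit (S c) := by
    by_contra hu
    obtain ⟨P, hP, hm⟩ := exists_max_ideal_of_mem_nonunits hu
    exact hcn (Set.mem_iUnion.2 ⟨⟨P, hP⟩, hm⟩)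
  have hS : ((S c : A) : Module.End ℂ V) = ∑ i, c i • Φ i := by
    simp only [S, Fintype.linearCombination_apply]
    simp [φ]
  rw [← hS]
  obtain ⟨u, hu⟩ := hu
  have hinv : ((u⁻¹.1 : A) : Module.End ℂ V) * ((S c : A) : Module.End ℂ V) = 1 := by
    rw [← hu]
    exact congrArg Subtype.val (u.inv_mul)
  intro x y hxy
  have := congrArg (((u⁻¹.1 : A) : Module.End ℂ V)) hxy
  rw [← Module.End.mul_apply, ← Module.End.mul_apply, hinv] at this
  exact this

section exchange

variable {B : Type*} [CommRing B] [Algebra ℂ B] (M : ℤ → Submodule ℂ B)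

/-- Elements of degree one. -/
def Ops : Submodule ℂ B where
  carrier := {a | ∀ d, ∀ x ∈ M d, a * x ∈ M (d + 1)}
  zero_mem' := by intro d x _; simp
  add_mem' := by
    intro a b ha hb d x hx
    rw [add_mul]; exact add_mem (ha d x hx) (hb d x hx)
  smul_mem' := by
    intro c a ha d x hx
    rw [smul_mul_assoc]; exact Submodule.smul_mem _ _ (ha d x hx)

theorem mem_Ops {a : B} : a ∈ Ops M ↔ ∀ d, ∀ x ∈ M d, a * x ∈ M (d + 1) := Iff.rfl

/-- Homogeneous submodules. -/
def Good (N : ℤ → Submodule ℂ B) : Prop :=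
  (∀ d, N d ≤ M d) ∧ ∀ a ∈ Ops M, ∀ d, ∀ x ∈ N d, a * x ∈ N (d + 1)

/-- `N + a M`. -/
def addR (N : ℤ → Submodule ℂ B) (a : B) : ℤ → Submodule ℂ B :=
  fun d => N d ⊔ (M (d - 1)).map (LinearMap.mulLeft ℂ a)

/-- `a` is injective on `M / N`. -/
def InjN (N : ℤ → Submodule ℂ B) (a : B) : Prop :=
  ∀ d, ∀ x ∈ M d, a * x ∈ N (d + 1) → x ∈ N d

/-- `a` is eventually surjective on `M / N`. -/
def EvSurj (N : ℤ → Submodule ℂ B) (a : B) : Prop :=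
  ∃ D : ℤ, ∀ d ≥ D, ∀ z ∈ M (d + 1), ∃ n ∈ N (d + 1), ∃ x ∈ M d, n + a * x = z

variable {M}

theorem mem_addR {N : ℤ → Submodule ℂ B} {a z : B} {d : ℤ} :
    z ∈ addR M N a (d + 1) ↔ ∃ n ∈ N (d + 1), ∃ x ∈ M d, n + a * x = z := by
  simp [addR, Submodule.mem_sup]

theorem good_addR {N : ℤ → Submodule ℂ B} (hN : Good M N) {a : B} (ha : a ∈ Ops M) :
    Good M (addR M N a) := by
  constructor
  · intro d z hz
    obtain ⟨e, rfl⟩ : ∃ e, d = e + 1 := ⟨d - 1, by ring⟩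
    obtain ⟨n, hn, x, hx, rfl⟩ := mem_addR.1 hz
    exact add_mem (hN.1 _ hn) (ha _ _ hx)
  · intro b hb d z hz
    obtain ⟨e, rfl⟩ : ∃ e, d = e + 1 := ⟨d - 1, by ring⟩
    obtain ⟨n, hn, x, hx, rfl⟩ := mem_addR.1 hz
    refine mem_addR.2 ⟨b * n, hN.2 b hb _ _ hn, b * x, hb _ _ hx, by ring⟩

theorem addR_comm (N : ℤ → Submodule ℂ B) (a b : B) :
    addR M (addR M N a) b = addR M (addR M N b) a := by
  funext d; simp only [addR]; rw [sup_assoc, sup_assoc, sup_comm (Submodule.map _ _)]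

theorem swap_inj (hM : ∀ d < 0, M d = ⊥) {N : ℤ → Submodule ℂ B} (hN : Good M N) {a b : B}
    (ha : a ∈ Ops M) (hb : b ∈ Ops M)
    (h1 : InjN M N a) (h2 : InjN M (addR M N a) b) :
    InjN M N b ∧ InjN M (addR M N b) a := by
  constructor
  · have key : ∀ k : ℕ, ∀ d : ℤ, d < k → ∀ x ∈ M d, b * x ∈ N (d + 1) → x ∈ N d := by
      intro k
      induction k with
      | zero =>
        intro d hd x hx _
        rw [hM d (by simpa using hd)] at hx
        rw [(Submodule.mem_bot ℂ).1 hx]; exact zero_mem _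
      | succ k ih =>
        intro d hd x hx hbx
        have h3 : x ∈ addR M N a d := h2 d x hx (Submodule.mem_sup_left hbx)
        obtain ⟨e, rfl⟩ : ∃ e, d = e + 1 := ⟨d - 1, by ring⟩
        obtain ⟨n, hn, x', hx', rfl⟩ := mem_addR.1 h3
        have h4 : a * (b * x') ∈ N (e + 1 + 1) := by
          have := sub_mem hbx (hN.2 b hb _ _ hn)
          convert this using 1; ring
        have h5 := h1 _ _ (hb _ _ hx') h4
        have h6 := ih e (by push_cast at hd; linarith) x' hx' h5
        exact add_mem hn (hN.2 a ha _ _ h6)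
    intro d
    exact key (d.toNat + 1) d (by push_cast; have := Int.self_le_toNat d; linarith)
  · intro d x hx hax
    obtain ⟨n, hn, z, hz, hnz⟩ := mem_addR.1 hax
    have h3 : z ∈ addR M N a d := h2 d z hz (mem_addR.2 ⟨-n, neg_mem hn, x, hx, by rw [← hnz]; ring⟩)
    obtain ⟨e, rfl⟩ : ∃ e, d = e + 1 := ⟨d - 1, by ring⟩
    obtain ⟨n', hn', z', hz', rfl⟩ := mem_addR.1 h3
    refine mem_addR.2 ⟨x - b * z', ?_, z', hz', by ring⟩
    refine h1 _ _ (sub_mem hx (hb _ _ hz')) ?_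
    have := add_mem hn (hN.2 b hb _ _ hn')
    convert this using 1
    linear_combination -hnz

/-- The quotient pieces. -/
abbrev Vq (M N : ℤ → Submodule ℂ B) (d : ℤ) : Type _ := ↥(M d) ⧸ (N d).submoduleOf (M d)

/-- Multiplication on the quotient pieces. -/
noncomputable def qop {N : ℤ → Submodule ℂ B} (hN : Good M N) (a : B) (ha : a ∈ Ops M) (d : ℤ) :
    Vq M N d →ₗ[ℂ] Vq M N (d + 1) :=
  Submodule.mapQ _ _ ((LinearMap.mulLeft ℂ a).restrict (ha d)) (by
    intro x hx
    exact hN.2 a ha d _ hx)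

theorem qop_mk {N : ℤ → Submodule ℂ B} (hN : Good M N) (a : B) (ha : a ∈ Ops M) (d : ℤ)
    (x : M d) : qop hN a ha d (Submodule.Quotient.mk x) =
      Submodule.Quotient.mk ⟨a * x, ha d x x.2⟩ := rfl

theorem mk_eq_zero {N : ℤ → Submodule ℂ B} {d : ℤ} (x : M d) :
    (Submodule.Quotient.mk x : Vq M N d) = 0 ↔ (x : B) ∈ N d :=
  (Submodule.Quotient.mk_eq_zero _).trans Iff.rfl

theorem qop_inj {N : ℤ → Submodule ℂ B} (hN : Good M N) (a : B) (ha : a ∈ Ops M) (d : ℤ) :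
    Function.Injective (qop hN a ha d) ↔ ∀ x ∈ M d, a * x ∈ N (d + 1) → x ∈ N d := by
  rw [injective_iff_map_eq_zero]
  constructor
  · intro h x hx hax
    exact (mk_eq_zero ⟨x, hx⟩).1 (h (Submodule.Quotient.mk ⟨x, hx⟩) ((mk_eq_zero _).2 hax))
  · intro h v
    induction v using Submodule.Quotient.induction_on with
    | H x =>
      intro hv
      exact (mk_eq_zero x).2 (h x x.2 ((mk_eq_zero _).1 hv))

theorem qop_surj {N : ℤ → Submodule ℂ B} (hN : Good M N) (a : B) (ha : a ∈ Ops M) (d : ℤ) :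
    Function.Surjective (qop hN a ha d) ↔
      ∀ z ∈ M (d + 1), ∃ n ∈ N (d + 1), ∃ x ∈ M d, n + a * x = z := by
  constructor
  · intro h z hz
    obtain ⟨v, hv⟩ := h (Submodule.Quotient.mk ⟨z, hz⟩)
    induction v using Submodule.Quotient.induction_on with
    | H x =>
      rw [qop_mk, Submodule.Quotient.eq] at hv
      have hv' : a * x - z ∈ N (d + 1) := hv
      exact ⟨z - a * x, by simpa using neg_mem hv', x, x.2, by ring⟩
  · intro h v
    induction v using Submodule.Quotient.induction_on with
    | H z =>
      obtain ⟨n, hn, x, hx, hz⟩ := h z z.2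
      refine ⟨Submodule.Quotient.mk ⟨x, hx⟩, ?_⟩
      rw [qop_mk, Submodule.Quotient.eq]
      change a * x - z ∈ N (d + 1)
      rw [← hz]
      simpa using neg_mem hn

theorem generic_op [∀ d, FiniteDimensional ℂ (M d)] {N : ℤ → Submodule ℂ B} (hN : Good M N)
    {y : B} (hy : y ∈ Ops M) (hyi : InjN M N y) (hys : EvSurj M N y) {m : ℕ} (F : Fin m → B)
    (hF : ∀ i, F i ∈ Ops M)
    (hFs : ∃ D : ℤ, ∀ d ≥ D, ∀ z ∈ M (d + 1), ∃ n ∈ N (d + 1), ∃ x : Fin m → B,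
      (∀ i, x i ∈ M d) ∧ n + ∑ i, F i * x i = z) :
    ∃ c : Fin m → ℂ, InjN M N (∑ i, c i • F i) ∧ EvSurj M N (∑ i, c i • F i) := by
  obtain ⟨D1, hD1⟩ := hys
  obtain ⟨D2, hD2⟩ := hFs
  set D := max D1 D2 with hD
  have hyb : ∀ d ≥ D1, Function.Bijective (qop hN y hy d) := fun d hd =>
    ⟨(qop_inj hN y hy d).2 (hyi d), (qop_surj hN y hy d).2 (hD1 d hd)⟩
  let e : Vq M N D ≃ₗ[ℂ] Vq M N (D + 1) :=
    LinearEquiv.ofBijective (qop hN y hy D) (hyb D (le_max_left _ _))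
  let Φ : Fin m → Module.End ℂ (Vq M N D) := fun i =>
    e.symm.toLinearMap ∘ₗ qop hN (F i) (hF i) D
  have he : ∀ i v, qop hN y hy D (Φ i v) = qop hN (F i) (hF i) D v := by
    intro i v
    exact e.apply_symm_apply (qop hN (F i) (hF i) D v)
  have hcomm : ∀ (a b : B) (ha : a ∈ Ops M) (hb : b ∈ Ops M) d v,
      qop hN a ha (d + 1) (qop hN b hb d v) = qop hN b hb (d + 1) (qop hN a ha d v) := by
    intro a b ha hb d v
    induction v using Submodule.Quotient.induction_on with
    | H x =>
      simp only [qop_mk]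
      congr 2
      ring
  have hyi2 : Function.Injective (qop hN y hy (D + 1)) := (qop_inj hN y hy _).2 (hyi _)
  have hΦΦ : ∀ i j v, qop hN y hy (D + 1) (qop hN y hy D (Φ i (Φ j v))) =
      qop hN (F i) (hF i) (D + 1) (qop hN (F j) (hF j) D v) := by
    intro i j v
    rw [he, hcomm, he]
  obtain ⟨c, hc⟩ := comm_generic Φ (by
    intro i j
    apply LinearMap.ext
    intro v
    apply e.injective
    apply hyi2
    change qop hN y hy (D + 1) (qop hN y hy D (Φ i (Φ j v))) =
      qop hN y hy (D + 1) (qop hN y hy D (Φ j (Φ i v)))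
    rw [hΦΦ, hΦΦ, hcomm]) (by
    intro v
    induction v using Submodule.Quotient.induction_on with
    | H x0 =>
      obtain ⟨n, hn, x, hx, hz⟩ := hD2 D (le_max_right _ _) (y * x0) (hy _ _ x0.2)
      refine ⟨fun i => Submodule.Quotient.mk ⟨x i, hx i⟩, ?_⟩
      apply e.injective
      rw [map_sum]
      change qop hN y hy D _ = ∑ i, qop hN y hy D (Φ i _)
      simp only [he, qop_mk]
      have hsum : (∑ i, (Submodule.Quotient.mk ⟨F i * x i, hF i D _ (hx i)⟩ : Vq M N (D + 1))) =
          Submodule.Quotient.mk (∑ i, (⟨F i * x i, hF i D _ (hx i)⟩ : M (D + 1))) := by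
        exact (map_sum (Submodule.mkQ _) _ _).symm
      rw [hsum, Submodule.Quotient.eq]
      change y * (x0 : B) - ((∑ i, (⟨F i * x i, hF i D _ (hx i)⟩ : M (D + 1)) : M (D + 1)) : B) ∈ N (D + 1)
      rw [← hz]
      simpa using hn)
  set G := ∑ i, c i • F i with hG
  have hGO : G ∈ Ops M := sum_mem fun i _ => Submodule.smul_mem _ _ (hF i)
  have hGD : ∀ x ∈ M D, G * x ∈ N (D + 1) → x ∈ N D := by
    intro x hx hGx
    rw [← mk_eq_zero (N := N) ⟨x, hx⟩]
    apply hc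
    rw [map_zero]
    apply e.injective
    rw [map_zero, LinearMap.sum_apply, map_sum]
    change ∑ i, qop hN y hy D (c i • Φ i _) = 0
    simp only [map_smul, he, qop_mk]
    have hsum : (∑ i, c i • (Submodule.Quotient.mk ⟨F i * x, hF i D _ hx⟩ : Vq M N (D + 1))) =
          Submodule.Quotient.mk (∑ i, c i • (⟨F i * x, hF i D _ hx⟩ : M (D + 1))) := by
        rw [← Submodule.mkQ_apply, map_sum]; rfl
    rw [hsum, mk_eq_zero]
    convert hGx using 1
    simp [hG, Finset.sum_mul]
  have hGi : InjN M N G := by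
    have low : ∀ k : ℕ, ∀ d : ℤ, d = D - k → ∀ x ∈ M d, G * x ∈ N (d + 1) → x ∈ N d := by
      intro k
      induction k with
      | zero => intro d hd; simp only [Nat.cast_zero, sub_zero] at hd; subst hd; exact hGD
      | succ k ih =>
        intro d hd x hx hGx
        apply hyi d x hx
        apply ih (d + 1) (by rw [hd]; push_cast; ring) _ (hy _ _ hx)
        have := hN.2 y hy _ _ hGx
        convert this using 1; ring
    have high : ∀ k : ℕ, ∀ d : ℤ, d = D + k → ∀ x ∈ M d, G * x ∈ N (d + 1) → x ∈ N d := by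
      intro k
      induction k with
      | zero => intro d hd; simp only [Nat.cast_zero, add_zero] at hd; subst hd; exact hGD
      | succ k ih =>
        intro d hd x hx hGx
        obtain ⟨e, rfl⟩ : ∃ e, d = e + 1 := ⟨d - 1, by ring⟩
        have he' : e = D + k := by push_cast at hd; linarith
        obtain ⟨n, hn, x', hx', rfl⟩ := hD1 e (by rw [he']; have := le_max_left D1 D2; omega) x hx
        have h4 : y * (G * x') ∈ N (e + 1 + 1) := by
          have := sub_mem hGx (hN.2 G hGO _ _ hn)
          convert this using 1; ring
        have h5 := hyi _ _ (hGO _ _ hx') h4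
        exact add_mem hn (hN.2 y hy _ _ (ih e he' x' hx' h5))
    intro d
    rcases le_total d D with h | h
    · exact low (D - d).toNat d (by rw [Int.toNat_of_nonneg (by linarith)]; ring)
    · exact high (d - D).toNat d (by rw [Int.toNat_of_nonneg (by linarith)]; ring)
  refine ⟨c, hGi, D1, fun d hd => ?_⟩
  rw [← qop_surj hN G hGO d]
  have hfr : Module.finrank ℂ (Vq M N d) = Module.finrank ℂ (Vq M N (d + 1)) :=
    (LinearEquiv.ofBijective (qop hN y hy d) (hyb d hd)).finrank_eq
  rw [← LinearMap.injective_iff_surjective_of_finrank_eq_finrank hfr]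
  exact (qop_inj hN G hGO d).2 (hGi d)

variable (M) in
/-- Regular sequences on `M / N`. -/
def Reg : List B → (ℤ → Submodule ℂ B) → Prop
  | [], _ => True
  | a :: l, N => InjN M N a ∧ Reg l (addR M N a)

variable (M) in
/-- `N + l M`. -/
def acc : List B → (ℤ → Submodule ℂ B) → (ℤ → Submodule ℂ B)
  | [], N => N
  | a :: l, N => acc l (addR M N a)

theorem acc_addR (l : List B) (N : ℤ → Submodule ℂ B) (a : B) :
    acc M l (addR M N a) = addR M (acc M l N) a := by
  induction l generalizing N with
  | nil => rfl
  | cons b l ih => simp only [acc]; rw [addR_comm, ih]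

theorem good_acc (l : List B) (hl : ∀ a ∈ l, a ∈ Ops M) {N : ℤ → Submodule ℂ B} (hN : Good M N) :
    Good M (acc M l N) := by
  induction l generalizing N with
  | nil => exact hN
  | cons b l ih =>
    exact ih (fun a ha => hl a (List.mem_cons_of_mem _ ha)) (good_addR hN (hl b (by simp)))

theorem le_acc (l : List B) (N : ℤ → Submodule ℂ B) (d : ℤ) : N d ≤ acc M l N d := by
  induction l generalizing N with
  | nil => exact le_rfl
  | cons b l ih => exact le_trans (show N d ≤ addR M N b d from le_sup_left) (ih _)

theorem reg_snoc (l : List B) (a : B) (N : ℤ → Submodule ℂ B) :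
    Reg M (l ++ [a]) N ↔ Reg M l N ∧ InjN M (acc M l N) a := by
  induction l generalizing N with
  | nil => simp [Reg, acc]
  | cons b l ih => simp only [List.cons_append, Reg, acc, ih, and_assoc]

theorem acc_snoc (l : List B) (a : B) (N : ℤ → Submodule ℂ B) :
    acc M (l ++ [a]) N = addR M (acc M l N) a := by
  induction l generalizing N with
  | nil => simp [acc]
  | cons b l ih => simp only [List.cons_append, acc, ih]

theorem reg_front (hM : ∀ d < 0, M d = ⊥) (l : List B) (hl : ∀ a ∈ l, a ∈ Ops M) (F : B)
    (hF : F ∈ Ops M)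
    {N : ℤ → Submodule ℂ B} (hN : Good M N) (h : Reg M (l ++ [F]) N) : Reg M (F :: l) N := by
  induction l generalizing N with
  | nil => exact h
  | cons y l ih =>
    have hy : y ∈ Ops M := hl y (by simp)
    have h1 := ih (fun a ha => hl a (List.mem_cons_of_mem _ ha)) (good_addR hN hy) h.2
    have h2 := swap_inj hM hN hy hF h.1 h1.1
    refine ⟨h2.1, h2.2, ?_⟩
    rw [addR_comm]; exact h1.2

theorem exchange [∀ d, FiniteDimensional ℂ (M d)] (hM : ∀ d < 0, M d = ⊥)
    {m : ℕ} (F : Fin m → B) (hF : ∀ i, F i ∈ Ops M) (k : ℕ) (ys : List B) (hk : ys.length = k)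
    (hy : ∀ a ∈ ys, a ∈ Ops M) {N : ℤ → Submodule ℂ B} (hN : Good M N) (hr : Reg M ys N)
    (hys : ∃ D : ℤ, ∀ d ≥ D, M d ≤ acc M ys N d)
    (hFs : ∃ D : ℤ, ∀ d ≥ D, ∀ z ∈ M (d + 1), ∃ n ∈ N (d + 1), ∃ x : Fin m → B,
      (∀ i, x i ∈ M d) ∧ n + ∑ i, F i * x i = z) :
    ∃ Fs : List B, Fs.length = k ∧ (∀ a ∈ Fs, ∃ c : Fin m → ℂ, a = ∑ i, c i • F i) ∧
      Reg M Fs N := by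
  induction k generalizing ys N with
  | zero => exact ⟨[], rfl, by simp, trivial⟩
  | succ k ih =>
    obtain ⟨ys', y, rfl⟩ : ∃ l a, ys = l ++ [a] := by
      rcases List.eq_nil_or_concat ys with h | ⟨l, a, h⟩
      · simp [h] at hk
      · exact ⟨l, a, by simpa using h⟩
    have hy' : ∀ a ∈ ys', a ∈ Ops M := fun a ha => hy a (by simp [ha])
    have hyO : y ∈ Ops M := hy y (by simp)
    obtain ⟨hr1, hr2⟩ := (reg_snoc _ _ _).1 hr
    obtain ⟨D1, hD1⟩ := hys
    obtain ⟨D2, hD2⟩ := hFs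
    rw [acc_snoc] at hD1
    have hN1 := good_acc ys' hy' hN
    obtain ⟨c, hc1, hc2⟩ := generic_op hN1 hyO hr2
      ⟨D1, fun d hd z hz => mem_addR.1 (hD1 (d + 1) (by linarith) hz)⟩ F hF
      ⟨D2, fun d hd z hz => by
        obtain ⟨n, hn, h⟩ := hD2 d hd z hz
        exact ⟨n, le_acc _ _ _ hn, h⟩⟩
    have hGO : (∑ i, c i • F i) ∈ Ops M := sum_mem fun i _ => Submodule.smul_mem _ _ (hF i)
    have h3 := reg_front hM ys' hy' _ hGO hN ((reg_snoc _ _ _).2 ⟨hr1, hc1⟩)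
    obtain ⟨Fs, h4, h5, h6⟩ := ih ys' (by simpa using hk) hy' (good_addR hN hGO) h3.2 (by
      obtain ⟨D3, hD3⟩ := hc2
      refine ⟨D3 + 1, fun d hd z hz => ?_⟩
      obtain ⟨e, rfl⟩ : ∃ e, d = e + 1 := ⟨d - 1, by ring⟩
      rw [acc_addR]
      exact mem_addR.2 (hD3 e (by linarith) z hz)) (by
      refine ⟨D2, fun d hd z hz => ?_⟩
      obtain ⟨n, hn, h⟩ := hD2 d hd z hz
      exact ⟨n, Submodule.mem_sup_left hn, h⟩)
    refine ⟨_ :: Fs, by simp [h4], ?_, h3.1, h6⟩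
    intro a ha
    rcases List.mem_cons.1 ha with rfl | ha
    · exact ⟨c, rfl⟩
    · exact h5 a ha

theorem finrank_addR [∀ d, FiniteDimensional ℂ (M d)] {N : ℤ → Submodule ℂ B} (hN : Good M N)
    {a : B} (ha : a ∈ Ops M) (h : InjN M N a) (d : ℤ) :
    Module.finrank ℂ (addR M N a (d + 1)) + Module.finrank ℂ (N d) =
      Module.finrank ℂ (N (d + 1)) + Module.finrank ℂ (M d) := by
  have hfN : ∀ d, FiniteDimensional ℂ (N d) := fun d =>
    Submodule.finiteDimensional_of_le (hN.1 d)
  let φ : M d →ₗ[ℂ] B ⧸ N (d + 1) := (N (d + 1)).mkQ ∘ₗ LinearMap.mulLeft ℂ a ∘ₗ (M d).subtype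
  have hker : LinearMap.ker φ = (N d).submoduleOf (M d) := by
    ext x
    simp only [φ, LinearMap.mem_ker, LinearMap.comp_apply, Submodule.mkQ_apply,
      Submodule.Quotient.mk_eq_zero]
    exact ⟨fun hx => h d x x.2 hx, fun hx => hN.2 a ha d _ hx⟩
  have hrange : LinearMap.range φ = (addR M N a (d + 1)).map (N (d + 1)).mkQ := by
    ext z
    constructor
    · rintro ⟨x, rfl⟩
      exact ⟨a * x, mem_addR.2 ⟨0, zero_mem _, x, x.2, by simp⟩, rfl⟩
    · rintro ⟨w, hw, rfl⟩
      obtain ⟨n, hn, x, hx, rfl⟩ := mem_addR.1 hw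
      refine ⟨⟨x, hx⟩, ?_⟩
      simp only [φ, LinearMap.comp_apply, Submodule.mkQ_apply]
      rw [Submodule.Quotient.eq]
      simpa using hn
  have h1 := LinearMap.finrank_range_add_finrank_ker φ
  rw [hker, hrange] at h1
  have hle : N (d + 1) ≤ addR M N a (d + 1) := le_sup_left
  have hfA : FiniteDimensional ℂ (addR M N a (d + 1)) :=
    Submodule.finiteDimensional_of_le ((good_addR hN ha).1 _)
  have h2 := LinearMap.finrank_range_add_finrank_ker
    ((N (d + 1)).mkQ.domRestrict (addR M N a (d + 1)))
  have h3 : LinearMap.ker ((N (d + 1)).mkQ.domRestrict (addR M N a (d + 1))) =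
      (N (d + 1)).submoduleOf (addR M N a (d + 1)) := by
    ext x
    simp only [LinearMap.mem_ker, LinearMap.domRestrict_apply, Submodule.mkQ_apply,
      Submodule.Quotient.mk_eq_zero]
    exact Iff.rfl
  have h4 : LinearMap.range ((N (d + 1)).mkQ.domRestrict (addR M N a (d + 1))) =
      (addR M N a (d + 1)).map (N (d + 1)).mkQ := by
    rw [LinearMap.range_domRestrict]
  rw [h3, h4] at h2
  have h5 : Module.finrank ℂ ((N d).submoduleOf (M d)) = Module.finrank ℂ (N d) :=
    (Submodule.submoduleOfEquivOfLe (hN.1 d)).finrank_eq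
  have h6 : Module.finrank ℂ ((N (d + 1)).submoduleOf (addR M N a (d + 1))) =
      Module.finrank ℂ (N (d + 1)) :=
    (Submodule.submoduleOfEquivOfLe hle).finrank_eq
  omega

theorem reg_finrank [∀ d, FiniteDimensional ℂ (M d)] (l l' : List B) (hl : l.length = l'.length)
    (h1 : ∀ a ∈ l, a ∈ Ops M) (h2 : ∀ a ∈ l', a ∈ Ops M) {N N' : ℤ → Submodule ℂ B}
    (hN : Good M N) (hN' : Good M N')
    (hNN : ∀ d, Module.finrank ℂ (N d) = Module.finrank ℂ (N' d)) (r : Reg M l N)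
    (r' : Reg M l' N') (d : ℤ) :
    Module.finrank ℂ (acc M l N d) = Module.finrank ℂ (acc M l' N' d) := by
  induction l generalizing l' N N' with
  | nil =>
    obtain rfl : l' = [] := List.length_eq_zero_iff.1 hl.symm
    exact hNN d
  | cons a l ih =>
    obtain _ | ⟨a', l'⟩ := l'
    · simp at hl
    have ha := h1 a (by simp)
    have ha' := h2 a' (by simp)
    refine ih l' (by simpa using hl) (fun b hb => h1 b (List.mem_cons_of_mem _ hb))
      (fun b hb => h2 b (List.mem_cons_of_mem _ hb)) (good_addR hN ha) (good_addR hN' ha') ?_ r.2 r'.2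
    intro d
    obtain ⟨e, rfl⟩ : ∃ e, d = e + 1 := ⟨d - 1, by ring⟩
    have e1 := finrank_addR hN ha r.1 e
    have e2 := finrank_addR hN' ha' r'.1 e
    have := hNN e
    have := hNN (e + 1)
    omega

end exchange

end TN

open MvPolynomial
set_option linter.all false
namespace TN
open ToricNewton Filter Topology

section hull
variable {n : ℕ}

theorem mem_hull (b : Module.Basis (Fin n) ℝ (Fin n → ℝ)) (S : Set (Fin n)) (x : Fin n → ℝ) :
    x ∈ convexHull ℝ (b '' S) ↔
      (∀ k, 0 ≤ b.repr x k) ∧ ∑ k, b.repr x k = 1 ∧ ∀ k, k ∉ S → b.repr x k = 0 := by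
  classical
  constructor
  · intro hx
    let C : Set (Fin n → ℝ) := {x | (∀ k, 0 ≤ b.repr x k) ∧ ∑ k, b.repr x k = 1 ∧
      ∀ k, k ∉ S → b.repr x k = 0}
    have hC : Convex ℝ C := by
      intro x hx y hy p q hp hq hpq
      refine ⟨fun k => ?_, ?_, fun k hk => ?_⟩
      · have := mul_nonneg hp (hx.1 k)
        have := mul_nonneg hq (hy.1 k)
        simp; linarith
      · simp [Finset.sum_add_distrib, ← Finset.mul_sum, hx.2.1, hy.2.1, hpq]
      · simp [hx.2.2 k hk, hy.2.2 k hk]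
    have : convexHull ℝ (b '' S) ⊆ C := by
      apply convexHull_min _ hC
      rintro _ ⟨k, hk, rfl⟩
      refine ⟨fun j => ?_, ?_, fun j hj => ?_⟩
      · simp [Finsupp.single_apply]; split_ifs <;> simp
      · simp [Finsupp.single_apply]
      · have : k ≠ j := by rintro rfl; exact hj hk
        simp [Finsupp.single_apply, this]
    exact this hx
  · rintro ⟨h0, h1, h2⟩
    have hx : x = ∑ k ∈ Finset.univ.filter (· ∈ S), b.repr x k • b k := by
      conv_lhs => rw [← b.sum_repr x]
      symm
      apply Finset.sum_subset (Finset.filter_subset _ _)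
      intro k _ hk
      rw [h2 k (by simpa using hk), zero_smul]
    have hs : ∑ k ∈ Finset.univ.filter (· ∈ S), b.repr x k = 1 := by
      rw [← h1]
      apply Finset.sum_subset (Finset.filter_subset _ _)
      intro k _ hk
      rw [h2 k (by simpa using hk)]
    rw [hx]
    apply (convex_convexHull ℝ (b '' S)).sum_mem (fun k _ => h0 k) hs
    intro k hk
    exact subset_convexHull ℝ _ ⟨k, by simpa using hk, rfl⟩

theorem hull_extreme (b : Module.Basis (Fin n) ℝ (Fin n → ℝ)) (S : Set (Fin n)) :
    (convexHull ℝ (b '' S)).extremePoints ℝ = b '' S := by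
  apply Set.Subset.antisymm extremePoints_convexHull_subset
  rintro _ ⟨k, hk, rfl⟩
  rw [mem_extremePoints_iff_left]
  refine ⟨subset_convexHull ℝ _ ⟨k, hk, rfl⟩, ?_⟩
  rintro x hx y hy ⟨p, q, hp, hq, hpq, h⟩
  rw [mem_hull] at hx hy
  have hxk : b.repr x k = 1 := by
    have h1 : b.repr x k ≤ 1 := by
      rw [← hx.2.1]; exact Finset.single_le_sum (fun j _ => hx.1 j) (Finset.mem_univ k)
    have h2 : b.repr y k ≤ 1 := by
      rw [← hy.2.1]; exact Finset.single_le_sum (fun j _ => hy.1 j) (Finset.mem_univ k)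
    have h3 := congrArg (fun z => b.repr z k) h
    simp at h3
    nlinarith
  apply b.repr.injective
  ext j
  by_cases hj : j = k
  · subst hj; simp [hxk]
  · have := Finset.add_sum_erase Finset.univ (fun j => b.repr x j) (Finset.mem_univ k)
    rw [hx.2.1, hxk] at this
    have h0 : ∑ x_1 ∈ Finset.univ.erase k, b.repr x x_1 = 0 := by linarith
    rw [Finset.sum_eq_zero_iff_of_nonneg (fun j _ => hx.1 j)] at h0
    rw [h0 j (by simp [hj])]
    simp [Finsupp.single_apply, Ne.symm hj]

end hull

section facets
variable {n : ℕ}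

/-- the dot-product functional -/
noncomputable def dp (y : Fin n → ℝ) : (Fin n → ℝ) →ₗ[ℝ] ℝ := ∑ i, y i • LinearMap.proj i

theorem dp_apply (y x : Fin n → ℝ) : dp y x = ∑ i, y i * x i := by
  simp [dp, LinearMap.sum_apply]

theorem exists_dp (l : (Fin n → ℝ) →ₗ[ℝ] ℝ) : ∃ y, l = dp y := by
  refine ⟨fun i => l (Pi.single i 1), ?_⟩
  apply LinearMap.pi_ext'
  intro i
  ext
  simp [dp_apply, Pi.single_apply]

theorem le_on_polytope {f : MvPolynomial (Fin n) ℂ} {l : (Fin n → ℝ) →ₗ[ℝ] ℝ} {c : ℝ} (hc : 0 ≤ c)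
    (hl : ∀ m ∈ f.support, l (toR m) ≤ c) : ∀ x ∈ newtonPolytope f, l x ≤ c := by
  intro x hx
  have : newtonPolytope f ⊆ {x | l x ≤ c} := by
    apply convexHull_min
    · rintro y (rfl | ⟨m, hm, rfl⟩)
      · simpa using hc
      · exact hl m hm
    · exact convex_halfSpace_le l.isLinear c
  exact this hx

theorem supp_mem {f : MvPolynomial (Fin n) ℂ} {m} (hm : m ∈ f.support) :
    toR m ∈ newtonPolytope f := subset_convexHull ℝ _ (Or.inr ⟨m, hm, rfl⟩)

theorem zero_mem_P {f : MvPolynomial (Fin n) ℂ} : (0 : Fin n → ℝ) ∈ newtonPolytope f :=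
  subset_convexHull ℝ _ (Or.inl rfl)

/-- extreme points of a face at level `1` are lattice points of the support. -/
theorem face_extreme {f : MvPolynomial (Fin n) ℂ} {l : (Fin n → ℝ) →ₗ[ℝ] ℝ} {c : ℝ}
    (hl : ∀ x ∈ newtonPolytope f, l x ≤ c) {p : Fin n → ℝ}
    (hp : p ∈ ({x ∈ newtonPolytope f | l x = c} : Set _).extremePoints ℝ) :
    p ∈ (newtonPolytope f).extremePoints ℝ := by
  rw [mem_extremePoints_iff_left] at hp ⊢
  refine ⟨hp.1.1, fun x hx y hy hxy => ?_⟩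
  apply hp.2 x _ y _ hxy
  all_goals
    obtain ⟨a, b, ha, hb, hab, h⟩ := hxy
    refine ⟨by assumption, ?_⟩
    have h1 := hl x hx
    have h2 := hl y hy
    have h3 := congrArg l h
    have hpc : l p = c := hp.1.2
    simp only [map_add, map_smul, smul_eq_mul, hpc] at h3
    have ha' : a = 1 - b := by linarith
    subst ha'
    nlinarith

theorem extreme_supp {f : MvPolynomial (Fin n) ℂ} {p : Fin n → ℝ}
    (hp : p ∈ (newtonPolytope f).extremePoints ℝ) (h0 : p ≠ 0) :
    ∃ m ∈ f.support, toR m = p := by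
  rcases extremePoints_convexHull_subset hp with h | ⟨m, hm, h⟩
  · exact absurd h h0
  · exact ⟨m, hm, h⟩

/-- the facet functionals -/
def IsT (f : MvPolynomial (Fin n) ℂ) (y : Fin n → ℝ) : Prop :=
  (∀ m ∈ f.support, dp y (toR m) ≤ 1) ∧
  Submodule.span ℝ (toR '' {m | m ∈ f.support ∧ dp y (toR m) = 1}) = ⊤

theorem isT_finite (f : MvPolynomial (Fin n) ℂ) : {y | IsT f y}.Finite := by
  classical
  apply Set.Finite.of_injOn (f := fun y => f.support.filter (fun m => dp y (toR m) = 1))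
    (t := (f.support.powerset : Set _)) ?_ ?_ (Finset.finite_toSet _)
  · intro y _
    rw [Finset.mem_coe, Finset.mem_powerset]
    exact Finset.filter_subset _ _
  · intro y hy z hz h
    have hd : dp y = dp z := by
      apply LinearMap.ext_on (s := toR '' {m | m ∈ f.support ∧ dp y (toR m) = 1}) hy.2
      rintro _ ⟨m, hm, rfl⟩
      have : m ∈ f.support.filter (fun m => dp z (toR m) = 1) := by
        have h' : Finset.filter (fun m => dp y (toR m) = 1) f.support = Finset.filter (fun m => dp z (toR m) = 1) f.support := h
        rw [← h']
        simpa using hm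
      rw [hm.2, (Finset.mem_filter.1 this).2]
    ext i
    have := congrArg (fun l => l (Pi.single i 1)) hd
    simpa [dp_apply, Pi.single_apply] using this

theorem facet_basis (hn : 1 ≤ n) (f : MvPolynomial (Fin n) ℂ)
    (hsimp : ∀ Δ : Set (Fin n → ℝ), NBFace f Δ → IsSimplex Δ) {y : Fin n → ℝ} (hy : IsT f y) :
    ∃ (b : Module.Basis (Fin n) ℝ (Fin n → ℝ)) (s : Fin n → (Fin n →₀ ℕ)),
      (∀ k, s k ∈ f.support) ∧ (∀ k, b k = toR (s k)) ∧ (∀ x, dp y x = ∑ k, b.repr x k) ∧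
      (∀ m ∈ f.support, dp y (toR m) = 1 → ∀ k, 0 ≤ b.repr (toR m) k) := by
  classical
  have hle := le_on_polytope (f := f) (l := dp y) zero_le_one hy.1
  have hne : ∃ m ∈ f.support, dp y (toR m) = 1 := by
    by_contra hcon
    push Not at hcon
    have : toR '' {m | m ∈ f.support ∧ dp y (toR m) = 1} = ∅ := by
      apply Set.image_eq_empty.2
      ext m; simp only [Set.mem_setOf_eq, Set.mem_empty_iff_false, iff_false, not_and]
      exact hcon m
    have h2 := hy.2
    rw [this, Submodule.span_empty] at h2
    have : Nontrivial (Fin n → ℝ) := by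
      have : Nonempty (Fin n) := ⟨⟨0, hn⟩⟩
      infer_instance
    exact bot_ne_top h2
  obtain ⟨m0, hm0, hm01⟩ := hne
  have hface : NBFace f {x ∈ newtonPolytope f | dp y x = 1} := by
    refine ⟨⟨⟨toR m0, supp_mem hm0, hm01⟩, dp y, 1, hle, rfl⟩, ?_⟩
    simp
  obtain ⟨k, p, hp, hΔ⟩ := hsimp _ hface
  have hp1 : ∀ j, dp y (p j) = 1 := by
    intro j
    have : p j ∈ convexHull ℝ (Set.range p) := subset_convexHull ℝ _ ⟨j, rfl⟩
    rw [← hΔ] at this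
    exact this.2
  have hli : LinearIndependent ℝ p := by
    rw [Fintype.linearIndependent_iff]
    intro g hg
    rw [affineIndependent_iff] at hp
    intro j
    refine hp Finset.univ g ?_ hg j (Finset.mem_univ j)
    have := congrArg (dp y) hg
    simpa [map_sum, hp1] using this
  have hspan : ⊤ ≤ Submodule.span ℝ (Set.range p) := by
    rw [← hy.2, Submodule.span_le]
    rintro _ ⟨m, hm, rfl⟩
    have h1 : toR m ∈ ({x ∈ newtonPolytope f | dp y x = 1} : Set _) := ⟨supp_mem hm.1, hm.2⟩
    rw [hΔ] at h1
    exact convexHull_min Submodule.subset_span (Submodule.convex _) h1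
  let b0 := Module.Basis.mk hli hspan
  have hcard : k + 1 = n := by
    have := Module.finrank_eq_card_basis b0
    simpa using this.symm
  let b := b0.reindex (finCongr hcard)
  have hrange : Set.range p = b '' Set.univ := by
    have : Set.range p = Set.range b0 := by simp [b0]
    rw [Set.image_univ, this]; simp [b]
  rw [hrange] at hΔ
  have hdp : ∀ j, dp y (b j) = 1 := by
    intro j
    simp [b, b0, hp1]
  have hs : ∀ j, ∃ m ∈ f.support, toR m = b j := by
    intro j
    apply extreme_supp
    · apply face_extreme hle
      rw [hΔ, hull_extreme]
      exact ⟨j, trivial, rfl⟩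
    · intro h; have := hdp j; rw [h] at this; simp at this
  choose s hs1 hs2 using hs
  refine ⟨b, s, hs1, fun j => (hs2 j).symm, ?_, ?_⟩
  · intro x
    conv_lhs => rw [← b.sum_repr x]
    rw [map_sum]
    simp [hdp, -Module.Basis.sum_repr]
  · intro m hm hm1
    have h1 : toR m ∈ ({x ∈ newtonPolytope f | dp y x = 1} : Set _) := ⟨supp_mem hm, hm1⟩
    rw [hΔ, mem_hull] at h1
    exact h1.1

theorem ev_le {a d : ℝ} (h : a < 1 ∨ (a ≤ 1 ∧ d ≤ 0)) : ∀ᶠ ε in 𝓝[>] (0:ℝ), a + ε * d ≤ 1 := by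
  rcases h with h | ⟨h1, h2⟩
  · have : Tendsto (fun ε : ℝ => a + ε * d) (𝓝[>] 0) (𝓝 (a + 0 * d)) := by
      apply Tendsto.mono_left _ nhdsWithin_le_nhds
      exact (by fun_prop : Continuous fun ε : ℝ => a + ε * d).tendsto 0
    have h3 := this.eventually_lt_const (u := 1) (by simpa using h)
    exact h3.mono fun _ h => h.le
  · filter_upwards [self_mem_nhdsWithin] with ε hε
    have : 0 < ε := hε
    nlinarith

theorem ev_pos {a : ℝ} (d : ℝ) (h : 0 < a) : ∀ᶠ ε in 𝓝[>] (0:ℝ), 0 < a + ε * d := by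
  have : Tendsto (fun ε : ℝ => a + ε * d) (𝓝[>] 0) (𝓝 (a + 0 * d)) := by
    apply Tendsto.mono_left _ nhdsWithin_le_nhds
    exact (by fun_prop : Continuous fun ε : ℝ => a + ε * d).tendsto 0
  exact this.eventually_const_lt (by simpa using h)

theorem dp_add_smul (y d x : Fin n → ℝ) (ε : ℝ) : dp (y + ε • d) x = dp y x + ε * dp d x := by
  simp [dp_apply, add_mul, Finset.sum_add_distrib, Finset.mul_sum, mul_assoc]

theorem dp_comm (y x : Fin n → ℝ) : dp y x = dp x y := by simp [dp_apply, mul_comm]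

theorem dp_cont (x : Fin n → ℝ) : Continuous fun y => dp y x := by
  simp only [dp_apply]; fun_prop

theorem toR_single {y : Fin n → ℝ} (i : Fin n) (k : ℕ) : dp y (toR (Finsupp.single i k)) = y i * k := by
  rw [dp_apply, Finset.sum_eq_single i]
  · simp [toR]
  · intro j _ hj; simp [toR, Finsupp.single_apply, Ne.symm hj]
  · simp

/-- interior points are covered by cones over facets -/
theorem cover_interior (hn : 1 ≤ n) (f : MvPolynomial (Fin n) ℂ) (hconv : Convenient f)
    (x : Fin n → ℝ) (hx : ∀ i, 0 < x i) :
    ∃ y, IsT f y ∧ ∀ d : Fin n → ℝ,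
      (∀ m ∈ f.support, dp y (toR m) = 1 → 0 ≤ dp d (toR m)) → 0 ≤ dp d x := by
  classical
  let Q : Set (Fin n → ℝ) := {y | (∀ m ∈ f.support, dp y (toR m) ≤ 1) ∧ 0 ≤ dp y x}
  have hQc : IsClosed Q := by
    have : Q = (⋂ m ∈ f.support, {y | dp y (toR m) ≤ 1}) ∩ {y | 0 ≤ dp y x} := by
      ext y; simp [Q]
    rw [this]
    apply IsClosed.inter
    · exact isClosed_biInter fun m _ => isClosed_le (dp_cont _) continuous_const
    · exact isClosed_le continuous_const (dp_cont _)
  have hub : ∀ y ∈ Q, ∀ i, y i ≤ 1 := by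
    intro y hy i
    obtain ⟨k, hk, hk2⟩ := hconv i
    have h1 := hy.1 _ (mem_support_iff.2 hk2)
    rw [toR_single] at h1
    have : (1:ℝ) ≤ k := by exact_mod_cast hk
    by_contra hcon
    nlinarith
  have hlb : ∀ y ∈ Q, ∀ i, -(∑ j, x j) / x i ≤ y i := by
    intro y hy i
    rw [div_le_iff₀ (hx i)]
    have h1 := hy.2
    rw [dp_apply, ← Finset.add_sum_erase _ _ (Finset.mem_univ i)] at h1
    have h2 : ∑ j ∈ Finset.univ.erase i, y j * x j ≤ ∑ j ∈ Finset.univ.erase i, x j := by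
      apply Finset.sum_le_sum
      intro j _
      nlinarith [hub y hy j, hx j]
    have h3 : ∑ j ∈ Finset.univ.erase i, x j ≤ ∑ j, x j :=
      Finset.sum_le_sum_of_subset_of_nonneg (Finset.erase_subset _ _) fun j _ _ => (hx j).le
    linarith
  have hQ : IsCompact Q := by
    apply IsCompact.of_isClosed_subset (s := Set.pi Set.univ fun i => Set.Icc (-(∑ j, x j) / x i) 1)
      (isCompact_univ_pi fun i => isCompact_Icc) hQc
    intro y hy i _
    exact ⟨hlb y hy i, hub y hy i⟩
  have hpos : ∃ y ∈ Q, 0 < dp y x := by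
    have hev : ∀ᶠ ε in 𝓝[>] (0:ℝ), ∀ m ∈ f.support, dp ((0 : Fin n → ℝ) + ε • (fun _ => 1)) (toR m) ≤ 1 := by
      rw [Filter.eventually_all_finset]
      intro m _
      simp only [dp_add_smul]
      apply ev_le
      left
      simp [dp_apply]
    obtain ⟨ε, h1, h2⟩ := (hev.and self_mem_nhdsWithin).exists
    have h3 : 0 < dp ((0 : Fin n → ℝ) + ε • (fun _ => 1)) x := by
      rw [dp_apply]
      have : Nonempty (Fin n) := ⟨⟨0, hn⟩⟩
      apply Finset.sum_pos _ Finset.univ_nonempty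
      intro i _
      have : 0 < ε := h2
      simp; exact mul_pos this (hx i)
    exact ⟨_, ⟨h1, h3.le⟩, h3⟩
  obtain ⟨y1, hy1, hy1p⟩ := hpos
  obtain ⟨y0, hy0, hmax⟩ := hQ.exists_isMaxOn ⟨y1, hy1⟩ (dp_cont x).continuousOn
  have hmax' : ∀ y ∈ Q, dp y x ≤ dp y0 x := fun y hy => hmax hy
  have hp0 : 0 < dp y0 x := lt_of_lt_of_le hy1p (hmax' _ hy1)
  let S : Set (Fin n → ℝ) := Q ∩ {y | dp y x = dp y0 x}
  have hS : IsCompact S := hQ.inter_right (isClosed_eq (dp_cont x) continuous_const)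
  obtain ⟨y, hyS⟩ := hS.extremePoints_nonempty ⟨y0, hy0, rfl⟩
  rw [mem_extremePoints_iff_left] at hyS
  obtain ⟨⟨hyQ, hyx⟩, hext⟩ := hyS
  have hyx : dp y x = dp y0 x := hyx
  -- perturbation
  have key : ∀ d : Fin n → ℝ,
      (∀ m ∈ f.support, dp y (toR m) = 1 → dp d (toR m) ≤ 0) →
      ∀ᶠ ε in 𝓝[>] (0:ℝ), y + ε • d ∈ Q := by
    intro d hd
    have hev : ∀ᶠ ε in 𝓝[>] (0:ℝ), ∀ m ∈ f.support, dp (y + ε • d) (toR m) ≤ 1 := by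
      rw [Filter.eventually_all_finset]
      intro m hm
      simp only [dp_add_smul]
      apply ev_le
      rcases (hyQ.1 m hm).lt_or_eq with h | h
      · exact Or.inl h
      · exact Or.inr ⟨h.le, hd m hm h⟩
    filter_upwards [hev, ev_pos (dp d x) (hyx.symm ▸ hp0)] with ε h1 h2
    refine ⟨h1, ?_⟩
    rw [dp_add_smul]; exact h2.le
  have key2 : ∀ d : Fin n → ℝ,
      (∀ m ∈ f.support, dp y (toR m) = 1 → dp d (toR m) ≤ 0) → dp d x ≤ 0 := by
    intro d hd
    obtain ⟨ε, h1, h2⟩ := ((key d hd).and self_mem_nhdsWithin).exists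
    have h3 := hmax' _ h1
    rw [dp_add_smul, hyx] at h3
    have : 0 < ε := h2
    by_contra hcon
    nlinarith
  have dpneg : ∀ d z : Fin n → ℝ, dp (-d) z = - dp d z := by
    intro d z; simp [dp_apply]
  refine ⟨y, ⟨hyQ.1, ?_⟩, ?_⟩
  · by_contra hcon
    obtain ⟨l, hl0, hl⟩ := Submodule.exists_le_ker_of_lt_top _ (lt_top_iff_ne_top.2 hcon)
    obtain ⟨d, rfl⟩ := exists_dp l
    have hd : ∀ m ∈ f.support, dp y (toR m) = 1 → dp d (toR m) = 0 := by
      intro m hm h1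
      exact hl (Submodule.subset_span ⟨m, ⟨hm, h1⟩, rfl⟩)
    have hdx1 := key2 d (fun m hm h => (hd m hm h).le)
    have hdx2 := key2 (-d) (fun m hm h => by rw [dpneg, hd m hm h]; simp)
    rw [dpneg] at hdx2
    have hdx : dp d x = 0 := by linarith
    obtain ⟨ε, ⟨h1, h2⟩, h3⟩ := (((key d (fun m hm h => (hd m hm h).le)).and
      (key (-d) (fun m hm h => by rw [dpneg, hd m hm h]; simp))).and self_mem_nhdsWithin).exists
    have hε : 0 < ε := h3
    have h4 := hext _ ⟨h1, by simp [dp_add_smul, hdx, hyx]⟩ _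
      ⟨h2, show dp (y + ε • (-d)) x = _ by rw [dp_add_smul, dpneg, hdx, hyx]; simp⟩
      ⟨1/2, 1/2, by norm_num, by norm_num, by norm_num, by
        ext i; simp; ring⟩
    have h5 : d = 0 := by
      have : ε • d = 0 := by simpa using h4
      exact (smul_eq_zero.1 this).resolve_left hε.ne'
    apply hl0
    rw [h5]; ext; simp [dp_apply]
  · intro d hd
    have := key2 (-d) (fun m hm h => by rw [dpneg]; linarith [hd m hm h])
    rw [dpneg] at this
    linarith
end facets
end TN

open MvPolynomial
set_option linter.all false
namespace TN
open ToricNewton Filter Topology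
open scoped Pointwise

theorem exists_generic {n : ℕ} (D : Set (Fin n → ℝ)) (hD : D.Finite) (h0 : ∀ d ∈ D, d ≠ 0) :
    ∃ ξ : Fin n → ℝ, (∀ i, 0 < ξ i) ∧ ∀ d ∈ D, dp d ξ ≠ 0 := by
  classical
  let p : (Fin n → ℝ) → Polynomial ℝ := fun d => ∑ i, Polynomial.monomial i.1 (d i)
  have hp : ∀ d, d ≠ 0 → p d ≠ 0 := by
    intro d hd h
    apply hd
    ext i
    have := congrArg (fun q => Polynomial.coeff q i.1) h
    simpa [p, Polynomial.coeff_monomial, Fin.val_inj] using this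
  have hfin : (⋃ d ∈ D, {t | (p d).IsRoot t}).Finite := by
    apply hD.biUnion
    intro d hd
    exact Polynomial.finite_setOf_isRoot (hp d (h0 d hd))
  obtain ⟨t, ht, ht2⟩ := (Set.Ioi_infinite (0:ℝ)).exists_notMem_finite hfin
  refine ⟨fun i => t ^ i.1, fun i => pow_pos ht _, fun d hd h => ht2 ?_⟩
  simp only [Set.mem_iUnion]
  refine ⟨d, hd, ?_⟩
  show Polynomial.eval t (p d) = 0
  rw [← h, dp_apply]
  simp [p, Polynomial.eval_finset_sum]

/-- Combinatorial data of the simplicial fan over the Newton boundary, with a generic vector. -/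
structure Fan {n : ℕ} (f : MvPolynomial (Fin n) ℂ) where
  ι : Type
  fin : Fintype ι
  b : ι → Module.Basis (Fin n) ℝ (Fin n → ℝ)
  s : ι → Fin n → (Fin n →₀ ℕ)
  s_mem : ∀ τ k, s τ k ∈ f.support
  b_eq : ∀ τ k, b τ k = toR (s τ k)
  le : ∀ τ, ∀ m ∈ f.support, ∑ k, (b τ).coord k (toR m) ≤ 1
  tight : ∀ τ, ∀ m ∈ f.support, ∑ k, (b τ).coord k (toR m) = 1 → ∀ k, 0 ≤ (b τ).coord k (toR m)
  cover : ∀ x : Fin n → ℝ, (∀ i, 0 < x i) → ∃ τ, ∀ k, 0 ≤ (b τ).coord k x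
  ξ : Fin n → ℝ
  ξ_pos : ∀ i, 0 < ξ i
  ξ_ne : ∀ τ k, (b τ).coord k ξ ≠ 0
  ξ_inj : ∀ τ τ', ∑ k, (b τ).coord k ξ = ∑ k, (b τ').coord k ξ → τ = τ'

theorem exists_fan {n : ℕ} (hn : 1 ≤ n)
    (f : MvPolynomial (Fin n) ℂ) (hconv : Convenient f)
    (hsimp : ∀ Δ : Set (Fin n → ℝ), NBFace f Δ → IsSimplex Δ) : Nonempty (Fan f) := by
  classical
  have hfin := isT_finite f
  let ι := {y // IsT f y}
  have : Finite ι := hfin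
  have : Fintype ι := Fintype.ofFinite ι
  choose b s h1 h2 h3 h4 using fun y : ι => facet_basis hn f hsimp y.2
  choose cv hcv using fun (p : ι × Fin n) => exists_dp ((b p.1).coord p.2)
  let D : Set (Fin n → ℝ) := Set.range cv ∪ (Set.range fun p : ι × ι => p.1.1 - p.2.1) \ {0}
  have hD : D.Finite := (Set.finite_range _).union ((Set.finite_range _).sdiff)
  have dp0 : dp (0 : Fin n → ℝ) = 0 := by ext; simp [dp_apply]
  obtain ⟨ξ, hξ, hξ2⟩ := exists_generic D hD (by
    rintro d (⟨p, rfl⟩ | h)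
    · intro h
      have h5 := hcv p
      rw [h, dp0] at h5
      have := congrArg (fun l => l (b p.1 p.2)) h5
      simp at this
    · exact h.2)
  refine ⟨⟨ι, inferInstance, b, s, h1, h2, ?_, ?_, ?_, ξ, hξ, ?_, ?_⟩⟩
  · intro τ m hm
    have := τ.2.1 m hm
    rw [h3] at this
    exact this
  · intro τ m hm h
    apply h4 τ m hm
    rw [h3]; exact h
  · intro x hx
    obtain ⟨y, hy, h⟩ := cover_interior hn f hconv x hx
    refine ⟨⟨y, hy⟩, fun k => ?_⟩
    rw [hcv (⟨y, hy⟩, k)]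
    apply h
    intro m hm h1
    rw [← hcv (⟨y, hy⟩, k)]
    exact h4 ⟨y, hy⟩ m hm h1 k
  · intro τ k h
    rw [hcv (τ, k)] at h
    exact hξ2 _ (Or.inl ⟨_, rfl⟩) h
  · intro τ τ' h
    by_contra hne
    have h6 : τ.1 - τ'.1 ≠ 0 := by
      intro h; exact hne (Subtype.ext (sub_eq_zero.1 h))
    apply hξ2 (τ.1 - τ'.1) (Or.inr ⟨⟨(τ, τ'), rfl⟩, h6⟩)
    have h7 : dp τ.1 ξ = dp τ'.1 ξ := by rw [h3, h3]; exact h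
    simp only [dp_apply] at h7 ⊢
    simp [sub_mul, h7]

namespace Fan
variable {n : ℕ} {f : MvPolynomial (Fin n) ℂ} (F : Fan f)

instance : Fintype F.ι := F.fin

noncomputable def c (τ : F.ι) (k : Fin n) : (Fin n → ℝ) →ₗ[ℝ] ℝ := (F.b τ).coord k
noncomputable def ℓ (τ : F.ι) : (Fin n → ℝ) →ₗ[ℝ] ℝ := ∑ k, F.c τ k

theorem ℓ_apply (τ x) : F.ℓ τ x = ∑ k, F.c τ k x := by simp [ℓ, LinearMap.sum_apply]

theorem c_b (τ k j) : F.c τ k (F.b τ j) = if j = k then 1 else 0 := by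
  classical
  simp [c, Finsupp.single_apply]

theorem sum_c (τ x) : ∑ k, F.c τ k x • F.b τ k = x := (F.b τ).sum_repr x

theorem ext_c (τ) {x y : Fin n → ℝ} (h : ∀ k, F.c τ k x = F.c τ k y) : x = y := by
  rw [← F.sum_c τ x, ← F.sum_c τ y]; simp [h]

theorem ℓ_b (τ k) : F.ℓ τ (F.b τ k) = 1 := by simp [ℓ_apply, c_b]

theorem ℓ_le (τ m) (hm : m ∈ f.support) : F.ℓ τ (toR m) ≤ 1 := by
  rw [ℓ_apply]; exact F.le τ m hm

theorem ℓ_tight (τ m) (hm : m ∈ f.support) (h : F.ℓ τ (toR m) = 1) (k) : 0 ≤ F.c τ k (toR m) := by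
  rw [ℓ_apply] at h; exact F.tight τ m hm h k

def cone (τ : F.ι) : Set (Fin n → ℝ) := {x | ∀ k, 0 ≤ F.c τ k x}

theorem ℓ_max {τ τ' : F.ι} {x} (hx : x ∈ F.cone τ) : F.ℓ τ' x ≤ F.ℓ τ x := by
  rw [ℓ_apply F τ x]
  conv_lhs => rw [← F.sum_c τ x, map_sum]
  apply Finset.sum_le_sum
  intro k _
  rw [map_smul, smul_eq_mul, F.b_eq]
  have := F.ℓ_le τ' _ (F.s_mem τ k)
  have h2 := hx k
  nlinarith

theorem ℓ_nonneg {τ : F.ι} {x} (hx : x ∈ F.cone τ) : 0 ≤ F.ℓ τ x := by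
  rw [ℓ_apply]; exact Finset.sum_nonneg fun k _ => hx k

theorem ℓ_P (τ : F.ι) {x} (hx : x ∈ newtonPolytope f) : F.ℓ τ x ≤ 1 :=
  le_on_polytope zero_le_one (fun m hm => F.ℓ_le τ m hm) x hx

theorem b_P (τ : F.ι) (k) : F.b τ k ∈ newtonPolytope f := by
  rw [F.b_eq]; exact supp_mem (F.s_mem τ k)

theorem hull_P (τ : F.ι) (S : Set (Fin n)) : convexHull ℝ (F.b τ '' S) ⊆ newtonPolytope f := by
  apply convexHull_min _ (convex_convexHull ℝ _)
  rintro _ ⟨k, _, rfl⟩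
  exact F.b_P τ k

theorem mem_hull (τ : F.ι) (S : Set (Fin n)) (x) : x ∈ convexHull ℝ (F.b τ '' S) ↔
    x ∈ F.cone τ ∧ F.ℓ τ x = 1 ∧ ∀ k, k ∉ S → F.c τ k x = 0 := by
  rw [TN.mem_hull, ℓ_apply]; rfl

theorem eq_zero {τ : F.ι} {x} (hx : x ∈ F.cone τ) (h : F.ℓ τ x = 0) : x = 0 := by
  rw [ℓ_apply, Finset.sum_eq_zero_iff_of_nonneg (fun k _ => hx k)] at h
  apply F.ext_c τ
  intro k; simp [h k (Finset.mem_univ k)]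

theorem nu_eq {τ : F.ι} {x} (hx : x ∈ F.cone τ) : nu f x = F.ℓ τ x := by
  rcases (F.ℓ_nonneg hx).lt_or_eq with h | h
  · have hmem : x ∈ F.ℓ τ x • newtonPolytope f := by
      refine ⟨(F.ℓ τ x)⁻¹ • x, ?_, ?_⟩
      · apply F.hull_P τ Set.univ
        rw [mem_hull]
        refine ⟨fun k => ?_, ?_, by simp⟩
        · rw [map_smul]; exact mul_nonneg (inv_nonneg.2 h.le) (hx k)
        · rw [map_smul, smul_eq_mul, inv_mul_cancel₀ h.ne']
      · show F.ℓ τ x • ((F.ℓ τ x)⁻¹ • x) = x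
        rw [smul_smul, mul_inv_cancel₀ h.ne', one_smul]
    apply le_antisymm
    · exact gauge_le_of_mem h.le hmem
    · rw [nu, gauge]
      refine le_csInf ⟨F.ℓ τ x, h, hmem⟩ ?_
      rintro r ⟨hr, y, hy, rfl⟩
      show F.ℓ τ (r • y) ≤ r
      rw [map_smul, smul_eq_mul]
      have := F.ℓ_P τ hy
      have : 0 < r := hr
      nlinarith
  · have := F.eq_zero hx h.symm
    subst this
    simp [nu]

/-- `x + εη ∈ cone τ` for small positive ε. -/
def In (τ : F.ι) (x η : Fin n → ℝ) : Prop :=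
  ∀ k, 0 < F.c τ k x ∨ (F.c τ k x = 0 ∧ 0 ≤ F.c τ k η)

theorem In.cone {F : Fan f} {τ x η} (h : F.In τ x η) : x ∈ F.cone τ := by
  intro k
  rcases h k with h | h
  · exact h.le
  · exact h.1.ge

theorem In.ev {F : Fan f} {τ x η} (h : F.In τ x η) : ∀ᶠ ε in 𝓝[>] (0:ℝ), x + ε • η ∈ F.cone τ := by
  apply Filter.eventually_all.2
  intro k
  simp only [map_add, map_smul, smul_eq_mul]
  rcases h k with h | h
  · exact (ev_pos _ h).mono fun _ h => h.le
  · filter_upwards [self_mem_nhdsWithin] with ε hε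
    have : 0 < ε := hε
    rw [h.1, zero_add]; exact mul_nonneg this.le h.2

theorem exists_In (x η : Fin n → ℝ) (h : ∀ᶠ ε in 𝓝[>] (0:ℝ), ∀ i, 0 < (x + ε • η) i) :
    ∃ τ, F.In τ x η := by
  have h1 : ∃ τ, ∃ᶠ ε in 𝓝[>] (0:ℝ), x + ε • η ∈ F.cone τ := by
    by_contra hcon
    push Not at hcon
    have h2 := Filter.eventually_all.2 hcon
    obtain ⟨ε, h3, h4⟩ := (h.and h2).exists
    obtain ⟨τ, hτ⟩ := F.cover _ h3
    exact h4 τ hτ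
  obtain ⟨τ, hτ⟩ := h1
  refine ⟨τ, fun k => ?_⟩
  by_contra hcon
  push Not at hcon
  obtain ⟨h1, h2⟩ := hcon
  have h3 : ∀ᶠ ε in 𝓝[>] (0:ℝ), F.c τ k (x + ε • η) < 0 := by
    simp only [map_add, map_smul, smul_eq_mul]
    rcases h1.lt_or_eq with h | h
    · have := ev_pos (-F.c τ k η) (a := -F.c τ k x) (by linarith)
      exact this.mono fun ε h => by linarith
    · filter_upwards [self_mem_nhdsWithin] with ε hε
      have : 0 < ε := hε
      rw [h, zero_add]
      exact mul_neg_of_pos_of_neg this (h2 h)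
  obtain ⟨ε, h4, h5⟩ := (hτ.and_eventually h3).exists
  exact absurd (h4 k) (not_le.2 h5)

theorem In.ℓ_le {F : Fan f} {τ τ' x η} (h : F.In τ x η) (h' : F.ℓ τ' x = F.ℓ τ x) :
    F.ℓ τ' η ≤ F.ℓ τ η := by
  obtain ⟨ε, h1, h2⟩ := (h.ev.and self_mem_nhdsWithin).exists
  have h3 := F.ℓ_max (τ' := τ') h1
  simp only [map_add, map_smul, smul_eq_mul, h'] at h3
  have : 0 < ε := h2
  by_contra hcon
  nlinarith

theorem In.unique {F : Fan f} {τ τ' x} (h : F.In τ x F.ξ) (h' : F.In τ' x F.ξ) : τ = τ' := by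
  have h1 : F.ℓ τ x = F.ℓ τ' x := le_antisymm (F.ℓ_max h'.cone) (F.ℓ_max h.cone)
  apply F.ξ_inj
  have := le_antisymm (h'.ℓ_le h1) (h.ℓ_le h1.symm)
  rw [ℓ_apply, ℓ_apply] at this
  exact this

theorem In.unique_neg {F : Fan f} {τ τ' x} (h : F.In τ x (-F.ξ)) (h' : F.In τ' x (-F.ξ)) :
    τ = τ' := by
  have h1 : F.ℓ τ x = F.ℓ τ' x := le_antisymm (F.ℓ_max h'.cone) (F.ℓ_max h.cone)
  apply F.ξ_inj
  have := le_antisymm (h'.ℓ_le h1) (h.ℓ_le h1.symm)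
  rw [map_neg, map_neg, neg_inj, ℓ_apply, ℓ_apply] at this
  exact this

theorem exists_In_nonneg (x : Fin n → ℝ) (hx : ∀ i, 0 ≤ x i) : ∃ τ, F.In τ x F.ξ := by
  apply F.exists_In
  filter_upwards [self_mem_nhdsWithin] with ε hε i
  have : 0 < ε := hε
  have := mul_pos this (F.ξ_pos i)
  have := hx i
  simp; linarith

theorem exists_In_neg (x : Fin n → ℝ) (hx : ∀ i, 0 < x i) : ∃ τ, F.In τ x (-F.ξ) := by
  apply F.exists_In
  apply Filter.eventually_all.2
  intro i
  have := ev_pos (-F.ξ i) (hx i)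
  exact this.mono fun ε h => by simpa using h

theorem nonneg_of_cone {τ : F.ι} {x} (hx : x ∈ F.cone τ) (i) : 0 ≤ x i := by
  rw [← F.sum_c τ x, Finset.sum_apply]
  apply Finset.sum_nonneg
  intro k _
  rw [F.b_eq]
  exact mul_nonneg (hx k) (Nat.cast_nonneg _)

theorem toR_nonneg (v : Fin n →₀ ℕ) (i) : 0 ≤ toR v i := Nat.cast_nonneg _

noncomputable def tau (v : Fin n →₀ ℕ) : F.ι :=
  (F.exists_In_nonneg (toR v) (toR_nonneg v)).choose

theorem tau_In (v) : F.In (F.tau v) (toR v) F.ξ :=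
  (F.exists_In_nonneg (toR v) (toR_nonneg v)).choose_spec

theorem tau_eq {v τ} (h : F.In τ (toR v) F.ξ) : F.tau v = τ := (F.tau_In v).unique h

theorem nu_v (v) : nu f (toR v) = F.ℓ (F.tau v) (toR v) := F.nu_eq (F.tau_In v).cone

theorem ℓ_le_nu (τ) (v) : F.ℓ τ (toR v) ≤ nu f (toR v) := by
  rw [nu_v]; exact F.ℓ_max (F.tau_In v).cone

theorem finite_sublevel (F : Fan f) (α : ℝ) : {v : Fin n →₀ ℕ | nu f (toR v) ≤ α}.Finite := by
  let B : Fin n → ℕ := fun i => ⌈∑ τ : F.ι, ∑ k, |α| * (F.s τ k i : ℝ)⌉₊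
  have : {v : Fin n →₀ ℕ | nu f (toR v) ≤ α} ⊆ Set.Iic (Finsupp.equivFunOnFinite.symm B) := by
    intro v hv i
    have hv : nu f (toR v) ≤ α := hv
    rw [F.nu_v] at hv
    show v i ≤ B i
    have h : (v i : ℝ) ≤ ∑ τ : F.ι, ∑ k, |α| * (F.s τ k i : ℝ) := by
      have h1 : (v i : ℝ) = ∑ k, F.c (F.tau v) k (toR v) * (F.s (F.tau v) k i : ℝ) := by
        have := congrFun (F.sum_c (F.tau v) (toR v)) i
        rw [Finset.sum_apply] at this
        simp only [F.b_eq, Pi.smul_apply, smul_eq_mul] at this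
        exact this.symm
      rw [h1]
      have hc := (F.tau_In v).cone
      calc _ ≤ ∑ k, |α| * (F.s (F.tau v) k i : ℝ) := by
            apply Finset.sum_le_sum
            intro k _
            apply mul_le_mul_of_nonneg_right _ (Nat.cast_nonneg _)
            rw [ℓ_apply] at hv
            exact (Finset.single_le_sum (fun j _ => hc j) (Finset.mem_univ k)).trans
              (hv.trans (le_abs_self α))
        _ ≤ _ := Finset.single_le_sum (f := fun τ => ∑ k, |α| * (F.s τ k i : ℝ))
            (fun τ _ => Finset.sum_nonneg fun k _ => mul_nonneg (abs_nonneg _) (Nat.cast_nonneg _))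
            (Finset.mem_univ _)
    have := h.trans (Nat.le_ceil _)
    exact_mod_cast this
  exact (Set.finite_Iic _).subset this

end Fan
end TN

open MvPolynomial
set_option linter.all false
namespace TN
open ToricNewton Filter Topology

namespace Fan
variable {n : ℕ} {f : MvPolynomial (Fin n) ℂ} (F : Fan f)

noncomputable def K (τ : F.ι) : Finset (Fin n) := Finset.univ.filter fun k => F.c τ k F.ξ < 0

theorem mem_K {τ : F.ι} {k} : k ∈ F.K τ ↔ F.c τ k F.ξ < 0 := by simp [K]

/-- The face of the simplex `τ` opposite to the vertices in `L`. -/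
def face (τ : F.ι) (L : Finset (Fin n)) : Set (Fin n → ℝ) := convexHull ℝ (F.b τ '' (↑L : Set (Fin n))ᶜ)

theorem mem_face {τ : F.ι} {L : Finset (Fin n)} {x} : x ∈ F.face τ L ↔
    x ∈ F.cone τ ∧ F.ℓ τ x = 1 ∧ ∀ k ∈ L, F.c τ k x = 0 := by
  rw [face, mem_hull]; simp

theorem b_cone (τ : F.ι) (k) : F.b τ k ∈ F.cone τ := by
  intro j; rw [c_b]; split_ifs <;> norm_num

theorem b_mem_face {τ : F.ι} {L : Finset (Fin n)} {k} : F.b τ k ∈ F.face τ L ↔ k ∉ L := by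
  rw [mem_face]
  constructor
  · rintro ⟨_, _, h⟩ hk
    have := h k hk
    simp [c_b] at this
  · intro hk
    refine ⟨F.b_cone τ k, F.ℓ_b τ k, fun j hj => ?_⟩
    rw [c_b, if_neg]; rintro rfl; exact hk hj

theorem face_ext (τ : F.ι) (L : Finset (Fin n)) :
    (F.face τ L).extremePoints ℝ = F.b τ '' (↑L : Set (Fin n))ᶜ := hull_extreme _ _

theorem convex_union {E : Type*} [AddCommGroup E] [Module ℝ E] (l : E →ₗ[ℝ] ℝ) (C : Set E)
    (hC : Convex ℝ C) (hl : ∀ x ∈ C, l x = 1) : Convex ℝ ({x | l x < 1} ∪ C) := by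
  intro x hx y hy p q hp hq hpq
  rcases hp.eq_or_lt with rfl | hp
  · have : q = 1 := by linarith
    subst this; simpa using hy
  rcases hq.eq_or_lt with rfl | hq
  · have : p = 1 := by linarith
    subst this; simpa using hx
  have hq' : q = 1 - p := by linarith
  have le : ∀ z ∈ ({x | l x < 1} ∪ C), l z ≤ 1 := by
    rintro z (h | h)
    · exact le_of_lt h
    · exact (hl z h).le
  rcases hx with hx | hx
  · left
    have h1 : l x < 1 := hx
    have h2 := le y hy
    show l (p • x + q • y) < 1
    simp only [map_add, map_smul, smul_eq_mul]
    subst hq'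
    nlinarith
  · rcases hy with hy | hy
    · left
      have h1 : l y < 1 := hy
      have h2 := hl x hx
      show l (p • x + q • y) < 1
      simp only [map_add, map_smul, smul_eq_mul]
      subst hq'
      nlinarith
    · right
      exact hC hx hy hp.le hq.le hpq

theorem face_functional (τ : F.ι) (L : Finset (Fin n)) :
    ∃ l : (Fin n → ℝ) →ₗ[ℝ] ℝ, (∀ x ∈ newtonPolytope f, l x ≤ 1) ∧
      F.face τ L = {x ∈ newtonPolytope f | l x = 1} := by
  have hev : ∀ᶠ δ in 𝓝[>] (0:ℝ), ∀ m ∈ f.support, F.ℓ τ (toR m) < 1 →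
      F.ℓ τ (toR m) - δ * ∑ k ∈ L, F.c τ k (toR m) < 1 := by
    rw [Filter.eventually_all_finset]
    intro m _
    by_cases h : F.ℓ τ (toR m) < 1
    · have := ev_pos (∑ k ∈ L, F.c τ k (toR m)) (sub_pos.2 h)
      exact this.mono fun δ h _ => by linarith
    · exact Eventually.of_forall fun δ h' => absurd h' h
  obtain ⟨δ, h1, h2⟩ := (hev.and self_mem_nhdsWithin).exists
  have hδ : 0 < δ := h2
  let l : (Fin n → ℝ) →ₗ[ℝ] ℝ := F.ℓ τ - δ • ∑ k ∈ L, F.c τ k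
  have hl : ∀ x, l x = F.ℓ τ x - δ * ∑ k ∈ L, F.c τ k x := by
    intro x; simp [l, LinearMap.sum_apply]
  have hlC : ∀ x ∈ F.face τ L, l x = 1 := by
    intro x hx
    rw [mem_face] at hx
    rw [hl, hx.2.1, Finset.sum_eq_zero fun k hk => hx.2.2 k hk]; simp
  have hsub : newtonPolytope f ⊆ {x | l x < 1} ∪ F.face τ L := by
    apply convexHull_min _ (convex_union l _ (convex_convexHull ℝ _) hlC)
    rintro x (rfl | ⟨m, hm, rfl⟩)
    · left; show l 0 < 1; simp
    · rcases (F.ℓ_le τ m hm).lt_or_eq with h | h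
      · left
        show l _ < 1
        rw [hl]; exact h1 m hm h
      · have ht := F.ℓ_tight τ m hm h
        have hs : 0 ≤ ∑ k ∈ L, F.c τ k (toR m) := Finset.sum_nonneg fun k _ => ht k
        rcases hs.lt_or_eq with hs | hs
        · left
          show l _ < 1
          rw [hl, h]
          have := mul_pos hδ hs
          linarith
        · right
          apply F.mem_face.2
          refine ⟨ht, h, ?_⟩
          exact (Finset.sum_eq_zero_iff_of_nonneg fun k _ => ht k).1 hs.symm
  refine ⟨l, fun x hx => ?_, ?_⟩
  · rcases hsub hx with h | h
    · exact le_of_lt h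
    · exact (hlC x h).le
  · ext x
    constructor
    · intro hx
      exact ⟨F.hull_P _ _ hx, hlC x hx⟩
    · rintro ⟨h1, h2⟩
      rcases hsub h1 with h | h
      · exact absurd h2 (ne_of_lt h)
      · exact h

theorem facet_eq {τ : F.ι} {x} (hx : x ∈ newtonPolytope f) (h : F.ℓ τ x = 1) : x ∈ F.face τ ∅ := by
  have hsub : newtonPolytope f ⊆ {x | F.ℓ τ x < 1} ∪ F.face τ ∅ := by
    apply convexHull_min _ (convex_union _ _ (convex_convexHull ℝ _)
      fun x hx => (F.mem_face.1 hx).2.1)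
    rintro x (rfl | ⟨m, hm, rfl⟩)
    · left; show F.ℓ τ 0 < 1; simp
    · rcases (F.ℓ_le τ m hm).lt_or_eq with h | h
      · left; exact h
      · right
        apply F.mem_face.2
        exact ⟨F.ℓ_tight τ m hm h, h, by simp⟩
  rcases hsub hx with h' | h'
  · exact absurd h (ne_of_lt h')
  · exact h'

theorem face_NB (τ : F.ι) {L : Finset (Fin n)} (hL : L ≠ Finset.univ) : NBFace f (F.face τ L) := by
  obtain ⟨l, h1, h2⟩ := F.face_functional τ L
  refine ⟨⟨?_, l, 1, h1, h2⟩, ?_⟩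
  · have : ∃ k, k ∉ L := by
      by_contra hcon; push Not at hcon
      exact hL (Finset.eq_univ_iff_forall.2 hcon)
    obtain ⟨k, hk⟩ := this
    exact ⟨_, F.b_mem_face.2 hk⟩
  · rw [mem_face]; simp

theorem faceDim_face (τ : F.ι) {L : Finset (Fin n)} (hL : L ≠ Finset.univ) :
    n - 1 - faceDim (F.face τ L) = L.card := by
  classical
  have hlt : L.card < n := by
    have := (Finset.card_lt_iff_ne_univ L).2 hL
    simpa using this
  have h := (F.b τ).linearIndependent.affineIndependent.finrank_vectorSpan_image_finset
    (s := Lᶜ) (n := n - 1 - L.card) (by rw [Finset.card_compl]; simp; omega)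
  have : faceDim (F.face τ L) = n - 1 - L.card := by
    rw [faceDim, face, affineSpan_convexHull, direction_affineSpan, ← h]
    have : F.b τ '' (↑L)ᶜ = ↑(Finset.image (F.b τ) Lᶜ) := by simp
    rw [this]
  rw [this]; omega

theorem K_ne_univ (hn : 1 ≤ n) (τ : F.ι) {L : Finset (Fin n)} (hL : L ⊆ F.K τ) :
    L ≠ Finset.univ := by
  rintro rfl
  have : -F.ξ ∈ F.cone τ := by
    intro k
    have := F.mem_K.1 (hL (Finset.mem_univ k))
    rw [map_neg]; linarith
  have h1 := F.nonneg_of_cone this ⟨0, hn⟩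
  have h2 := F.ξ_pos ⟨0, hn⟩
  simp at h1; linarith

theorem bary_In {τ : F.ι} {L : Finset (Fin n)} (hL : L ⊆ F.K τ) {x} (hx : ∀ k, k ∉ L → 0 < F.c τ k x)
    (hx0 : ∀ k ∈ L, F.c τ k x = 0) : F.In τ x (-F.ξ) := by
  intro k
  by_cases hk : k ∈ L
  · right
    refine ⟨hx0 k hk, ?_⟩
    have := F.mem_K.1 (hL hk)
    rw [map_neg]; linarith
  · left; exact hx k hk

theorem c_bary (τ : F.ι) (L : Finset (Fin n)) (k) :
    F.c τ k (∑ j ∈ Finset.univ.filter (· ∉ L), F.b τ j) = if k ∈ L then 0 else 1 := by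
  rw [map_sum]
  simp only [c_b]
  rw [Finset.sum_ite_eq']
  by_cases h : k ∈ L <;> simp [h]

theorem In_neg_pos {τ : F.ι} {x} (h : F.In τ x (-F.ξ)) (i) : 0 < x i := by
  obtain ⟨ε, h1, h2⟩ := (h.ev.and self_mem_nhdsWithin).exists
  have h3 := F.nonneg_of_cone h1 i
  have : 0 < ε := h2
  have := mul_pos this (F.ξ_pos i)
  simp at h3
  linarith

theorem face_interior (hn : 1 ≤ n) (τ : F.ι) {L : Finset (Fin n)} (hL : L ⊆ F.K τ) :
    ¬ F.face τ L ⊆ coordHyperplanes (Fin n) := by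
  intro hsub
  set y := ∑ j ∈ Finset.univ.filter (· ∉ L), F.b τ j with hy
  have hIn : F.In τ y (-F.ξ) := by
    apply F.bary_In hL
    · intro k hk; rw [hy, c_bary, if_neg hk]; norm_num
    · intro k hk; rw [hy, c_bary, if_pos hk]
  have hpos := F.In_neg_pos hIn
  have hℓ : 0 < F.ℓ τ y := by
    rcases (F.ℓ_nonneg hIn.cone).lt_or_eq with h | h
    · exact h
    · have := F.eq_zero hIn.cone h.symm
      have h2 := hpos ⟨0, hn⟩
      rw [this] at h2; simp at h2
  have hmem : (F.ℓ τ y)⁻¹ • y ∈ F.face τ L := by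
    rw [mem_face]
    refine ⟨fun k => ?_, ?_, fun k hk => ?_⟩
    · rw [map_smul]; exact mul_nonneg (inv_nonneg.2 hℓ.le) (hIn.cone k)
    · rw [map_smul, smul_eq_mul, inv_mul_cancel₀ hℓ.ne']
    · rw [map_smul, hy, c_bary, if_pos hk]; simp
  have := hsub hmem
  simp only [coordHyperplanes, Set.mem_iUnion] at this
  obtain ⟨i, hi⟩ := this
  have hi : (F.ℓ τ y)⁻¹ * y i = 0 := hi
  have := mul_pos (inv_pos.2 hℓ) (hpos i)
  linarith

theorem P_nonneg {x} (hx : x ∈ newtonPolytope f) (i) : 0 ≤ x i := by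
  have : newtonPolytope f ⊆ {x | 0 ≤ x i} := by
    apply convexHull_min
    · rintro y (rfl | ⟨m, hm, rfl⟩)
      · show (0:ℝ) ≤ 0; exact le_rfl
      · exact toR_nonneg m i
    · exact convex_halfSpace_ge (LinearMap.proj (R := ℝ) (φ := fun _ : Fin n => ℝ) i).isLinear 0
  exact this hx

theorem face_surj (hsimp : ∀ Δ : Set (Fin n → ℝ), NBFace f Δ → IsSimplex Δ)
    {Δ : Set (Fin n → ℝ)} (hΔ : NBFace f Δ) (hinterior : ¬ Δ ⊆ coordHyperplanes (Fin n)) :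
    ∃ τ, ∃ L ⊆ F.K τ, Δ = F.face τ L := by
  classical
  obtain ⟨k, p, -, hp⟩ := hsimp Δ hΔ
  obtain ⟨⟨-, l, c, hle, hΔe⟩, h0⟩ := hΔ
  have hc : 0 < c := by
    have h1 := hle 0 zero_mem_P
    rw [map_zero] at h1
    rcases h1.lt_or_eq with h | h
    · exact h
    · exfalso; apply h0; rw [hΔe]; exact ⟨zero_mem_P, by rw [map_zero, h]⟩
  have hpΔ : ∀ j, p j ∈ Δ := fun j => by rw [hp]; exact subset_convexHull ℝ _ ⟨j, rfl⟩
  have hΔP : Δ ⊆ newtonPolytope f := by rw [hΔe]; exact fun x hx => hx.1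
  have hΔl : ∀ x ∈ Δ, l x = c := by rw [hΔe]; exact fun x hx => hx.2
  have hk : (0:ℝ) < ((k:ℝ) + 1)⁻¹ := by positivity
  set x : Fin n → ℝ := ∑ j, ((k:ℝ) + 1)⁻¹ • p j with hx
  have hxΔ : x ∈ Δ := by
    rw [hp]
    apply (convex_convexHull ℝ _).sum_mem (fun _ _ => hk.le)
    · simp; field_simp
    · intro j _; exact subset_convexHull ℝ _ ⟨j, rfl⟩
  -- averaging principle
  have avg : ∀ (g : (Fin n → ℝ) →ₗ[ℝ] ℝ), (∀ j, 0 ≤ g (p j)) → g x = 0 → ∀ j, g (p j) = 0 := by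
    intro g hg hgx j
    rw [hx, map_sum] at hgx
    simp only [map_smul, smul_eq_mul] at hgx
    rw [Finset.sum_eq_zero_iff_of_nonneg (fun j _ => mul_nonneg hk.le (hg j))] at hgx
    have := hgx j (Finset.mem_univ j)
    exact (mul_eq_zero.1 this).resolve_left hk.ne'
  have hxpos : ∀ i, 0 < x i := by
    intro i
    rcases (P_nonneg (hΔP hxΔ) i).lt_or_eq with h | h
    · exact h
    exfalso
    apply hinterior
    have h2 := avg (LinearMap.proj i) (fun j => P_nonneg (hΔP (hpΔ j)) i) h.symm
    have : Δ ⊆ {y | y i = 0} := by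
      rw [hp]
      apply convexHull_min
      · rintro _ ⟨j, rfl⟩; exact h2 j
      · exact convex_hyperplane (LinearMap.proj (R := ℝ) (φ := fun _ : Fin n => ℝ) i).isLinear 0
    intro y hy
    exact Set.mem_iUnion.2 ⟨i, this hy⟩
  obtain ⟨τ, hτ⟩ := F.exists_In_neg x hxpos
  let L := Finset.univ.filter fun k => F.c τ k x = 0
  have hLK : L ⊆ F.K τ := by
    intro k hk
    have hk : F.c τ k x = 0 := by simpa [L] using hk
    rcases hτ k with h | h
    · linarith
    · rw [mem_K]
      have h1 := h.2
      rw [map_neg] at h1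
      exact lt_of_le_of_ne (by linarith) (F.ξ_ne τ k)
  have hlb : ∀ k, l (F.b τ k) ≤ c := fun k => hle _ (F.b_P τ k)
  have hlx : ∑ k, F.c τ k x * (c - l (F.b τ k)) = c * F.ℓ τ x - c := by
    have h1 := hΔl x hxΔ
    rw [← F.sum_c τ x, map_sum] at h1
    simp only [map_smul, smul_eq_mul] at h1
    rw [ℓ_apply]
    simp only [mul_sub, Finset.sum_sub_distrib]
    rw [h1, ← Finset.sum_mul, mul_comm]
  have hnn : ∀ k ∈ Finset.univ, 0 ≤ F.c τ k x * (c - l (F.b τ k)) :=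
    fun k _ => mul_nonneg (hτ.cone k) (by linarith [hlb k])
  have hℓx : F.ℓ τ x = 1 := by
    apply le_antisymm (F.ℓ_P τ (hΔP hxΔ))
    have := Finset.sum_nonneg hnn
    rw [hlx] at this
    nlinarith
  rw [hℓx, mul_one, sub_self, Finset.sum_eq_zero_iff_of_nonneg hnn] at hlx
  refine ⟨τ, L, hLK, ?_⟩
  apply Set.Subset.antisymm
  · rw [hp]
    apply convexHull_min _ (convex_convexHull ℝ _)
    rintro _ ⟨j, rfl⟩
    have hℓp : ∀ j, F.ℓ τ (p j) = 1 := by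
      intro j
      have h1 : ∀ j, F.ℓ τ (p j) ≤ 1 := fun j => F.ℓ_P τ (hΔP (hpΔ j))
      have h2 : ∑ j, ((k:ℝ) + 1)⁻¹ * (1 - F.ℓ τ (p j)) = 0 := by
        have h3 := hℓx
        rw [hx, map_sum] at h3
        simp only [map_smul, smul_eq_mul] at h3
        simp only [mul_sub, Finset.sum_sub_distrib, h3]
        simp; field_simp; simp
      rw [Finset.sum_eq_zero_iff_of_nonneg
        (fun j _ => mul_nonneg hk.le (by linarith [h1 j]))] at h2
      have := (mul_eq_zero.1 (h2 j (Finset.mem_univ j))).resolve_left hk.ne'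
      linarith
    have hcone : ∀ j, p j ∈ F.cone τ := fun j =>
      (F.mem_face.1 (F.facet_eq (hΔP (hpΔ j)) (hℓp j))).1
    apply F.mem_face.2
    refine ⟨hcone j, hℓp j, fun i hi => ?_⟩
    exact avg (F.c τ i) (fun j => hcone j i) (by simpa [L] using hi) j
  · apply convexHull_min
    · rintro _ ⟨j, hj, rfl⟩
      rw [hΔe]
      refine ⟨F.b_P τ j, ?_⟩
      have h1 := hlx j (Finset.mem_univ j)
      have h2 : F.c τ j x ≠ 0 := by
        intro h; apply hj; simp [L, h]
      have := (mul_eq_zero.1 h1).resolve_left h2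
      linarith
    · rw [hp]; exact convex_convexHull ℝ _

theorem face_inj {τ τ' : F.ι} {L L' : Finset (Fin n)} (hL : L ⊆ F.K τ) (hL' : L' ⊆ F.K τ')
    (h : F.face τ L = F.face τ' L') : τ = τ' ∧ L = L' := by
  set y := ∑ j ∈ Finset.univ.filter (· ∉ L), F.b τ j with hy
  have hIn : F.In τ y (-F.ξ) := by
    apply F.bary_In hL
    · intro k hk; rw [hy, c_bary, if_neg hk]; norm_num
    · intro k hk; rw [hy, c_bary, if_pos hk]
  have hb : ∀ j, j ∉ L → F.b τ j ∈ F.face τ' L' := fun j hj => by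
    rw [← h]; exact F.b_mem_face.2 hj
  have hIn' : F.In τ' y (-F.ξ) := by
    apply F.bary_In hL'
    · intro k' hk'
      have h1 : F.b τ' k' ∈ F.b τ '' (↑L : Set (Fin n))ᶜ := by
        rw [← face_ext, h, face_ext]; exact ⟨k', hk', rfl⟩
      obtain ⟨k, hk, hkk⟩ := h1
      rw [hy, map_sum]
      apply Finset.sum_pos'
      · intro j hj
        exact (F.mem_face.1 (hb j (by simpa using hj))).1 k'
      · refine ⟨k, by simpa using hk, ?_⟩
        rw [hkk, c_b]; simp
    · intro k' hk'
      rw [hy, map_sum]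
      apply Finset.sum_eq_zero
      intro j hj
      exact (F.mem_face.1 (hb j (by simpa using hj))).2.2 k' hk'
  have hτ := hIn.unique_neg hIn'
  subst hτ
  refine ⟨rfl, ?_⟩
  ext k
  rw [← not_iff_not, ← F.b_mem_face, ← F.b_mem_face, h]

theorem mem_cone0 {τ : F.ι} {L : Finset (Fin n)} (hL : L ≠ Finset.univ) {x} :
    x ∈ cone0 (F.face τ L) ↔ x ∈ F.cone τ ∧ ∀ k ∈ L, F.c τ k x = 0 := by
  constructor
  · rintro ⟨t, ht, y, hy, rfl⟩
    rw [mem_face] at hy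
    refine ⟨fun k => ?_, fun k hk => ?_⟩
    · rw [map_smul]; exact mul_nonneg ht (hy.1 k)
    · rw [map_smul, hy.2.2 k hk]; simp
  · rintro ⟨h1, h2⟩
    rcases (F.ℓ_nonneg h1).lt_or_eq with h | h
    · refine ⟨F.ℓ τ x, h.le, (F.ℓ τ x)⁻¹ • x, ?_, ?_⟩
      · rw [mem_face]
        refine ⟨fun k => ?_, ?_, fun k hk => ?_⟩
        · rw [map_smul]; exact mul_nonneg (inv_nonneg.2 h.le) (h1 k)
        · rw [map_smul, smul_eq_mul, inv_mul_cancel₀ h.ne']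
        · rw [map_smul, h2 k hk]; simp
      · rw [smul_smul, mul_inv_cancel₀ h.ne', one_smul]
    · obtain ⟨y, hy⟩ := (F.face_NB τ hL).1.1
      refine ⟨0, le_rfl, y, hy, ?_⟩
      rw [F.eq_zero h1 h.symm]; simp

noncomputable def KZ (τ : F.ι) (x : Fin n → ℝ) : Finset (Fin n) :=
  (F.K τ).filter fun k => F.c τ k x = 0

open Classical in
theorem Evstar_eq (hn : 1 ≤ n) (hsimp : ∀ Δ : Set (Fin n → ℝ), NBFace f Δ → IsSimplex Δ)
    (v : Fin n → ℕ) :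
    Evstar f v = ∑ τ ∈ Finset.univ.filter (fun τ => natToR v ∈ F.cone τ),
      (Polynomial.X : Polynomial ℤ) ^ (F.KZ τ (natToR v)).card := by
  let S : Finset (Σ _ : F.ι, Finset (Fin n)) :=
    (Finset.univ.filter (fun τ => natToR v ∈ F.cone τ)).sigma
      fun τ => (F.KZ τ (natToR v)).powerset
  have hS : ∀ p : Σ _ : F.ι, Finset (Fin n), p ∈ S ↔ natToR v ∈ F.cone p.1 ∧ p.2 ⊆ F.K p.1 ∧
      ∀ k ∈ p.2, F.c p.1 k (natToR v) = 0 := by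
    intro p
    simp only [S, Finset.mem_sigma, Finset.mem_filter, Finset.mem_univ, true_and,
      Finset.mem_powerset, KZ]
    apply and_congr_right
    intro _
    constructor
    · intro h
      exact ⟨fun k hk => (Finset.mem_filter.1 (h hk)).1, fun k hk => (Finset.mem_filter.1 (h hk)).2⟩
    · rintro ⟨h1, h2⟩ k hk
      exact Finset.mem_filter.2 ⟨h1 hk, h2 k hk⟩
  have hset : {Δ : Set (Fin n → ℝ) | NBFace f Δ ∧ ¬ Δ ⊆ coordHyperplanes (Fin n) ∧
      natToR v ∈ cone0 Δ} = (fun p : Σ _ : F.ι, Finset (Fin n) => F.face p.1 p.2) '' (S : Set _) := by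
    ext Δ
    constructor
    · rintro ⟨h1, h2, h3⟩
      obtain ⟨τ, L, hL, rfl⟩ := F.face_surj hsimp h1 h2
      rw [F.mem_cone0 (F.K_ne_univ hn τ hL)] at h3
      exact ⟨⟨τ, L⟩, (hS _).2 ⟨h3.1, hL, h3.2⟩, rfl⟩
    · rintro ⟨⟨τ, L⟩, h, rfl⟩
      obtain ⟨h1, h2, h3⟩ := (hS _).1 h
      exact ⟨F.face_NB τ (F.K_ne_univ hn τ h2), F.face_interior hn τ h2,
        (F.mem_cone0 (F.K_ne_univ hn τ h2)).2 ⟨h1, h3⟩⟩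
  have hinj : Set.InjOn (fun p : Σ _ : F.ι, Finset (Fin n) => F.face p.1 p.2) (S : Set _) := by
    rintro ⟨τ, L⟩ h ⟨τ', L'⟩ h' he
    obtain ⟨rfl, rfl⟩ := F.face_inj ((hS _).1 h).2.1 ((hS _).1 h').2.1 he
    rfl
  have h1 : Evstar f v = ∑ᶠ Δ ∈ {Δ : Set (Fin n → ℝ) | NBFace f Δ ∧ ¬ Δ ⊆ coordHyperplanes (Fin n) ∧
      natToR v ∈ cone0 Δ}, (Polynomial.X - 1 : Polynomial ℤ) ^ (n - 1 - faceDim Δ) := by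
    rw [Evstar]
    simp only [Fintype.card_fin]
    rfl
  rw [h1, hset, finsum_mem_image hinj, finsum_mem_coe_finset, Finset.sum_sigma]
  apply Finset.sum_congr rfl
  intro τ hτ
  have h2 : ∀ L ∈ (F.KZ τ (natToR v)).powerset,
      (Polynomial.X - 1 : Polynomial ℤ) ^ (n - 1 - faceDim (F.face τ L)) =
      (Polynomial.X - 1) ^ L.card * 1 ^ ((F.KZ τ (natToR v)).card - L.card) := by
    intro L hL
    have : L ⊆ F.K τ := (Finset.mem_powerset.1 hL).trans (Finset.filter_subset _ _)
    rw [F.faceDim_face τ (F.K_ne_univ hn τ this), one_pow, mul_one]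
  rw [Finset.sum_congr rfl h2, Finset.sum_pow_mul_eq_add_pow]
  simp

/-- common vertices -/
theorem match_coord {τ τ' : F.ι} {x} (hx : x ∈ F.cone τ) (hx' : x ∈ F.cone τ') (i : Fin n) :
    F.c τ i x = 0 ∨ ∃ k, F.b τ i = F.b τ' k ∧ F.c τ i x = F.c τ' k x := by
  have hv : ∀ k, F.c τ' k x ≠ 0 → ∃ j, F.b τ j = F.b τ' k := by
    intro k hk
    have h1 : F.ℓ τ x = F.ℓ τ' x := le_antisymm (F.ℓ_max hx') (F.ℓ_max hx)
    have h2 : ∑ k, F.c τ' k x * (1 - F.ℓ τ (F.b τ' k)) = 0 := by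
      simp only [mul_sub, Finset.sum_sub_distrib, mul_one]
      rw [← ℓ_apply, ← h1]
      conv_lhs => enter [1]; rw [← F.sum_c τ' x, map_sum]
      simp
    rw [Finset.sum_eq_zero_iff_of_nonneg (fun k _ => mul_nonneg (hx' k)
      (by linarith [F.ℓ_P τ (F.b_P τ' k)]))] at h2
    have h3 := (mul_eq_zero.1 (h2 k (Finset.mem_univ k))).resolve_left hk
    have h4 := F.facet_eq (F.b_P τ' k) (τ := τ) (by linarith)
    have h5 : F.b τ' k ∈ (newtonPolytope f).extremePoints ℝ := by
      obtain ⟨l, hl1, hl2⟩ := F.face_functional τ' ∅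
      apply face_extreme hl1
      rw [← hl2, face_ext]
      exact ⟨k, by simp, rfl⟩
    have h6 : F.b τ' k ∈ (F.face τ ∅).extremePoints ℝ :=
      inter_extremePoints_subset_extremePoints_of_subset (F.hull_P _ _) ⟨h4, h5⟩
    rw [face_ext] at h6
    obtain ⟨j, -, hj⟩ := h6
    exact ⟨j, hj⟩
  by_cases hi : ∃ k, F.b τ i = F.b τ' k
  · right
    obtain ⟨k, hk⟩ := hi
    refine ⟨k, hk, ?_⟩
    conv_lhs => rw [← F.sum_c τ' x, map_sum]
    rw [Finset.sum_eq_single k]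
    · rw [map_smul, ← hk, c_b]; simp
    · intro j _ hj
      rw [map_smul]
      by_cases h0 : F.c τ' j x = 0
      · simp [h0]
      · obtain ⟨j', hj'⟩ := hv j h0
        rw [← hj', c_b, if_neg]; simp
        rintro rfl
        exact hj ((F.b τ').injective (hj'.symm.trans hk))
    · simp
  · left
    conv_lhs => rw [← F.sum_c τ' x, map_sum]
    apply Finset.sum_eq_zero
    intro j _
    rw [map_smul]
    by_cases h0 : F.c τ' j x = 0
    · simp [h0]
    · obtain ⟨j', hj'⟩ := hv j h0
      rw [← hj', c_b, if_neg]; simp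
      rintro rfl
      exact hi ⟨j, hj'⟩

theorem mem_BoxP (hn : 1 ≤ n) (hsimp : ∀ Δ : Set (Fin n → ℝ), NBFace f Δ → IsSimplex Δ)
    {τ : F.ι} {x} (hx : x ∈ F.cone τ) : x ∈ BoxP f ↔ ∀ k, F.c τ k x < 1 := by
  classical
  constructor
  · intro h i
    simp only [BoxP, Set.mem_iUnion] at h
    obtain ⟨Δ, ⟨h1, h2⟩, s, hs, q, hq, hxs⟩ := h
    obtain ⟨τ', L, hL, rfl⟩ := F.face_surj hsimp h1 h2
    rw [face_ext] at hs
    have hc : ∀ k, F.c τ' k x = if F.b τ' k ∈ s then q (F.b τ' k) else 0 := by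
      intro k
      rw [hxs, map_sum]
      rw [← Finset.sum_ite_eq' s (F.b τ' k) q]
      apply Finset.sum_congr rfl
      intro y hy
      obtain ⟨j, -, rfl⟩ := hs hy
      rw [map_smul, c_b]
      simp [(F.b τ').injective.eq_iff]
    have hx' : x ∈ F.cone τ' := by
      intro k; rw [hc]; split_ifs with h
      · exact (hq _ h).1
      · exact le_rfl
    rcases F.match_coord hx hx' i with h | ⟨k, -, h⟩
    · rw [h]; norm_num
    · rw [h, hc]
      split_ifs with h
      · exact (hq _ h).2
      · norm_num
  · intro h
    simp only [BoxP, Set.mem_iUnion]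
    have : Nonempty (Fin n) := ⟨⟨0, hn⟩⟩
    refine ⟨F.face τ ∅, ⟨F.face_NB τ (F.K_ne_univ hn τ (Finset.empty_subset _)),
      F.face_interior hn τ (Finset.empty_subset _)⟩, Finset.univ.image (F.b τ), ?_, 
      fun y => F.c τ (Function.invFun (F.b τ) y) x, ?_, ?_⟩
    · rw [face_ext]; simp
    · intro y hy
      exact ⟨hx _, h _⟩
    · rw [Finset.sum_image (fun a _ b _ h => (F.b τ).injective h)]
      have : ∀ k, Function.invFun (F.b τ) (F.b τ k) = k := by
        intro k
        have : Nonempty (Fin n) := ⟨k⟩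
        exact Function.leftInverse_invFun (F.b τ).injective k
      simp only [this]
      exact (F.sum_c τ x).symm

end Fan
end TN

open MvPolynomial
set_option linter.all false
namespace TN
open ToricNewton Filter Topology

theorem toR_add {n : ℕ} (a b : Fin n →₀ ℕ) : toR (a + b) = toR a + toR b := by
  ext i; simp [toR]
theorem toR_zero {n : ℕ} : toR (0 : Fin n →₀ ℕ) = 0 := by
  ext i; simp [toR]
theorem toR_inj {n : ℕ} {a b : Fin n →₀ ℕ} (h : toR a = toR b) : a = b := by
  ext i; have := congrFun h i; simpa [toR] using this
theorem toR_nsmul {n : ℕ} (k : ℕ) (a : Fin n →₀ ℕ) : toR (k • a) = (k : ℝ) • toR a := by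
  ext i; simp [toR]
theorem toR_sum {n : ℕ} {κ : Type*} (s : Finset κ) (a : κ → (Fin n →₀ ℕ)) :
    toR (∑ k ∈ s, a k) = ∑ k ∈ s, toR (a k) := by
  classical
  induction s using Finset.induction_on with
  | empty => simp [toR_zero]
  | insert x s hx ih => rw [Finset.sum_insert hx, Finset.sum_insert hx, toR_add, ih]

namespace Fan
variable {n : ℕ} {f : MvPolynomial (Fin n) ℂ} (F : Fan f)

/-- lattice combination of the generators of a cone -/
noncomputable def comb (τ : F.ι) (a : Fin n → ℕ) : Fin n →₀ ℕ := ∑ k, a k • F.s τ k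

theorem toR_comb (τ : F.ι) (a) : toR (F.comb τ a) = ∑ k, (a k : ℝ) • F.b τ k := by
  rw [comb, toR_sum]
  simp only [toR_nsmul, F.b_eq]

theorem c_comb (τ : F.ι) (a k) : F.c τ k (toR (F.comb τ a)) = a k := by
  rw [toR_comb, map_sum]
  simp [c_b]

theorem ℓ_comb (τ : F.ι) (a) : F.ℓ τ (toR (F.comb τ a)) = ∑ k, (a k : ℝ) := by
  rw [ℓ_apply]; simp only [c_comb]

theorem exists_sub (τ : F.ι) (v : Fin n →₀ ℕ) (a : Fin n → ℕ)
    (h : ∀ k, (a k : ℝ) ≤ F.c τ k (toR v)) : ∃ u, u + F.comb τ a = v := by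
  have hle : F.comb τ a ≤ v := by
    intro i
    have hc : toR v - toR (F.comb τ a) ∈ F.cone τ := by
      intro k
      rw [map_sub, c_comb]; linarith [h k]
    have := F.nonneg_of_cone hc i
    simp only [Pi.sub_apply, toR, sub_nonneg, Nat.cast_le] at this
    exact this
  exact ⟨v - F.comb τ a, tsub_add_cancel_of_le hle⟩

/-- the half-open box condition -/
def HB (τ : F.ι) (x : Fin n → ℝ) : Prop :=
  ∀ k, (k ∈ F.K τ → 0 < F.c τ k x ∧ F.c τ k x ≤ 1) ∧ (k ∉ F.K τ → 0 ≤ F.c τ k x ∧ F.c τ k x < 1)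

theorem In_iff (τ : F.ι) (x) : F.In τ x F.ξ ↔
    ∀ k, 0 ≤ F.c τ k x ∧ (k ∈ F.K τ → 0 < F.c τ k x) := by
  apply forall_congr'
  intro k
  rw [mem_K]
  constructor
  · rintro (h | h)
    · exact ⟨h.le, fun _ => h⟩
    · exact ⟨h.1.ge, fun h' => absurd h.2 (not_le.2 h')⟩
  · rintro ⟨h1, h2⟩
    rcases h1.lt_or_eq with h | h
    · exact Or.inl h
    · right
      refine ⟨h.symm, ?_⟩
      by_contra hcon
      have := h2 (not_le.1 hcon)
      linarith

theorem HB.In {F : Fan f} {τ x} (h : F.HB τ x) : F.In τ x F.ξ := by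
  rw [In_iff]
  intro k
  by_cases hk : k ∈ F.K τ
  · exact ⟨((h k).1 hk).1.le, fun _ => ((h k).1 hk).1⟩
  · exact ⟨((h k).2 hk).1, fun h => absurd h hk⟩

theorem finsum_inner {κ : Type*} (S : Finset κ) (e : κ → ℕ) (α ν : ℝ) :
    ∑ᶠ j : ℕ, (if α = ν + (j : ℝ) then
      (∑ τ ∈ S, (Polynomial.X : Polynomial ℤ) ^ e τ).coeff j else 0) =
    ∑ τ ∈ S, if α = ν + (e τ : ℝ) then 1 else 0 := by
  by_cases h : ∃ j : ℕ, α = ν + j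
  · obtain ⟨j, rfl⟩ := h
    rw [finsum_eq_single _ j]
    · simp only [if_true, Polynomial.finset_sum_coeff, Polynomial.coeff_X_pow]
      apply Finset.sum_congr rfl
      intro τ _
      have : (ν + (j:ℝ) = ν + (e τ : ℝ)) ↔ j = e τ := by
        rw [add_right_inj, Nat.cast_inj]
      simp only [this]
    · intro j' hj'
      rw [if_neg]
      rw [add_right_inj, Nat.cast_inj]
      exact hj'.symm
  · push Not at h
    simp [h]

open Classical in
theorem rhs_eq (hn : 1 ≤ n) (hsimp : ∀ Δ : Set (Fin n → ℝ), NBFace f Δ → IsSimplex Δ) (α : ℝ) :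
    (∑ᶠ (v : Fin n → ℕ) (_ : natToR v ∈ BoxP f), ∑ᶠ j : ℕ,
        if α = nu f (natToR v) + (j : ℝ) then (Evstar f v).coeff j else 0) =
    ({u : Fin n →₀ ℕ | nu f (toR u) = α ∧ F.HB (F.tau u) (toR u)}.ncard : ℤ) := by
  let U : Set (Fin n →₀ ℕ) := {u | nu f (toR u) = α ∧ F.HB (F.tau u) (toR u)}
  have hU : U.Finite := (F.finite_sublevel α).subset fun u hu => hu.1.le
  -- pairs
  let W : Set ((Fin n →₀ ℕ) × F.ι) := {p | toR p.1 ∈ F.cone p.2 ∧ (∀ k, F.c p.2 k (toR p.1) < 1) ∧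
    α = nu f (toR p.1) + ((F.KZ p.2 (toR p.1)).card : ℝ)}
  let ind : F.ι → (Fin n → ℝ) → Fin n → ℕ := fun τ x k => if k ∈ F.KZ τ x then 1 else 0
  let g : (Fin n →₀ ℕ) × F.ι → (Fin n →₀ ℕ) := fun p => p.1 + F.comb p.2 (ind p.2 (toR p.1))
  have hcg : ∀ p k, F.c p.2 k (toR (g p)) =
      F.c p.2 k (toR p.1) + if k ∈ F.KZ p.2 (toR p.1) then 1 else 0 := by
    intro p k
    simp only [g, toR_add, map_add, c_comb, ind]
    split_ifs <;> simp
  have hHB : ∀ p ∈ W, F.HB p.2 (toR (g p)) := by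
    rintro p ⟨h1, h2, h3⟩ k
    have h1k := h1 k
    have h2k := h2 k
    rw [hcg]
    constructor
    · intro hk
      by_cases hkz : k ∈ F.KZ p.2 (toR p.1)
      · have := (Finset.mem_filter.1 hkz).2
        rw [if_pos hkz, this]; norm_num
      · rw [if_neg hkz, add_zero]
        refine ⟨lt_of_le_of_ne h1k ?_, h2k.le⟩
        intro h; exact hkz (Finset.mem_filter.2 ⟨hk, h.symm⟩)
    · intro hk
      have hkz : k ∉ F.KZ p.2 (toR p.1) := fun h => hk (Finset.mem_filter.1 h).1
      rw [if_neg hkz, add_zero]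
      exact ⟨h1k, h2k⟩
  have htau : ∀ p ∈ W, F.tau (g p) = p.2 := fun p hp => F.tau_eq (hHB p hp).In
  have hbij : Set.BijOn g W U := by
    refine ⟨?_, ?_, ?_⟩
    · intro p hp
      refine ⟨?_, ?_⟩
      · rw [F.nu_v, htau p hp, hp.2.2, F.nu_eq hp.1]
        simp only [g, toR_add, map_add, ℓ_comb, ind]
        simp
      · rw [htau p hp]; exact hHB p hp
    · rintro ⟨v, τ⟩ hp ⟨v', τ'⟩ hp' h
      have h1 : τ = τ' := by
        have h2 := htau _ hp
        have h3 := htau _ hp'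
        rw [h] at h2
        exact h2.symm.trans h3
      subst h1
      have h4 : toR v = toR v' := by
        apply F.ext_c τ
        intro k
        have h5 := hcg (v, τ) k
        have h6 := hcg (v', τ) k
        rw [h] at h5
        rw [h6] at h5
        have a1 := hp.2.1 k
        have a2 := hp'.2.1 k
        have a3 := hp.1 k
        have a4 := hp'.1 k
        simp only at h5 a1 a2 a3 a4
        split_ifs at h5 <;> linarith
      rw [toR_inj h4]
    · rintro u ⟨hu1, hu2⟩
      set τ := F.tau u with hτ
      obtain ⟨v, hv⟩ := F.exists_sub τ u (fun k => if k ∈ F.K τ ∧ F.c τ k (toR u) = 1 then 1 else 0) (by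
        intro k
        split_ifs with h
        · rw [h.2]; simp
        · simpa using hu2.In.cone k)
      have hcv : ∀ k, F.c τ k (toR v) = F.c τ k (toR u) -
          if k ∈ F.K τ ∧ F.c τ k (toR u) = 1 then 1 else 0 := by
        intro k
        have h := congrArg (fun w => F.c τ k (toR w)) hv
        simp only [toR_add, map_add, c_comb] at h
        push_cast at h
        linarith
      have hu2' := hu2.In.cone
      have hKZ : ∀ k, k ∈ F.KZ τ (toR v) ↔ k ∈ F.K τ ∧ F.c τ k (toR u) = 1 := by
        intro k
        rw [KZ, Finset.mem_filter, hcv k]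
        constructor
        · rintro ⟨h1, h2⟩
          refine ⟨h1, ?_⟩
          by_contra h3
          rw [if_neg (fun h => h3 h.2)] at h2
          linarith [((hu2 k).1 h1).1]
        · intro h
          rw [if_pos h, h.2]
          exact ⟨h.1, sub_self _⟩
      have hgv : g (v, τ) = u := by
        rw [← hv]
        simp only [g, ind, hKZ]
      have hcone : toR v ∈ F.cone τ := by
        intro k
        rw [hcv]
        split_ifs with h
        · rw [h.2]; simp
        · simpa using hu2' k
      refine ⟨(v, τ), ⟨hcone, ?_, ?_⟩, hgv⟩
      · intro k
        show F.c τ k (toR v) < 1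
        rw [hcv]
        split_ifs with h
        · rw [h.2]; simp
        · rw [sub_zero]
          by_cases hk : k ∈ F.K τ
          · refine lt_of_le_of_ne ((hu2 k).1 hk).2 ?_
            intro h'; exact h ⟨hk, h'⟩
          · exact ((hu2 k).2 hk).2
      · show α = nu f (toR v) + ((F.KZ τ (toR v)).card : ℝ)
        rw [F.nu_eq hcone, ← hu1, F.nu_v, ← hτ]
        have := congrArg (fun w => F.ℓ τ (toR w)) hgv
        simp only [g, toR_add, map_add, ℓ_comb, ind] at this
        rw [← this]
        simp
  have hW : W.Finite := by
    apply Set.Finite.of_finite_image _ hbij.injOn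
    rw [hbij.image_eq]; exact hU
  have hcard : W.ncard = U.ncard := by
    rw [← hbij.image_eq, Set.ncard_image_of_injOn hbij.injOn]
  have hterm : ∀ v : Fin n → ℕ, (∑ᶠ (_ : natToR v ∈ BoxP f), ∑ᶠ j : ℕ,
        if α = nu f (natToR v) + (j : ℝ) then (Evstar f v).coeff j else 0) =
        ∑ τ : F.ι, if (Finsupp.equivFunOnFinite.symm v, τ) ∈ W then (1 : ℤ) else 0 := by
    intro v
    have hv : natToR v = toR (Finsupp.equivFunOnFinite.symm v) := by
      ext i; simp [natToR, toR]
    by_cases hB : natToR v ∈ BoxP f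
    · rw [finsum_eq_if, if_pos hB, F.Evstar_eq hn hsimp, finsum_inner, Finset.sum_filter]
      apply Finset.sum_congr rfl
      intro τ _
      rw [← ite_and]
      apply if_congr _ rfl rfl
      show _ ↔ _ ∧ _ ∧ _
      rw [← hv]
      constructor
      · rintro ⟨h1, h2⟩
        exact ⟨h1, (F.mem_BoxP hn hsimp h1).1 hB, h2⟩
      · rintro ⟨h1, _, h2⟩
        exact ⟨h1, h2⟩
    · rw [finsum_eq_if, if_neg hB]
      symm
      apply Finset.sum_eq_zero
      intro τ _
      rw [if_neg]
      rintro ⟨h1, h2, _⟩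
      apply hB
      rw [hv]
      exact (F.mem_BoxP hn hsimp h1).2 h2
  simp only [hterm]
  rw [finsum_comp_equiv (Finsupp.equivFunOnFinite.symm : (Fin n → ℕ) ≃ (Fin n →₀ ℕ))
    (f := fun u => ∑ τ : F.ι, if (u, τ) ∈ W then (1 : ℤ) else 0)]
  rw [finsum_eq_sum_of_support_subset (s := hW.toFinset.image Prod.fst)]
  · rw [← Finset.sum_product', Finset.sum_boole, ← hcard]
    congr 1
    rw [← Set.ncard_coe_finset]
    congr 1
    ext p
    simp only [Finset.coe_filter, Finset.mem_product, Finset.mem_image, Set.Finite.mem_toFinset,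
      Finset.mem_univ, and_true]
    constructor
    · exact fun h => h.2
    · exact fun h => ⟨⟨p, h, rfl⟩, h⟩
  · intro u hu
    rw [Function.mem_support] at hu
    obtain ⟨τ, _, h⟩ := Finset.exists_ne_zero_of_sum_ne_zero hu
    have h' : (u, τ) ∈ W := by
      by_contra hc
      rw [if_neg hc] at h; exact h rfl
    simp only [Finset.coe_image, Set.Finite.coe_toFinset]
    exact ⟨_, h', rfl⟩

end Fan
end TN

open MvPolynomial
set_option linter.all false
namespace TN
open ToricNewton Filter Topology

theorem t_eq {n : ℕ} (f : MvPolynomial (Fin n) ℂ) (i : Fin n) :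
    X i * pderiv i f = ∑ m ∈ f.support, monomial m ((m i : ℂ) * f.coeff m) := by
  conv_lhs => rw [f.as_sum]
  rw [map_sum, Finset.mul_sum]
  apply Finset.sum_congr rfl
  intro m _
  rw [X_mul_pderiv_monomial]
  rw [smul_monomial, nsmul_eq_mul]

theorem coeff_t {n : ℕ} (f : MvPolynomial (Fin n) ℂ) (i : Fin n) (m) :
    coeff m (X i * pderiv i f) = (m i : ℂ) * f.coeff m := by
  classical
  rw [t_eq, coeff_sum]
  simp only [coeff_monomial]
  rw [Finset.sum_ite_eq']
  split_ifs with h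
  · rfl
  · rw [notMem_support_iff.1 h, mul_zero]

open Classical in
theorem faceRestrict_t {n : ℕ} (f : MvPolynomial (Fin n) ℂ) (i : Fin n) (Δ) :
    faceRestrict Δ (X i * pderiv i f) =
      ∑ m ∈ f.support, if toR m ∈ Δ then monomial m ((m i : ℂ) * f.coeff m) else 0 := by
  rw [faceRestrict]
  have h : (X i * pderiv i f).support ⊆ f.support := by
    intro m hm
    rw [mem_support_iff, coeff_t] at hm
    rw [mem_support_iff]
    exact right_ne_zero_of_mul hm
  rw [← Finset.sum_subset h]
  · apply Finset.sum_congr rfl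
    intro m _
    rw [coeff_t]
  · intro m _ hm
    rw [notMem_support_iff, coeff_t] at hm
    rw [hm]; simp

namespace Fan
variable {n : ℕ} {f : MvPolynomial (Fin n) ℂ} (F : Fan f)

theorem exists_int (τ : F.ι) : ∃ (D : ℕ) (C : Fin n → Fin n → ℤ), 0 < D ∧
    ∀ k (x : Fin n → ℝ), (D : ℝ) * F.c τ k x = ∑ i, (C k i : ℝ) * x i := by
  let A : Matrix (Fin n) (Fin n) ℤ := Matrix.of fun i k => (F.s τ k i : ℤ)
  let A' : Matrix (Fin n) (Fin n) ℝ := (Int.castRingHom ℝ).mapMatrix A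
  have hA' : ∀ y, A'.mulVec y = ∑ k, y k • F.b τ k := by
    intro y
    ext i
    simp only [Matrix.mulVec, dotProduct, A', A, RingHom.mapMatrix_apply, Matrix.map_apply,
      Matrix.of_apply, Finset.sum_apply, Pi.smul_apply, F.b_eq, toR, smul_eq_mul]
    apply Finset.sum_congr rfl
    intro k _
    simp [mul_comm]
  have hdet : A.det ≠ 0 := by
    intro h
    have h2 : A'.det = 0 := by
      rw [← RingHom.map_det, h, map_zero]
    obtain ⟨y, hy, hy2⟩ := Matrix.exists_mulVec_eq_zero_iff.2 h2
    rw [hA'] at hy2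
    apply hy
    have := linearIndependent_iff'.1 (F.b τ).linearIndependent Finset.univ y hy2
    ext k; exact this k (Finset.mem_univ _)
  have hadj : A'.adjugate = (Int.castRingHom ℝ).mapMatrix A.adjugate := by
    rw [← RingHom.map_adjugate]
  refine ⟨A.det.natAbs, fun k i => A.det.sign * A.adjugate k i, Int.natAbs_pos.2 hdet, ?_⟩
  intro k x
  have h1 : A'.mulVec (fun k => F.c τ k x) = x := by rw [hA', sum_c]
  have h2 : A'.adjugate.mulVec x = A'.det • (fun k => F.c τ k x) := by
    conv_lhs => rw [← h1]
    rw [Matrix.mulVec_mulVec, Matrix.adjugate_mul, Matrix.smul_mulVec, Matrix.one_mulVec]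
  have h3 := congrFun h2 k
  have h4 : A'.det = (A.det : ℝ) := by
    rw [← RingHom.map_det]; simp
  rw [hadj, h4] at h3
  simp only [Matrix.mulVec, dotProduct, RingHom.mapMatrix_apply, Matrix.map_apply, Pi.smul_apply,
    smul_eq_mul, eq_intCast] at h3
  have h5 : ((A.det.natAbs : ℕ) : ℝ) = (A.det.sign : ℝ) * (A.det : ℝ) := by
    rw [← Int.cast_mul, Int.sign_mul_self_eq_abs]
    simp [Nat.cast_natAbs]
  rw [h5, mul_assoc, ← h3, Finset.mul_sum]
  apply Finset.sum_congr rfl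
  intro i _
  push_cast; ring

/-- tight part of `t_i` on the cone `τ` -/
noncomputable def Ft (τ : F.ι) (i : Fin n) : MvPolynomial (Fin n) ℂ := by
  classical
  exact ∑ m ∈ f.support.filter (fun m => F.ℓ τ (toR m) = 1), monomial m ((m i : ℂ) * f.coeff m)

/-- the monomials of the half-open cone in degree `β`. -/
noncomputable def MM (τ : F.ι) (β : ℝ) : Submodule ℂ (MvPolynomial (Fin n) ℂ) :=
  restrictSupport ℂ {v | F.In τ (toR v) F.ξ ∧ F.ℓ τ (toR v) = β}

theorem null (τ : F.ι) (hnd : Nondegenerate f) (D : ℕ) (C : Fin n → Fin n → ℤ) (hD : 0 < D)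
    (hC : ∀ k (x : Fin n → ℝ), (D : ℝ) * F.c τ k x = ∑ i, (C k i : ℝ) * x i)
    (e : (Fin n →₀ ℕ) → (Fin n →₀ ℕ))
    (he : ∀ m, toR m ∈ F.cone τ → ∀ k, (e m k : ℝ) = D * F.c τ k (toR m))
    (z : Fin n → ℂ)
    (hz : ∀ i, ∑ m ∈ f.support, (open Classical in if F.ℓ τ (toR m) = 1 then
      eval z (monomial (e m) ((m i : ℂ) * f.coeff m)) else 0) = 0) : z = 0 := by
  classical
  by_contra hz0
  let L : Finset (Fin n) := Finset.univ.filter fun k => z k = 0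
  have hL : L ≠ Finset.univ := by
    intro h
    apply hz0
    ext k
    have : k ∈ L := h ▸ Finset.mem_univ k
    exact (Finset.mem_filter.1 this).2
  let zt : Fin n → ℂ := fun k => if z k = 0 then 1 else z k
  have hzt : ∀ k, zt k ≠ 0 := by
    intro k; simp only [zt]; split_ifs with h
    · exact one_ne_zero
    · exact h
  let x : Fin n → ℂ := fun i => ∏ k, zt k ^ C k i
  refine hnd (F.face τ L) (F.face_NB τ hL) ⟨x, fun i => Finset.prod_ne_zero_iff.2 fun k _ => zpow_ne_zero _ (hzt k), ?_⟩
  intro i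
  rw [faceRestrict_t, map_sum, ← hz i]
  apply Finset.sum_congr rfl
  intro m hm
  by_cases ht : F.ℓ τ (toR m) = 1
  · rw [if_pos ht]
    have hcone : toR m ∈ F.cone τ := F.ℓ_tight τ m hm ht
    by_cases hf : toR m ∈ F.face τ L
    · rw [if_pos hf, eval_monomial, eval_monomial]
      congr 1
      have h0 := (F.mem_face.1 hf).2.2
      have h1 : ∀ k, z k ^ e m k = zt k ^ (∑ i, C k i * (m i : ℤ)) := by
        intro k
        have h2 : (e m k : ℤ) = ∑ i, C k i * (m i : ℤ) := by
          have := he m hcone k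
          rw [hC] at this
          simp only [toR] at this
          exact_mod_cast this
        rw [← h2, zpow_natCast]
        by_cases hk : z k = 0
        · have : (e m k : ℝ) = 0 := by
            rw [he m hcone, h0 k (Finset.mem_filter.2 ⟨Finset.mem_univ _, hk⟩), mul_zero]
          rw [Nat.cast_eq_zero.1 this]; simp
        · simp [zt, hk]
      rw [Finsupp.prod_fintype _ _ (by simp), Finsupp.prod_fintype _ _ (by simp)]
      simp only [h1, x]
      simp only [← Finset.prod_pow]
      rw [Finset.prod_comm]
      apply Finset.prod_congr rfl
      intro k _
      have : ∀ s : Finset (Fin n), zt k ^ (∑ i ∈ s, C k i * (m i : ℤ)) = ∏ i ∈ s, (zt k ^ C k i) ^ m i := by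
        intro s
        induction s using Finset.induction_on with
        | empty => simp
        | insert a s ha ih =>
          rw [Finset.sum_insert ha, Finset.prod_insert ha, zpow_add₀ (hzt k), ih, zpow_mul, zpow_natCast]
      exact (this _).symm
    · rw [if_neg hf, map_zero, eval_monomial]
      have : ∃ k, z k = 0 ∧ F.c τ k (toR m) ≠ 0 := by
        by_contra hcon
        push Not at hcon
        exact hf (F.mem_face.2 ⟨hcone, ht, fun k hk => hcon k (Finset.mem_filter.1 hk).2⟩)
      obtain ⟨k, hk1, hk2⟩ := this
      rw [Finsupp.prod_fintype _ _ (by simp), Finset.prod_eq_zero (Finset.mem_univ k), mul_zero]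
      rw [hk1, zero_pow]
      intro h
      have h2 := he m hcone k
      rw [h, Nat.cast_zero] at h2
      rcases mul_eq_zero.1 h2.symm with h3 | h3
      · exact hD.ne' (Nat.cast_eq_zero.1 h3)
      · exact hk2 h3
  · rw [if_neg ht, if_neg, map_zero]
    intro hf
    exact ht (F.mem_face.1 hf).2.1

end Fan
end TN

open MvPolynomial
set_option linter.all false
namespace TN
open ToricNewton Filter Topology
namespace Fan
variable {n : ℕ} {f : MvPolynomial (Fin n) ℂ} (F : Fan f)

theorem In_up {τ : F.ι} {x y : Fin n → ℝ} (hx : F.In τ x F.ξ) (h : ∀ k, F.c τ k x ≤ F.c τ k y) :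
    F.In τ y F.ξ := by
  rw [In_iff] at hx ⊢
  intro k
  exact ⟨(hx k).1.trans (h k), fun hk => ((hx k).2 hk).trans_le (h k)⟩

theorem exists_sub' (τ : F.ι) (v m : Fin n →₀ ℕ)
    (h : ∀ k, F.c τ k (toR m) ≤ F.c τ k (toR v)) : ∃ u, u + m = v := by
  have hle : m ≤ v := by
    intro i
    have hc : toR v - toR m ∈ F.cone τ := by
      intro k
      rw [map_sub]; linarith [h k]
    have := F.nonneg_of_cone hc i
    simp only [Pi.sub_apply, toR, sub_nonneg, Nat.cast_le] at this
    exact this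
  exact ⟨v - m, tsub_add_cancel_of_le hle⟩

theorem evsurj0 (τ : F.ι) (hnd : Nondegenerate f) : ∃ N : ℕ, ∀ v : Fin n →₀ ℕ,
    F.In τ (toR v) F.ξ → ∀ k, ∃ x : Fin n → MvPolynomial (Fin n) ℂ,
      (∀ i, x i ∈ F.MM τ (F.ℓ τ (toR v) + N - 1)) ∧
      ∑ i, F.Ft τ i * x i = monomial (v + N • F.s τ k) 1 := by
  classical
  obtain ⟨D, C, hD, hC⟩ := F.exists_int τ
  have hDR : (0:ℝ) < D := by exact_mod_cast hD
  have hex : ∀ m : Fin n →₀ ℕ, ∃ e : Fin n →₀ ℕ, toR m ∈ F.cone τ → ∀ k, (e k : ℝ) = D * F.c τ k (toR m) := by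
    intro m
    refine ⟨Finsupp.equivFunOnFinite.symm fun k => (∑ i, C k i * (m i : ℤ)).toNat, ?_⟩
    intro hm k
    have h1 := hC k (toR m)
    have h2 : ((∑ i, C k i * (m i : ℤ) : ℤ) : ℝ) = D * F.c τ k (toR m) := by
      rw [h1]; push_cast; rfl
    have h3 : 0 ≤ ∑ i, C k i * (m i : ℤ) := by
      have : (0:ℝ) ≤ ((∑ i, C k i * (m i : ℤ) : ℤ) : ℝ) := by
        rw [h2]; exact mul_nonneg hDR.le (hm k)
      exact_mod_cast this
    rw [← h2]
    have h4 := Int.toNat_of_nonneg h3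
    have h5 : (((∑ i, C k i * (m i : ℤ)).toNat : ℤ) : ℝ) = ((∑ i, C k i * (m i : ℤ) : ℤ) : ℝ) := by rw [h4]
    rw [Int.cast_natCast] at h5
    exact h5
  choose e he using hex
  let Fz : Fin n → MvPolynomial (Fin n) ℂ := fun i =>
    ∑ m ∈ f.support.filter (fun m => F.ℓ τ (toR m) = 1), monomial (e m) ((m i : ℂ) * f.coeff m)
  have hzero : ∀ k, X k ∈ (Ideal.span (Set.range Fz)).radical := by
    intro k
    rw [← vanishingIdeal_zeroLocus_eq_radical (k := ℂ) (K := ℂ), mem_vanishingIdeal_iff]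
    intro z hz
    have : z = 0 := by
      apply F.null τ hnd D C hD hC e he z
      intro i
      have h1 := (mem_zeroLocus_iff.1 hz) (Fz i) (Ideal.subset_span ⟨i, rfl⟩)
      rw [← Finset.sum_filter]
      simpa [Fz] using h1
    simp [this]
  choose Nk hNk using hzero
  let N := ∑ k, Nk k
  have hN : ∀ k, ∃ p : Fin n → MvPolynomial (Fin n) ℂ, ∑ i, p i * Fz i = X k ^ (D * N) := by
    intro k
    have hle : Nk k ≤ D * N := by
      calc Nk k ≤ N := Finset.single_le_sum (f := Nk) (fun _ _ => Nat.zero_le _) (Finset.mem_univ k)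
        _ ≤ D * N := Nat.le_mul_of_pos_left _ hD
    have : X k ^ (D * N) ∈ Ideal.span (Set.range Fz) := by
      rw [← Nat.add_sub_cancel' hle, pow_add]
      exact Ideal.mul_mem_right _ _ (hNk k)
    exact Ideal.mem_span_range_iff_exists_fun.1 this
  refine ⟨N, ?_⟩
  intro v hv k
  obtain ⟨p, hp⟩ := hN k
  -- transport
  let Q : ℝ → (Fin n →₀ ℕ) → (Fin n →₀ ℕ) → Prop := fun β a v' =>
    (∀ k, (D:ℝ) * F.c τ k (toR v') = D * F.c τ k (toR v) + a k) ∧ F.ℓ τ (toR v') = β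
  have hQu : ∀ β β' a v' v'', Q β a v' → Q β' a v'' → v' = v'' := by
    intro β β' a v' v'' h h'
    apply toR_inj
    apply F.ext_c τ
    intro k
    have := (h.1 k).trans (h'.1 k).symm
    exact mul_left_cancel₀ hDR.ne' this
  let θ : ℝ → (MvPolynomial (Fin n) ℂ →ₗ[ℂ] MvPolynomial (Fin n) ℂ) := fun β =>
    (basisMonomials (Fin n) ℂ).constr ℂ fun a =>
      if h : ∃ v', Q β a v' then monomial h.choose 1 else 0
  have hθ1 : ∀ β a v', Q β a v' → θ β (monomial a 1) = monomial v' 1 := by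
    intro β a v' h
    have : θ β (monomial a 1) = (if h : ∃ v', Q β a v' then monomial h.choose 1 else 0) := by
      rw [← congrFun (coe_basisMonomials (Fin n) ℂ) a]
      exact Module.Basis.constr_basis _ _ _ _
    have hex : ∃ v', Q β a v' := ⟨v', h⟩
    rw [this, dif_pos hex, hQu _ _ _ _ _ hex.choose_spec h]
  have hθ0 : ∀ β a, (¬ ∃ v', Q β a v') → θ β (monomial a 1) = 0 := by
    intro β a h
    have : θ β (monomial a 1) = (if h : ∃ v', Q β a v' then monomial h.choose 1 else 0) := by
      rw [← congrFun (coe_basisMonomials (Fin n) ℂ) a]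
      exact Module.Basis.constr_basis _ _ _ _
    rw [this, dif_neg h]
  have hθM : ∀ β p, θ β p ∈ F.MM τ β := by
    intro β p
    rw [p.as_sum, map_sum]
    apply Submodule.sum_mem
    intro a _
    have h1 : monomial a (coeff a p) = (coeff a p) • (monomial a 1 : MvPolynomial (Fin n) ℂ) := by
      rw [smul_monomial, smul_eq_mul, mul_one]
    rw [h1, map_smul]
    apply Submodule.smul_mem
    by_cases h : ∃ v', Q β a v'
    · obtain ⟨v', h'⟩ := h
      rw [hθ1 _ _ _ h']
      refine (monomial_mem_restrictSupport ℂ).2 (Or.inl ⟨F.In_up hv ?_, h'.2⟩)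
      intro k
      have h2 := h'.1 k
      have h3 : (0:ℝ) ≤ a k := by positivity
      exact le_of_mul_le_mul_left (by linarith) hDR
    · rw [hθ0 _ _ h]; exact Submodule.zero_mem _
  have hθmul : ∀ β m, m ∈ f.support → F.ℓ τ (toR m) = 1 → ∀ p,
      θ β (monomial (e m) 1 * p) = monomial m 1 * θ (β - 1) p := by
    intro β m hm ht
    have hcone : toR m ∈ F.cone τ := F.ℓ_tight τ m hm ht
    have : (θ β).comp (LinearMap.mulLeft ℂ (monomial (e m) 1)) =
        (LinearMap.mulLeft ℂ (monomial m (1:ℂ))).comp (θ (β - 1)) := by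
      apply (basisMonomials (Fin n) ℂ).ext
      intro a
      simp only [coe_basisMonomials, LinearMap.comp_apply, LinearMap.mulLeft_apply, monomial_mul, one_mul]
      by_cases h : ∃ v', Q (β - 1) a v'
      · obtain ⟨v', h'⟩ := h
        rw [hθ1 _ _ _ h', monomial_mul, one_mul]
        apply hθ1
        constructor
        · intro k
          rw [toR_add, map_add, mul_add, h'.1 k, Finsupp.add_apply, Nat.cast_add, he m hcone]
          ring
        · rw [toR_add, map_add, h'.2, ht]; ring
      · rw [hθ0 _ _ h, mul_zero]
        apply hθ0
        rintro ⟨v'', h''⟩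
        have hk : ∀ k, F.c τ k (toR v'') = F.c τ k (toR m) + (F.c τ k (toR v) + (a k : ℝ) / D) := by
          intro k
          have h3 := h''.1 k
          rw [Finsupp.add_apply, Nat.cast_add, he m hcone] at h3
          apply mul_left_cancel₀ hDR.ne'
          rw [h3]; field_simp; ring
        obtain ⟨u, hu⟩ := F.exists_sub' τ v'' m (by
          intro k
          rw [hk]
          have := hv.cone k
          have : 0 ≤ (a k : ℝ) / D := by positivity
          linarith [hv.cone k])
        apply h
        refine ⟨u, ?_, ?_⟩
        · intro k
          have h4 := hk k
          rw [← hu, toR_add, map_add] at h4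
          have h5 : F.c τ k (toR u) = F.c τ k (toR v) + (a k : ℝ) / D := by linarith
          rw [h5]; field_simp
        · have := h''.2
          rw [← hu, toR_add, map_add, ht] at this
          linarith
    intro p
    exact LinearMap.congr_fun this p
  have hθF : ∀ β i p, θ β (p * Fz i) = F.Ft τ i * θ (β - 1) p := by
    intro β i p
    rw [mul_comm]
    simp only [Fz, Ft, Finset.sum_mul, map_sum]
    apply Finset.sum_congr rfl
    intro m hm
    rw [Finset.mem_filter] at hm
    have h1 : ∀ (q : Fin n →₀ ℕ), monomial q ((m i : ℂ) * f.coeff m) = ((m i : ℂ) * f.coeff m) • monomial q 1 := by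
      intro q; rw [smul_monomial, smul_eq_mul, mul_one]
    rw [h1, h1, smul_mul_assoc, smul_mul_assoc, map_smul, hθmul β m hm.1 hm.2]
  let β := F.ℓ τ (toR v) + N
  refine ⟨fun i => θ (β - 1) (p i), fun i => hθM _ _, ?_⟩
  simp only [← hθF]
  rw [← map_sum, hp, X_pow_eq_monomial]
  apply hθ1
  constructor
  · intro k'
    rw [toR_add, toR_nsmul, ← F.b_eq, map_add, map_smul, c_b, Finsupp.single_apply]
    split_ifs <;> simp [mul_add]
  · rw [toR_add, toR_nsmul, ← F.b_eq, map_add, map_smul, ℓ_b]; simp [β]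

end Fan
end TN

open MvPolynomial
set_option linter.all false
namespace TN
open ToricNewton Filter Topology

section
variable {n : ℕ}

theorem mul_restrict {A A' : Set (Fin n →₀ ℕ)} {m : Fin n →₀ ℕ} (a : ℂ) (h : ∀ v ∈ A, m + v ∈ A')
    {x : MvPolynomial (Fin n) ℂ} (hx : x ∈ restrictSupport ℂ A) :
    monomial m a * x ∈ restrictSupport ℂ A' := by
  rw [restrictSupport_eq_span] at hx
  induction hx using Submodule.span_induction with
  | mem x hx =>
    obtain ⟨v, hv, rfl⟩ := hx
    rw [monomial_mul]
    exact (monomial_mem_restrictSupport ℂ).2 (Or.inl (h v hv))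
  | zero => simp
  | add x y _ _ h1 h2 => rw [mul_add]; exact add_mem h1 h2
  | smul c x _ h1 => rw [mul_smul_comm]; exact Submodule.smul_mem _ _ h1

theorem restrict_sup (A A' : Set (Fin n →₀ ℕ)) :
    restrictSupport ℂ A ⊔ restrictSupport ℂ A' = restrictSupport ℂ (A ∪ A') := by
  simp only [restrictSupport_eq_span]
  rw [← Submodule.span_union, Set.image_union]

theorem restrict_map (A : Set (Fin n →₀ ℕ)) (m : Fin n →₀ ℕ) :
    (restrictSupport ℂ A).map (LinearMap.mulLeft ℂ (monomial m (1:ℂ))) =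
      restrictSupport ℂ ((fun v => v + m) '' A) := by
  simp only [restrictSupport_eq_span, Submodule.map_span, Set.image_image]
  congr 1
  apply Set.image_congr
  intro v _
  simp [LinearMap.mulLeft_apply, monomial_mul, add_comm]

theorem restrict_finrank (A : Set (Fin n →₀ ℕ)) :
    Module.finrank ℂ (restrictSupport ℂ A) = A.ncard := by
  rw [Module.finrank_eq_nat_card_basis (basisRestrictSupport ℂ A)]
  rfl

theorem restrict_fd {A : Set (Fin n →₀ ℕ)} (hA : A.Finite) :
    FiniteDimensional ℂ (restrictSupport ℂ A) := by
  have : Finite A := hA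
  exact Module.Finite.of_basis (basisRestrictSupport ℂ A)

theorem exists_span {V : Type*} [AddCommGroup V] [Module ℂ V] (M R : Submodule ℂ V) (hR : R ≤ M)
    [FiniteDimensional ℂ M] {κ : Type*} (S : Set κ) (hS : S.Finite)
    (h : Module.finrank ℂ M ≤ Module.finrank ℂ R + S.ncard) :
    ∃ e : κ → V, (∀ w, e w ∈ M) ∧ M ≤ Submodule.span ℂ (e '' S) ⊔ R := by
  classical
  let Q := M ⧸ R.submoduleOf M
  let r := Module.finrank ℂ Q
  have hr : r ≤ S.ncard := by
    have h1 := Submodule.finrank_quotient_add_finrank (R.submoduleOf M)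
    have h2 : Module.finrank ℂ (R.submoduleOf M) = Module.finrank ℂ R :=
      (Submodule.submoduleOfEquivOfLe hR).finrank_eq
    have h3 : r = Module.finrank ℂ (M ⧸ R.submoduleOf M) := rfl
    omega
  let bs := Module.finBasis ℂ Q
  have : Fintype S := hS.fintype
  have hc : S.ncard = Fintype.card S := by
    rw [Set.ncard_eq_toFinset_card', Set.toFinset_card]
  obtain ⟨j⟩ : Nonempty (Fin r ↪ S) := by
    apply Function.Embedding.nonempty_of_card_le
    rw [Fintype.card_fin, ← hc]; exact hr
  choose q hq using fun i : Fin r => Submodule.mkQ_surjective (R.submoduleOf M) (bs i)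
  let e : κ → V := fun w => if h : ∃ i, (j i : κ) = w then (q h.choose : V) else 0
  have hej : ∀ i, e (j i) = q i := by
    intro i
    have hh : ∃ i', (j i' : κ) = j i := ⟨i, rfl⟩
    have : hh.choose = i := j.injective (Subtype.ext hh.choose_spec)
    simp only [e]
    rw [dif_pos hh, this]
  refine ⟨e, ?_, ?_⟩
  · intro w
    simp only [e]
    split_ifs
    · exact Subtype.property _
    · exact zero_mem _
  · intro x hx
    let c := bs.repr ((R.submoduleOf M).mkQ ⟨x, hx⟩)
    have h1 : (R.submoduleOf M).mkQ ⟨x, hx⟩ = (R.submoduleOf M).mkQ (∑ i, c i • q i) := by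
      rw [map_sum]
      simp only [map_smul, hq]
      exact (bs.sum_repr _).symm
    rw [← sub_eq_zero, ← map_sub, Submodule.mkQ_apply, Submodule.Quotient.mk_eq_zero] at h1
    have h2 : x - ∑ i, c i • (q i : V) ∈ R := by
      have h3 : ((⟨x, hx⟩ - ∑ i, c i • q i : M) : V) ∈ R := h1
      simpa using h3
    rw [← sub_add_cancel x (∑ i, c i • (q i : V)), add_comm]
    apply Submodule.add_mem_sup _ h2
    apply Submodule.sum_mem
    intro i _
    apply Submodule.smul_mem
    rw [← hej]
    exact Submodule.subset_span ⟨_, (j i).2, rfl⟩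

end

namespace Fan
variable {n : ℕ} {f : MvPolynomial (Fin n) ℂ} (F : Fan f)

/-- index set of `MM` -/
def HH (τ : F.ι) (β : ℝ) : Set (Fin n →₀ ℕ) := {v | F.In τ (toR v) F.ξ ∧ F.ℓ τ (toR v) = β}

theorem HH_finite (τ : F.ι) (β : ℝ) : (F.HH τ β).Finite := by
  apply (F.finite_sublevel β).subset
  intro v hv
  show nu f (toR v) ≤ β
  rw [F.nu_eq hv.1.cone, hv.2]

theorem Ft_mul (τ : F.ι) (i) (β : ℝ) {x} (hx : x ∈ F.MM τ β) : F.Ft τ i * x ∈ F.MM τ (β + 1) := by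
  classical
  rw [Ft, Finset.sum_mul]
  apply Submodule.sum_mem
  intro m hm
  rw [Finset.mem_filter] at hm
  apply mul_restrict _ _ hx
  rintro v ⟨hv1, hv2⟩
  refine ⟨F.In_up hv1 ?_, ?_⟩
  · intro k
    rw [toR_add, map_add]
    linarith [F.ℓ_tight τ m hm.1 hm.2 k]
  · rw [toR_add, map_add, hv2, hm.2, add_comm]

/-- `∑ F_i M` -/
noncomputable def FM (τ : F.ι) (β : ℝ) : Submodule ℂ (MvPolynomial (Fin n) ℂ) :=
  (Submodule.pi Set.univ (fun _ : Fin n => F.MM τ (β - 1))).map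
    (∑ i, (LinearMap.mulLeft ℂ (F.Ft τ i)) ∘ₗ LinearMap.proj i)

theorem mem_FM {τ : F.ι} {β : ℝ} {z} : z ∈ F.FM τ β ↔
    ∃ x : Fin n → MvPolynomial (Fin n) ℂ, (∀ i, x i ∈ F.MM τ (β - 1)) ∧ ∑ i, F.Ft τ i * x i = z := by
  simp [FM, Submodule.mem_map, Submodule.mem_pi, LinearMap.sum_apply]

theorem sub_gen (τ : F.ι) {v : Fin n →₀ ℕ} (hv : F.In τ (toR v) F.ξ) (k) (N : ℕ)
    (h : (N : ℝ) ≤ F.c τ k (toR v)) (h' : k ∈ F.K τ → (N : ℝ) < F.c τ k (toR v)) :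
    ∃ u, F.In τ (toR u) F.ξ ∧ u + N • F.s τ k = v := by
  have hc : ∀ j, F.c τ j (toR (N • F.s τ k)) = if k = j then (N : ℝ) else 0 := by
    intro j
    rw [toR_nsmul, ← F.b_eq, map_smul, c_b]; simp
  have hv' := (F.In_iff τ _).1 hv
  obtain ⟨u, hu⟩ := F.exists_sub' τ v (N • F.s τ k) (by
    intro j
    rw [hc]
    split_ifs with hj
    · subst hj; exact h
    · exact (hv' j).1)
  refine ⟨u, ?_, hu⟩
  rw [In_iff]
  intro j
  have h1 : F.c τ j (toR u) = F.c τ j (toR v) - if k = j then (N:ℝ) else 0 := by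
    rw [← hu, toR_add, map_add, hc]; ring
  rw [h1]
  split_ifs with hj
  · subst hj
    exact ⟨by linarith, fun hk => by linarith [h' hk]⟩
  · rw [sub_zero]; exact hv' j

theorem exists_big (τ : F.ι) (v : Fin n →₀ ℕ) (N : ℝ) (h : n * N < F.ℓ τ (toR v)) :
    ∃ k, N < F.c τ k (toR v) := by
  by_contra hcon
  push Not at hcon
  rw [ℓ_apply] at h
  have := Finset.sum_le_sum (s := Finset.univ) fun k _ => hcon k
  simp at this
  linarith

theorem MM_le_FM (τ : F.ι) (hnd : Nondegenerate f) : ∃ β0 : ℝ, ∀ β ≥ β0, F.MM τ β ≤ F.FM τ β := by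
  obtain ⟨N, hN⟩ := F.evsurj0 τ hnd
  refine ⟨n * N + 1, ?_⟩
  intro β hβ
  rw [MM, restrictSupport_eq_span, Submodule.span_le]
  rintro _ ⟨v, ⟨hv1, hv2⟩, rfl⟩
  obtain ⟨k, hk⟩ := F.exists_big τ v N (by rw [hv2]; linarith)
  obtain ⟨u, hu1, hu2⟩ := F.sub_gen τ hv1 k N hk.le (fun _ => hk)
  obtain ⟨x, hx1, hx2⟩ := hN u hu1 k
  rw [hu2] at hx2
  refine F.mem_FM.2 ⟨x, ?_, hx2⟩
  have : F.ℓ τ (toR u) + N = β := by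
    rw [← hv2, ← hu2, toR_add, map_add, toR_nsmul, ← F.b_eq, map_smul, ℓ_b]; simp
  intro i
  rw [← this]; exact hx1 i

/-- the part of `HH` reached from the generators in `S` -/
def YS (τ : F.ι) (S : Finset (Fin n)) (β : ℝ) : Set (Fin n →₀ ℕ) :=
  {v | v ∈ F.HH τ β ∧ ∃ k ∈ S, ∃ u, F.In τ (toR u) F.ξ ∧ u + F.s τ k = v}

theorem YS_compl (τ : F.ι) (β : ℝ) : F.HH τ β \ F.YS τ Finset.univ β ⊆
    {v | F.HB τ (toR v) ∧ F.ℓ τ (toR v) = β} := by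
  rintro v ⟨hv1, hv2⟩
  have hv3 : ∀ k, ¬ ∃ u, F.In τ (toR u) F.ξ ∧ u + (1:ℕ) • F.s τ k = v := by
    rintro k ⟨u, h1, h2⟩
    rw [one_smul] at h2
    exact hv2 ⟨hv1, k, Finset.mem_univ _, u, h1, h2⟩
  refine ⟨?_, hv1.2⟩
  intro k
  have h0 := (F.In_iff τ _).1 hv1.1 k
  constructor
  · intro hk
    refine ⟨h0.2 hk, ?_⟩
    by_contra hcon
    push Not at hcon
    exact hv3 k (F.sub_gen τ hv1.1 k 1 (by simpa using hcon.le) (fun _ => by simpa using hcon))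
  · intro hk
    refine ⟨h0.1, ?_⟩
    by_contra hcon
    push Not at hcon
    exact hv3 k (F.sub_gen τ hv1.1 k 1 (by simpa using hcon) (fun h => absurd h hk))

section
variable (τ : F.ι) (α0 : ℝ)

/-- graded module -/
noncomputable def Md (d : ℤ) : Submodule ℂ (MvPolynomial (Fin n) ℂ) := F.MM τ (α0 + d)
noncomputable def Yd (S : Finset (Fin n)) (d : ℤ) : Submodule ℂ (MvPolynomial (Fin n) ℂ) :=
  restrictSupport ℂ (F.YS τ S (α0 + d))
noncomputable def yk (k : Fin n) : MvPolynomial (Fin n) ℂ := monomial (F.s τ k) 1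

theorem ℓ_s (k) : F.ℓ τ (toR (F.s τ k)) = 1 := by rw [← F.b_eq, ℓ_b]
theorem c_s (k j) : F.c τ k (toR (F.s τ j)) = if j = k then 1 else 0 := by rw [← F.b_eq, c_b]

theorem In_add_s {τ : F.ι} {u} (hu : F.In τ (toR u) F.ξ) (k) : F.In τ (toR (u + F.s τ k)) F.ξ := by
  apply F.In_up hu
  intro j
  rw [toR_add, map_add, c_s]
  split_ifs <;> linarith

theorem yk_Ops (k) : F.yk τ k ∈ Ops (F.Md τ α0) := by
  intro d x hx
  apply mul_restrict _ _ hx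
  rintro v ⟨hv1, hv2⟩
  rw [add_comm (F.s τ k) v]
  refine ⟨F.In_add_s hv1 k, ?_⟩
  rw [toR_add, map_add, ℓ_s, hv2]; push_cast; ring

theorem addR_Yd (S : Finset (Fin n)) (k) :
    addR (F.Md τ α0) (F.Yd τ α0 S) (F.yk τ k) = F.Yd τ α0 (insert k S) := by
  funext d
  simp only [addR, Yd, Md, MM, yk]
  rw [restrict_map, restrict_sup]
  congr 1
  ext v
  constructor
  · rintro (⟨h1, j, hj, h2⟩ | ⟨u, ⟨hu1, hu2⟩, rfl⟩)
    · exact ⟨h1, j, Finset.mem_insert_of_mem hj, h2⟩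
    · refine ⟨⟨F.In_add_s hu1 k, ?_⟩, k, Finset.mem_insert_self _ _, u, hu1, rfl⟩
      rw [toR_add, map_add, ℓ_s, hu2]; push_cast; ring
  · rintro ⟨h1, j, hj, u, hu1, hu2⟩
    rcases Finset.mem_insert.1 hj with rfl | hj
    · right
      refine ⟨u, ⟨hu1, ?_⟩, hu2⟩
      have := h1.2
      rw [← hu2, toR_add, map_add, ℓ_s] at this
      push_cast; linarith
    · left
      exact ⟨h1, j, hj, u, hu1, hu2⟩

theorem inj_Yd (S : Finset (Fin n)) (k) (hk : k ∉ S) :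
    InjN (F.Md τ α0) (F.Yd τ α0 S) (F.yk τ k) := by
  intro d x hx hyx
  rw [Yd, mem_restrictSupport_iff] at hyx ⊢
  rw [Md, MM, mem_restrictSupport_iff] at hx
  intro v hv
  have hvH := hx hv
  have hv1 : v + F.s τ k ∈ (F.yk τ k * x).support := by
    rw [mem_support_iff, yk, mul_comm, coeff_mul_monomial, mul_one]
    exact mem_support_iff.1 hv
  obtain ⟨_, j, hj, u, hu1, hu2⟩ := hyx hv1
  have hjk : k ≠ j := fun h => hk (h ▸ hj)
  have hcj : F.c τ j (toR v) = F.c τ j (toR u) + 1 := by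
    have := congrArg (fun w => F.c τ j (toR w)) hu2
    simp only [toR_add, map_add, c_s, if_neg hjk, if_true] at this
    linarith
  have hu' := (F.In_iff τ _).1 hu1 j
  obtain ⟨u', h1, h2⟩ := F.sub_gen τ hvH.1 j 1 (by rw [hcj]; push_cast; linarith [hu'.1])
    (fun h => by rw [hcj]; push_cast; linarith [hu'.2 h])
  rw [one_smul] at h2
  exact ⟨hvH, j, hj, u', h1, h2⟩

theorem reg_Yd (l : List (Fin n)) (hl : l.Nodup) (S : Finset (Fin n)) (hS : ∀ k ∈ l, k ∉ S) :
    Reg (F.Md τ α0) (l.map (F.yk τ)) (F.Yd τ α0 S) ∧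
    acc (F.Md τ α0) (l.map (F.yk τ)) (F.Yd τ α0 S) = F.Yd τ α0 (S ∪ l.toFinset) := by
  induction l generalizing S with
  | nil => exact ⟨trivial, by simp [acc]⟩
  | cons k l ih =>
    rw [List.nodup_cons] at hl
    have := ih hl.2 (insert k S) (by
      intro j hj h
      rcases Finset.mem_insert.1 h with rfl | h
      · exact hl.1 hj
      · exact hS j (List.mem_cons_of_mem _ hj) h)
    simp only [List.map_cons, Reg, acc]
    rw [addR_Yd]
    refine ⟨⟨F.inj_Yd τ α0 S k (hS k (by simp)), this.1⟩, ?_⟩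
    rw [this.2]
    congr 1
    ext j; simp [or_comm, or_assoc, or_left_comm]

theorem acc_le_FM (l : List (MvPolynomial (Fin n) ℂ))
    (hl : ∀ a ∈ l, ∃ c : Fin n → ℂ, a = ∑ i, c i • F.Ft τ i)
    (N : ℤ → Submodule ℂ (MvPolynomial (Fin n) ℂ)) (d : ℤ) :
    acc (F.Md τ α0) l N d ≤ N d ⊔ F.FM τ (α0 + d) := by
  induction l generalizing N with
  | nil => exact le_sup_left
  | cons a l ih =>
    refine (ih (fun b hb => hl b (List.mem_cons_of_mem _ hb)) _).trans ?_
    refine sup_le ?_ le_sup_right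
    refine sup_le le_sup_left (le_trans ?_ le_sup_right)
    rintro _ ⟨x, hx, rfl⟩
    obtain ⟨c, rfl⟩ := hl a (by simp)
    refine F.mem_FM.2 ⟨fun i => c i • x, fun i => ?_, ?_⟩
    · apply Submodule.smul_mem
      have : (α0 + (d:ℝ) - 1) = α0 + ((d - 1 : ℤ) : ℝ) := by push_cast; ring
      rw [this]; exact hx
    · simp only [LinearMap.mulLeft_apply, Finset.sum_mul, mul_smul_comm, smul_mul_assoc]

end

theorem cone_gen (τ : F.ι) (hnd : Nondegenerate f) (β : ℝ) :
    ∃ e : (Fin n →₀ ℕ) → MvPolynomial (Fin n) ℂ, (∀ w, e w ∈ F.MM τ β) ∧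
      F.MM τ β ≤ Submodule.span ℂ (e '' {v | F.HB τ (toR v) ∧ F.ℓ τ (toR v) = β}) ⊔ F.FM τ β := by
  let α0 := Int.fract β
  let d := ⌊β⌋
  have hβ : β = α0 + d := (Int.fract_add_floor β).symm
  have hfd : ∀ d, FiniteDimensional ℂ (F.Md τ α0 d) := fun d => restrict_fd (F.HH_finite τ _)
  have hM : ∀ d < 0, F.Md τ α0 d = ⊥ := by
    intro d hd
    rw [Md, MM, restrictSupport_eq_span, Submodule.span_eq_bot]
    rintro _ ⟨v, ⟨hv1, hv2⟩, _⟩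
    exfalso
    have h1 := F.ℓ_nonneg hv1.cone
    have h2 : α0 < 1 := Int.fract_lt_one β
    have h3 : (d : ℝ) ≤ -1 := by exact_mod_cast (by omega : d ≤ -1)
    linarith
  have hF : ∀ i, F.Ft τ i ∈ Ops (F.Md τ α0) := by
    intro i d x hx
    have := F.Ft_mul τ i _ hx
    rw [Md]
    convert this using 2
    push_cast; ring
  have hN : Good (F.Md τ α0) (F.Yd τ α0 ∅) := by
    have h0 : ∀ d, F.Yd τ α0 ∅ d = ⊥ := by
      intro d
      rw [Yd, restrictSupport_eq_span, Submodule.span_eq_bot]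
      rintro _ ⟨v, ⟨_, k, hk, _⟩, _⟩
      simp at hk
    constructor
    · intro d; rw [h0]; exact bot_le
    · intro a _ d x hx
      rw [h0, Submodule.mem_bot] at hx
      rw [hx, mul_zero]; exact zero_mem _
  have h0 : ∀ d, F.Yd τ α0 ∅ d = ⊥ := by
    intro d
    rw [Yd, restrictSupport_eq_span, Submodule.span_eq_bot]
    rintro _ ⟨v, ⟨_, k, hk, _⟩, _⟩
    simp at hk
  let ys := (List.finRange n).map (F.yk τ)
  have hreg := F.reg_Yd τ α0 (List.finRange n) (List.nodup_finRange n) ∅ (by simp)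
  have huniv : (∅ ∪ (List.finRange n).toFinset : Finset (Fin n)) = Finset.univ := by
    ext; simp
  rw [huniv] at hreg
  have hyO : ∀ a ∈ ys, a ∈ Ops (F.Md τ α0) := by
    intro a ha
    obtain ⟨k, _, rfl⟩ := List.mem_map.1 ha
    exact F.yk_Ops τ α0 k
  obtain ⟨β0, hβ0⟩ := F.MM_le_FM τ hnd
  obtain ⟨Fs, hFs1, hFs2, hFs3⟩ := exchange hM (F.Ft τ) hF n ys (by simp [ys]) hyO hN hreg.1
    ⟨n + 1, by
      intro d hd
      rw [hreg.2]
      apply restrictSupport_mono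
      rintro v hv
      have hdr : ((n:ℝ) + 1) ≤ d := by exact_mod_cast hd
      obtain ⟨k, hk⟩ := F.exists_big τ v 1 (by
        rw [hv.2]; have : 0 ≤ α0 := Int.fract_nonneg β
        linarith)
      obtain ⟨u, hu1, hu2⟩ := F.sub_gen τ hv.1 k 1 (by simpa using hk.le) (fun _ => by simpa using hk)
      rw [one_smul] at hu2
      exact ⟨hv, k, Finset.mem_univ _, u, hu1, hu2⟩⟩
    ⟨⌈β0⌉, by
      intro d hd z hz
      have h1 : z ∈ F.FM τ (α0 + (d + 1 : ℤ)) := by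
        apply hβ0 _ _ hz
        have h2 : β0 ≤ d := (Int.le_ceil β0).trans (by exact_mod_cast hd)
        have : 0 ≤ α0 := Int.fract_nonneg β
        push_cast; linarith
      obtain ⟨x, hx1, hx2⟩ := F.mem_FM.1 h1
      refine ⟨0, zero_mem _, x, ?_, by rw [zero_add]; exact hx2⟩
      intro i
      have := hx1 i
      rw [Md]
      convert this using 2
      push_cast; ring⟩
  have hFO : ∀ a ∈ Fs, a ∈ Ops (F.Md τ α0) := by
    intro a ha
    obtain ⟨c, rfl⟩ := hFs2 a ha
    exact Submodule.sum_mem _ fun i _ => Submodule.smul_mem _ _ (hF i)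
  have hrank := reg_finrank Fs ys (by simp [ys, hFs1]) hFO hyO hN hN (fun _ => rfl) hFs3 hreg.1 d
  rw [hreg.2] at hrank
  have hle := F.acc_le_FM τ α0 Fs hFs2 (F.Yd τ α0 ∅) d
  rw [h0, bot_sup_eq, ← hβ] at hle
  have hFMle : F.FM τ β ≤ F.MM τ β := by
    intro z hz
    obtain ⟨x, hx1, rfl⟩ := F.mem_FM.1 hz
    apply Submodule.sum_mem
    intro i _
    have := F.Ft_mul τ i _ (hx1 i)
    rwa [sub_add_cancel] at this
  have hMfd : FiniteDimensional ℂ (F.MM τ β) := restrict_fd (F.HH_finite τ _)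
  have hFMfd : FiniteDimensional ℂ (F.FM τ β) := Submodule.finiteDimensional_of_le hFMle
  have hr1 := Submodule.finrank_mono hle
  have hSfin : {v | F.HB τ (toR v) ∧ F.ℓ τ (toR v) = β}.Finite :=
    (F.HH_finite τ β).subset fun v hv => ⟨hv.1.In, hv.2⟩
  apply exists_span _ _ hFMle _ hSfin
  have e1 : Module.finrank ℂ (F.MM τ β) = (F.HH τ β).ncard := restrict_finrank _
  have e2 : Module.finrank ℂ (F.Yd τ α0 Finset.univ d) = (F.YS τ Finset.univ β).ncard := by
    rw [Yd, ← hβ, restrict_finrank]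
  have e3 := Set.ncard_sdiff_add_ncard_of_subset (show F.YS τ Finset.univ β ⊆ F.HH τ β from fun v hv => hv.1)
    (F.HH_finite τ β)
  have e4 := Set.ncard_le_ncard (F.YS_compl τ β) hSfin
  omega

end Fan
end TN

open MvPolynomial
set_option linter.all false
namespace TN
open ToricNewton Filter Topology

namespace Fan
variable {n : ℕ} {f : MvPolynomial (Fin n) ℂ} (F : Fan f)

theorem decomp (v : Fin n →₀ ℕ) : ∃ (a : Fin n → ℕ) (w : Fin n →₀ ℕ),
    w + F.comb (F.tau v) a = v ∧ F.HB (F.tau v) (toR w) := by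
  classical
  have hv := (F.In_iff _ _).1 (F.tau_In v)
  set τ := F.tau v
  have h1 : ∀ k, ∃ a : ℕ, (k ∈ F.K τ → (a:ℝ) < F.c τ k (toR v) ∧ F.c τ k (toR v) ≤ a + 1) ∧
      (k ∉ F.K τ → (a:ℝ) ≤ F.c τ k (toR v) ∧ F.c τ k (toR v) < a + 1) := by
    intro k
    by_cases hk : k ∈ F.K τ
    · have h0 := (hv k).2 hk
      obtain ⟨a, ha⟩ : ∃ a, ⌈F.c τ k (toR v)⌉₊ = a + 1 :=
        Nat.exists_eq_succ_of_ne_zero (Nat.ceil_pos.2 h0).ne'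
      refine ⟨a, fun _ => ⟨?_, ?_⟩, fun h => absurd hk h⟩
      · apply Nat.lt_ceil.1; omega
      · have := Nat.le_ceil (F.c τ k (toR v))
        rw [ha] at this
        exact_mod_cast this
    · exact ⟨⌊F.c τ k (toR v)⌋₊, fun h => absurd h hk, fun _ => ⟨Nat.floor_le (hv k).1, Nat.lt_floor_add_one _⟩⟩
  choose a ha using h1
  obtain ⟨w, hw⟩ := F.exists_sub τ v a (by
    intro k
    by_cases hk : k ∈ F.K τ
    · exact ((ha k).1 hk).1.le
    · exact ((ha k).2 hk).1)
  refine ⟨a, w, hw, ?_⟩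
  intro k
  have hc : F.c τ k (toR w) = F.c τ k (toR v) - a k := by
    rw [← hw, toR_add, map_add, c_comb]; ring
  rw [hc]
  constructor
  · intro hk
    have := (ha k).1 hk
    constructor <;> linarith
  · intro hk
    have := (ha k).2 hk
    constructor <;> linarith

theorem decomp_unique {τ : F.ι} {a a' : Fin n → ℕ} {w w' : Fin n →₀ ℕ} (hw : F.HB τ (toR w))
    (hw' : F.HB τ (toR w')) (h : w + F.comb τ a = w' + F.comb τ a') : a = a' ∧ w = w' := by
  have ha : a = a' := by
    ext k
    have h1 := congrArg (fun v => F.c τ k (toR v)) h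
    simp only [toR_add, map_add, c_comb] at h1
    have h2 : -1 < (a k : ℝ) - a' k ∧ (a k : ℝ) - a' k < 1 := by
      by_cases hk : k ∈ F.K τ
      · have := (hw k).1 hk
        have := (hw' k).1 hk
        constructor <;> linarith
      · have := (hw k).2 hk
        have := (hw' k).2 hk
        constructor <;> linarith
    have h3 : (-1 : ℤ) < (a k : ℤ) - a' k := by exact_mod_cast h2.1
    have h4 : (a k : ℤ) - a' k < 1 := by exact_mod_cast h2.2
    omega
  subst ha
  exact ⟨rfl, add_right_cancel h⟩

noncomputable def av (v : Fin n →₀ ℕ) : Fin n → ℕ := (F.decomp v).choose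
noncomputable def wv (v : Fin n →₀ ℕ) : Fin n →₀ ℕ := (F.decomp v).choose_spec.choose
theorem wv_add (v) : F.wv v + F.comb (F.tau v) (F.av v) = v :=
  (F.decomp v).choose_spec.choose_spec.1
theorem wv_HB (v) : F.HB (F.tau v) (toR (F.wv v)) :=
  (F.decomp v).choose_spec.choose_spec.2

theorem tau_add {τ : F.ι} {w} (hw : F.HB τ (toR w)) (a) : F.tau (w + F.comb τ a) = τ := by
  apply F.tau_eq
  apply F.In_up hw.In
  intro k
  rw [toR_add, map_add, c_comb]
  have : (0:ℝ) ≤ a k := by positivity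
  linarith

theorem av_add {τ : F.ι} {w} (hw : F.HB τ (toR w)) (a) :
    F.av (w + F.comb τ a) = a ∧ F.wv (w + F.comb τ a) = w := by
  have h1 := F.wv_add (w + F.comb τ a)
  have h2 := F.wv_HB (w + F.comb τ a)
  have h3 := F.tau_add hw a
  rw [h3] at h1 h2
  exact F.decomp_unique h2 hw h1

theorem av_eq_zero (v) : F.av v = 0 ↔ F.HB (F.tau v) (toR v) := by
  constructor
  · intro h
    have h1 := F.wv_add v
    have h2 := F.wv_HB v
    rw [h] at h1
    simp [comb] at h1
    rwa [h1] at h2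
  · intro h
    have := (F.av_add h 0).1
    simpa [comb] using this

theorem nu_wv (v) : nu f (toR v) = nu f (toR (F.wv v)) + ∑ k, (F.av v k : ℝ) := by
  rw [F.nu_v, F.nu_eq (F.wv_HB v).In.cone]
  conv_lhs => rw [← F.wv_add v]
  have : F.tau (F.wv v + F.comb (F.tau v) (F.av v)) = F.tau v := by rw [wv_add]
  rw [this, toR_add, map_add, ℓ_comb]

variable (f) in
noncomputable def T (i : Fin n) : MvPolynomial (Fin n) ℂ := X i * pderiv i f

theorem Nle_eq (α : ℝ) : Nle f α = restrictSupport ℂ {v | nu f (toR v) ≤ α} := by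
  ext g; rfl
theorem Nlt_eq (α : ℝ) : Nlt f α = restrictSupport ℂ {v | nu f (toR v) < α} := by
  ext g; rfl

theorem nu_add_le (F : Fan f) {m} (hm : m ∈ f.support) (v) : nu f (toR (m + v)) ≤ nu f (toR v) + 1 := by
  rw [F.nu_v, toR_add, map_add]
  linarith [F.ℓ_le (F.tau (m + v)) m hm, F.ℓ_le_nu (F.tau (m + v)) v]

theorem T_mul (F : Fan f) (i) (α : ℝ) {x} (hx : x ∈ Nle f α) : T f i * x ∈ Nle f (α + 1) := by
  rw [Nle_eq] at hx ⊢
  rw [T, t_eq, Finset.sum_mul]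
  apply Submodule.sum_mem
  intro m hm
  apply mul_restrict _ _ hx
  intro v hv
  have hv' : nu f (toR v) ≤ α := hv
  show nu f (toR (m + v)) ≤ α + 1
  linarith [F.nu_add_le hm v]

theorem T_prod (F : Fan f) (a : Fin n → ℕ) (α : ℝ) {x} (hx : x ∈ Nle f α) (s : Finset (Fin n)) :
    (∏ k ∈ s, T f k ^ a k) * x ∈ Nle f (α + ∑ k ∈ s, (a k : ℝ)) := by
  classical
  induction s using Finset.induction_on with
  | empty => simpa using hx
  | insert k s hk ih =>
    rw [Finset.prod_insert hk, Finset.sum_insert hk]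
    have : ∀ m : ℕ, T f k ^ m * ((∏ k ∈ s, T f k ^ a k) * x) ∈ Nle f (α + (m + ∑ k ∈ s, (a k : ℝ))) := by
      intro m
      induction m with
      | zero => simpa using ih
      | succ m ih2 =>
        rw [pow_succ', mul_assoc]
        have := F.T_mul k _ ih2
        convert this using 2
        push_cast; ring
    rw [mul_assoc]; exact this _

/-- adapted basis -/
noncomputable def gg (E : (Fin n →₀ ℕ) → MvPolynomial (Fin n) ℂ) (v : Fin n →₀ ℕ) :
    MvPolynomial (Fin n) ℂ := (∏ k, T f k ^ F.av v k) * E (F.wv v)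

theorem exists_E (hnd : Nondegenerate f) : ∃ E : (Fin n →₀ ℕ) → MvPolynomial (Fin n) ℂ,
    (∀ w, E w ∈ Nle f (nu f (toR w))) ∧ ∀ τ β,
      F.MM τ β ≤ Submodule.span ℂ (E '' {v | F.HB τ (toR v) ∧ F.ℓ τ (toR v) = β}) ⊔ F.FM τ β := by
  choose e he1 he2 using fun τ β => F.cone_gen τ hnd β
  refine ⟨fun w => e (F.tau w) (F.ℓ (F.tau w) (toR w)) w, ?_, ?_⟩
  · intro w
    rw [Nle_eq, F.nu_v]
    apply restrictSupport_mono _ _ (he1 (F.tau w) (F.ℓ (F.tau w) (toR w)) w)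
    rintro v ⟨hv1, hv2⟩
    show nu f (toR v) ≤ _
    rw [F.nu_eq hv1.cone, hv2]
  · intro τ β
    convert he2 τ β using 3
    apply Set.image_congr
    rintro v ⟨hv1, hv2⟩
    have : F.tau v = τ := F.tau_eq hv1.In
    rw [this, hv2]

section
variable (E : (Fin n →₀ ℕ) → MvPolynomial (Fin n) ℂ)

theorem gg_mem (hE : ∀ w, E w ∈ Nle f (nu f (toR w))) (v) : F.gg E v ∈ Nle f (nu f (toR v)) := by
  rw [F.nu_wv v]
  exact F.T_prod _ _ (hE _) _

theorem T_gg (i v) : ∃ v', F.av v' ≠ 0 ∧ nu f (toR v') = nu f (toR v) + 1 ∧ T f i * F.gg E v = F.gg E v' := by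
  classical
  have h := F.av_add (F.wv_HB v) (fun k => F.av v k + if k = i then 1 else 0)
  refine ⟨F.wv v + F.comb (F.tau v) (fun k => F.av v k + if k = i then 1 else 0), ?_, ?_, ?_⟩
  · rw [h.1]
    intro h2
    have := congrFun h2 i
    simp at this
  · rw [F.nu_wv, h.1, h.2, F.nu_wv v]
    push_cast
    rw [Finset.sum_add_distrib]
    simp [add_assoc]
  · rw [gg, gg, h.1, h.2]
    simp only [pow_add, Finset.prod_mul_distrib]
    have : ∏ k, T f k ^ (if k = i then 1 else 0) = T f i := by
      simp [pow_ite, Finset.prod_ite_eq']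
    rw [this]; ring

theorem gg_box {v} (h : F.HB (F.tau v) (toR v)) : F.gg E v = E v := by
  have h1 := (F.av_eq_zero v).2 h
  have h2 := F.wv_add v
  rw [h1] at h2
  simp [comb] at h2
  rw [gg, h1, h2]; simp

theorem gg_mem_L {v} (h : F.av v ≠ 0) : F.gg E v ∈ LIdeal f := by
  obtain ⟨k, hk⟩ := Function.ne_iff.1 h
  rw [gg]
  apply Ideal.mul_mem_right
  rw [← Finset.mul_prod_erase _ _ (Finset.mem_univ k)]
  apply Ideal.mul_mem_right
  apply Ideal.pow_mem_of_mem _ _ _ (Nat.pos_of_ne_zero hk)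
  exact Ideal.subset_span ⟨k, rfl⟩

/-- order for the induction -/
def lt (v' v : Fin n →₀ ℕ) : Prop := nu f (toR v') < nu f (toR v) ∨
  (nu f (toR v') = nu f (toR v) ∧ F.ℓ (F.tau v') F.ξ < F.ℓ (F.tau v) F.ξ)

theorem lt_wf : WellFounded F.lt := by
  have hfin : ∀ v, {v' | F.lt v' v}.Finite := by
    intro v
    apply (F.finite_sublevel (nu f (toR v))).subset
    rintro v' (h | h)
    · exact h.le
    · exact h.1.le
  apply Subrelation.wf (r := InvImage (· < ·) fun v => {v' | F.lt v' v}.ncard) _ (InvImage.wf _ wellFounded_lt)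
  intro v' v h
  apply Set.ncard_lt_ncard _ (hfin v)
  refine ⟨?_, ?_⟩
  · intro u hu
    have hu' : F.lt u v' := hu
    show F.lt u v
    unfold lt at *
    rcases hu' with h1 | ⟨h1, h2⟩ <;> rcases h with h3 | ⟨h3, h4⟩
    · left; linarith
    · left; linarith
    · left; linarith
    · right; constructor <;> linarith
  · intro hsub
    have h1 : F.lt v' v' := hsub h
    rcases h1 with h1 | h1
    · exact lt_irrefl _ h1
    · exact lt_irrefl _ h1.2

theorem mono_mem
    (hE2 : ∀ τ β, F.MM τ β ≤ Submodule.span ℂ (E '' {v | F.HB τ (toR v) ∧ F.ℓ τ (toR v) = β}) ⊔ F.FM τ β)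
    (v) : (monomial v 1 : MvPolynomial (Fin n) ℂ) ∈
      Submodule.span ℂ (F.gg E '' {v' | nu f (toR v') ≤ nu f (toR v)}) := by
  classical
  induction v using F.lt_wf.induction with
  | _ v ih =>
  set G : ℝ → Submodule ℂ (MvPolynomial (Fin n) ℂ) := fun β =>
    Submodule.span ℂ (F.gg E '' {v' | nu f (toR v') ≤ β}) with hG
  have hGm : ∀ β β', β ≤ β' → G β ≤ G β' := by
    intro β β' h
    apply Submodule.span_mono
    apply Set.image_mono
    intro v hv
    exact le_trans (show nu f (toR v) ≤ β from hv) h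
  have ih' : ∀ v', F.lt v' v → (monomial v' 1 : MvPolynomial (Fin n) ℂ) ∈ G (nu f (toR v')) := ih
  have hTG : ∀ i β x, x ∈ G β → T f i * x ∈ G (β + 1) := by
    intro i β x hx
    induction hx using Submodule.span_induction with
    | mem x hx =>
      obtain ⟨u, hu, rfl⟩ := hx
      obtain ⟨u', _, h2, h3⟩ := F.T_gg E i u
      rw [h3]
      apply Submodule.subset_span
      refine ⟨u', ?_, rfl⟩
      show nu f (toR u') ≤ β + 1
      rw [h2]
      have : nu f (toR u) ≤ β := hu
      linarith
    | zero => simp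
    | add x y _ _ h1 h2 => rw [mul_add]; exact add_mem h1 h2
    | smul c x _ h1 => rw [mul_smul_comm]; exact Submodule.smul_mem _ _ h1
  set τ := F.tau v with hτ
  have hv : F.In τ (toR v) F.ξ := F.tau_In v
  have hβ : nu f (toR v) = F.ℓ τ (toR v) := F.nu_v v
  set β := nu f (toR v) with hβ'
  show monomial v 1 ∈ G β
  have hmem : monomial v 1 ∈ F.MM τ β := (monomial_mem_restrictSupport ℂ).2 (Or.inl ⟨hv, hβ.symm⟩)
  refine (sup_le ?_ ?_ : _ ≤ G β) (hE2 τ β hmem)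
  · rw [Submodule.span_le]
    rintro _ ⟨w, ⟨hw1, hw2⟩, rfl⟩
    have htw : F.tau w = τ := F.tau_eq hw1.In
    have : E w = F.gg E w := (F.gg_box E (htw ▸ hw1)).symm
    rw [this]
    apply Submodule.subset_span
    refine ⟨w, ?_, rfl⟩
    show nu f (toR w) ≤ β
    rw [F.nu_eq hw1.In.cone, hw2]
  · intro z hz
    obtain ⟨x, hx, rfl⟩ := F.mem_FM.1 hz
    apply Submodule.sum_mem
    intro i _
    have hxi := hx i
    generalize x i = y at hxi
    rw [MM, restrictSupport_eq_span] at hxi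
    induction hxi using Submodule.span_induction with
    | zero => simp
    | add x y _ _ h1 h2 => rw [mul_add]; exact add_mem h1 h2
    | smul c x _ h1 => rw [mul_smul_comm]; exact Submodule.smul_mem _ _ h1
    | mem y hy =>
      obtain ⟨v2, ⟨hv2, hv3⟩, rfl⟩ := hy
      have hnu2 : nu f (toR v2) = β - 1 := by rw [F.nu_eq hv2.cone, hv3]
      have hdec : F.Ft τ i = T f i - ∑ m ∈ f.support.filter (fun m => ¬ F.ℓ τ (toR m) = 1),
          monomial m ((m i : ℂ) * f.coeff m) := by
        rw [T, t_eq, Ft, eq_sub_iff_add_eq]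
        exact Finset.sum_filter_add_sum_filter_not _ _ _
      show F.Ft τ i * monomial v2 1 ∈ G β
      rw [hdec, sub_mul]
      apply Submodule.sub_mem
      · have h1 := ih' v2 (Or.inl (by rw [hnu2]; linarith))
        have h2 := hTG i _ _ h1
        rw [hnu2, sub_add_cancel] at h2
        exact h2
      · rw [Finset.sum_mul]
        apply Submodule.sum_mem
        intro m hm
        rw [Finset.mem_filter] at hm
        rw [monomial_mul, mul_one]
        have h1 : (monomial (m + v2) ((m i : ℂ) * f.coeff m)) =
            ((m i : ℂ) * f.coeff m) • (monomial (m + v2) 1 : MvPolynomial (Fin n) ℂ) := by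
          rw [smul_monomial, smul_eq_mul, mul_one]
        rw [h1]
        apply Submodule.smul_mem
        have hle : nu f (toR (m + v2)) ≤ β := by
          have := F.nu_add_le hm.1 v2
          linarith
        apply hGm _ _ hle
        apply ih'
        rcases hle.lt_or_eq with h | h
        · exact Or.inl h
        · right
          refine ⟨h, ?_⟩
          set τ' := F.tau (m + v2) with hτ'
          have e1 := F.ℓ_le_nu τ' v2
          have e2 := F.ℓ_le τ' m hm.1
          have e3 : F.ℓ τ' (toR m) + F.ℓ τ' (toR v2) = β := by
            rw [← map_add, ← toR_add, hτ', ← F.nu_v, h]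
          have e4 : F.ℓ τ' (toR v2) = F.ℓ τ (toR v2) := by
            rw [hv3]; linarith
          have e5 : F.ℓ τ' (toR m) = 1 := by linarith
          have e6 := hv2.ℓ_le e4
          apply lt_of_le_of_ne e6
          intro e7
          have : τ' = τ := F.ξ_inj _ _ (by
            rw [ℓ_apply, ℓ_apply] at e7
            exact e7)
          rw [this] at e5
          exact hm.2 e5

end
end Fan
end TN

open MvPolynomial
set_option linter.all false
namespace TN
open ToricNewton Filter Topology

theorem quot_finrank {ι V : Type*} [AddCommGroup V] [Module ℂ V] {g : ι → V} (hg : LinearIndependent ℂ g)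
    (S C : Set ι) (hSC : Disjoint S C) (hC : C.Finite) (P Q : Submodule ℂ V)
    (hP : P = Submodule.span ℂ (g '' S)) (hQ : Q = Submodule.span ℂ (g '' (S ∪ C))) :
    Module.finrank ℂ (Q.map P.mkQ) = C.ncard := by
  have h1 : Q.map P.mkQ = Submodule.span ℂ (Set.range fun x : C => P.mkQ (g x)) := by
    rw [hQ, Set.image_union, Submodule.span_union, ← hP, Submodule.map_sup]
    have : P.map P.mkQ = ⊥ := by
      exact Submodule.mkQ_map_self P
    rw [this, bot_sup_eq, Submodule.map_span]
    congr 1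
    ext y; simp
  have h2 : LinearIndependent ℂ (fun x : C => P.mkQ (g x)) := by
    have h3 : LinearIndependent ℂ (fun x : C => g x) := hg.comp _ Subtype.val_injective
    apply h3.map
    rw [Submodule.ker_mkQ, hP]
    have h4 := hg.disjoint_span_image hSC.symm
    have h5 : (Set.range fun x : C => g x) = g '' C := by
      ext y; simp
    rw [h5]; exact h4
  have := hC.fintype
  rw [h1, finrank_span_eq_card h2, Set.ncard_eq_toFinset_card', Set.toFinset_card]

namespace Fan
variable {n : ℕ} {f : MvPolynomial (Fin n) ℂ} (F : Fan f)
section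
variable (E : (Fin n →₀ ℕ) → MvPolynomial (Fin n) ℂ)
    (hE : ∀ w, E w ∈ Nle f (nu f (toR w)))
    (hE2 : ∀ τ β, F.MM τ β ≤ Submodule.span ℂ (E '' {v | F.HB τ (toR v) ∧ F.ℓ τ (toR v) = β}) ⊔ F.FM τ β)

theorem Nle_span (hE : ∀ w, E w ∈ Nle f (nu f (toR w)))
    (hE2 : ∀ τ β, F.MM τ β ≤ Submodule.span ℂ (E '' {v | F.HB τ (toR v) ∧ F.ℓ τ (toR v) = β}) ⊔ F.FM τ β)
    (α : ℝ) : Nle f α = Submodule.span ℂ (F.gg E '' {v | nu f (toR v) ≤ α}) := by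
  apply le_antisymm
  · rw [Nle_eq, restrictSupport_eq_span, Submodule.span_le]
    rintro _ ⟨v, hv, rfl⟩
    have hv : nu f (toR v) ≤ α := hv
    have hs : {v' | nu f (toR v') ≤ nu f (toR v)} ⊆ {v' : Fin n →₀ ℕ | nu f (toR v') ≤ α} := by
      intro v' h
      have h : nu f (toR v') ≤ nu f (toR v) := h
      exact le_trans h hv
    exact Submodule.span_mono (Set.image_mono hs) (F.mono_mem E hE2 v)
  · rw [Submodule.span_le]
    rintro _ ⟨v, hv, rfl⟩ m hm
    exact (F.gg_mem E hE v m hm).trans hv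

theorem Nlt_span (hE : ∀ w, E w ∈ Nle f (nu f (toR w)))
    (hE2 : ∀ τ β, F.MM τ β ≤ Submodule.span ℂ (E '' {v | F.HB τ (toR v) ∧ F.ℓ τ (toR v) = β}) ⊔ F.FM τ β)
    (α : ℝ) : Nlt f α = Submodule.span ℂ (F.gg E '' {v | nu f (toR v) < α}) := by
  apply le_antisymm
  · rw [Nlt_eq, restrictSupport_eq_span, Submodule.span_le]
    rintro _ ⟨v, hv, rfl⟩
    have hv : nu f (toR v) < α := hv
    have hs : {v' | nu f (toR v') ≤ nu f (toR v)} ⊆ {v' : Fin n →₀ ℕ | nu f (toR v') < α} := by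
      intro v' h
      have h : nu f (toR v') ≤ nu f (toR v) := h
      exact lt_of_le_of_lt h hv
    exact Submodule.span_mono (Set.image_mono hs) (F.mono_mem E hE2 v)
  · rw [Submodule.span_le]
    rintro _ ⟨v, hv, rfl⟩ m hm
    exact (F.gg_mem E hE v m hm).trans_lt hv

theorem gg_li (hE : ∀ w, E w ∈ Nle f (nu f (toR w)))
    (hE2 : ∀ τ β, F.MM τ β ≤ Submodule.span ℂ (E '' {v | F.HB τ (toR v) ∧ F.ℓ τ (toR v) = β}) ⊔ F.FM τ β) :
    LinearIndependent ℂ (F.gg E) := by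
  have key : ∀ α : ℝ, LinearIndependent ℂ (fun v : {v | nu f (toR v) ≤ α} => F.gg E v) := by
    intro α
    have := (F.finite_sublevel α).fintype
    rw [linearIndependent_iff_card_eq_finrank_span, Set.finrank]
    have h1 : Set.range (fun v : {v | nu f (toR v) ≤ α} => F.gg E v) = F.gg E '' {v | nu f (toR v) ≤ α} := by
      ext y; simp
    rw [h1, ← F.Nle_span E hE hE2, Nle_eq, restrict_finrank, Set.ncard_eq_toFinset_card', Set.toFinset_card]
  rw [linearIndependent_iff_finset_linearIndependent]
  intro s
  obtain ⟨α, hα⟩ := (s.finite_toSet.image fun v => nu f (toR v)).bddAbove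
  have h : ∀ v : s, (v : Fin n →₀ ℕ) ∈ {v | nu f (toR v) ≤ α} := fun v => hα ⟨v, v.2, rfl⟩
  exact (key α).comp (fun v : s => ⟨v, h v⟩) fun a b hab => by
    apply Subtype.ext
    simpa using hab

theorem L_span
    (hE2 : ∀ τ β, F.MM τ β ≤ Submodule.span ℂ (E '' {v | F.HB τ (toR v) ∧ F.ℓ τ (toR v) = β}) ⊔ F.FM τ β) :
    (LIdeal f).restrictScalars ℂ = Submodule.span ℂ (F.gg E '' {v | F.av v ≠ 0}) := by
  apply le_antisymm
  · intro x hx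
    have hx : x ∈ LIdeal f := hx
    obtain ⟨p, rfl⟩ := Ideal.mem_span_range_iff_exists_fun.1 hx
    apply Submodule.sum_mem
    intro i _
    have h1 : p i ∈ Submodule.span ℂ (Set.range (F.gg E)) := by
      rw [(p i).as_sum]
      apply Submodule.sum_mem
      intro v _
      have : monomial v ((p i).coeff v) = (p i).coeff v • (monomial v (1:ℂ)) := by
        rw [smul_monomial]; simp
      rw [this]
      exact Submodule.smul_mem _ _ (Submodule.span_mono (Set.image_subset_range _ _) (F.mono_mem E hE2 v))
    generalize p i = q at h1
    induction h1 using Submodule.span_induction with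
    | mem x h =>
      obtain ⟨v, rfl⟩ := h
      obtain ⟨v', h1, _, h3⟩ := F.T_gg E i v
      rw [mul_comm]
      rw [T] at h3
      rw [h3]
      exact Submodule.subset_span ⟨v', h1, rfl⟩
    | zero => rw [zero_mul]; exact Submodule.zero_mem _
    | add x y _ _ hx hy => rw [add_mul]; exact Submodule.add_mem _ hx hy
    | smul a x _ hx => rw [smul_mul_assoc]; exact Submodule.smul_mem _ _ hx
  · rw [Submodule.span_le]
    rintro _ ⟨v, hv, rfl⟩
    exact F.gg_mem_L E hv

end

theorem grDim_eq (hnd : Nondegenerate f) (α : ℝ) :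
    grDim f α = {u : Fin n →₀ ℕ | nu f (toR u) = α ∧ F.HB (F.tau u) (toR u)}.ncard := by
  obtain ⟨E, hE, hE2⟩ := F.exists_E hnd
  unfold grDim grN
  refine quot_finrank (F.gg_li E hE hE2) ({v | nu f (toR v) < α} ∪ {v | F.av v ≠ 0}) _ ?_
    ((F.finite_sublevel α).subset fun u hu => hu.1.le) _ _ ?_ ?_
  · rw [Set.disjoint_left]
    rintro v (h | h) ⟨h1, h2⟩
    · exact (ne_of_lt h) h1
    · exact h ((F.av_eq_zero v).2 h2)
  · rw [Set.image_union, Submodule.span_union, F.Nlt_span E hE hE2, F.L_span E hE2]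
  · rw [F.Nle_span E hE hE2, F.L_span E hE2, ← Submodule.span_union, ← Set.image_union]
    congr 2
    ext v
    simp only [Set.mem_union, Set.mem_setOf_eq, ← F.av_eq_zero, le_iff_lt_or_eq]
    tauto

end Fan
end TN

open ToricNewton in
/-- `dim gr^𝒩_α(ℬ/ℒ) = Σ_{v ∈ Box(P) ∩ ℕⁿ} (coefficient of
`z^{α-ν(v)}` in `E_v^*(z))`, i.e. the Hilbert–Poincaré series of `gr^𝒩(ℬ/ℒ)` is
`Σ_{v ∈ Box(P) ∩ ℕⁿ} E_v^*(z)·z^{ν(v)}`. -/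
theorem toric_spectrum_via_relative_hodge_deligne {n : ℕ} (hn : 1 ≤ n)
    (f : MvPolynomial (Fin n) ℂ) (hconv : Convenient f) (hnd : Nondegenerate f)
    (hsimp : ∀ Δ : Set (Fin n → ℝ), NBFace f Δ → IsSimplex Δ) :
    ∀ α : ℚ, (grDim f (α : ℝ) : ℤ) =
      ∑ᶠ (v : Fin n → ℕ) (_ : natToR v ∈ BoxP f), ∑ᶠ j : ℕ,
        if (α : ℝ) = nu f (natToR v) + (j : ℝ) then (Evstar f v).coeff j else 0 := by
  intro α
  obtain ⟨F⟩ := TN.exists_fan hn f hconv hsimp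
  rw [F.grDim_eq hnd, ← F.rhs_eq hn hsimp]
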